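/- arXiv:2512.23534 — 2 statements merged into one kernel-verified Lean document; each statement's English description precedes it below -/
import Mathlib

section
/- Assume the Riemann Hypothesis. Then for every real number x ≥ 2, there exists a Goldbach number in the interval (x, x + 123·(log x)²], i.e., there exists an integer n with x < n ≤ x + 123·(log x)² such that n = p + q for some odd primes p and q. -/
/-!
Under the Riemann Hypothesis the quotient `ξ(z - b) / ξ(z + b)`, `b > 0`, is holomorphic for
`Re z ≥ 1/2`, of modulus one on the critical line and at most one far to the right; by
Phragmén–Lindelöf its modulus is at most one throughout, so `|ξ|` increases along horizontal lines
and `Re (ξ'/ξ) ≥ 0` to the right of the critical line. Integrating `ξ'/ξ` on the line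
`Re z = 1/2 + a` against the Laplace transform of a tent function of width `δ`, which is nonnegative
on the imaginary axis, therefore gives a positive semidefinite kernel, and moving the contour to the
right evaluates it: a pole term, an archimedean term and minus a sum over the prime powers near
`e^u`.

If there are about `1/(3δ)` points `u_i` in `[log (x/4), log x]`, spaced by `δ` and with no odd
prime `p` such that `|log p - u_i| < δ`, then the pole term is not compensated by primes, and
Cauchy–Schwarz for the kernel at the points `0, u_1, u_2, …` forces `δx` to be at most a multiple
of `(log x)²`.

If there is no Goldbach number in `(x, x e^{2δ})`, then for any two points reflected about half of
`S = x e^δ` one of the two is free of odd primes nearby; taking the free one in each pair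
produces such points `u_i`, a contradiction when `δ` is about `61 (log x)² / x`. This works for
`x ≥ 2²⁴`; smaller `x` are settled by explicit primes.
-/

namespace Goldbach

open Complex Filter Topology MeasureTheory
open scoped ComplexConjugate
open ArithmeticFunction (vonMangoldt)

/-! ### The digamma series -/

theorem abs_log_one_add_inv_sub_inv_le {k : ℝ} (hk : 0 < k) :
    |Real.log (1 + 1 / k) - 1 / k| ≤ 1 / k ^ 2 := by
  have upper : Real.log (1 + 1 / k) ≤ 1 / k := by
    linarith [Real.log_le_sub_one_of_pos (x := 1 + 1 / k) (by positivity)]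
  have lower : 1 - (1 + 1 / k)⁻¹ ≤ Real.log (1 + 1 / k) :=
    Real.one_sub_inv_le_log_of_pos (by positivity)
  have gap : 1 / k - (1 - (1 + 1 / k)⁻¹) ≤ 1 / k ^ 2 := by
    have : 1 / k - (1 - (1 + 1 / k)⁻¹) = 1 / (k * (k + 1)) := by
      field_simp
      ring
    rw [this]
    gcongr
    nlinarith
  rw [abs_le]
  constructor <;> linarith

theorem rpow_three_div_two_eq_mul_sqrt {k : ℝ} (hk : 0 ≤ k) : k ^ (3 / 2 : ℝ) = k * √k := by
  rw [Real.sqrt_eq_rpow, ← Real.rpow_one_add' hk (by norm_num)]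
  norm_num

/-- The terms of the series `log Γ(w + 1) = ∑' n, logGammaTerm n w`. -/
noncomputable def logGammaTerm (n : ℕ) (w : ℂ) : ℂ :=
  w * (Real.log (1 + 1 / (n + 1 : ℝ)) : ℝ) - log (1 + w / (n + 1))

/-- The terms of the digamma series `ψ(w + 1) = ∑' n, digammaTerm n w`. -/
noncomputable def digammaTerm (n : ℕ) (w : ℂ) : ℂ :=
  (Real.log (1 + 1 / (n + 1 : ℝ)) : ℝ) - 1 / (n + 1 + w)

theorem le_norm_natCast_add_one_add (n : ℕ) {w : ℂ} (hw : 0 ≤ w.re) :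
    (n + 1 : ℝ) ≤ ‖(n + 1 + w : ℂ)‖ := by
  have := re_le_norm (n + 1 + w : ℂ)
  simp only [add_re, natCast_re, one_re] at this
  linarith

theorem norm_le_norm_ofReal_add {r : ℝ} {w : ℂ} (hr : 0 ≤ r) (hw : 0 ≤ w.re) :
    ‖w‖ ≤ ‖(r : ℂ) + w‖ := by
  rw [← sq_le_sq₀ (norm_nonneg _) (norm_nonneg _), ← normSq_eq_norm_sq, ← normSq_eq_norm_sq,
    normSq_apply, normSq_apply]
  simp only [add_re, ofReal_re, add_im, ofReal_im, zero_add]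
  nlinarith

theorem natCast_add_one_add_ne_zero (n : ℕ) {w : ℂ} (hw : 0 ≤ w.re) : (n + 1 + w : ℂ) ≠ 0 :=
  norm_pos_iff.mp ((by positivity : (0 : ℝ) < n + 1).trans_le (le_norm_natCast_add_one_add n hw))

theorem norm_digammaTerm_le (n : ℕ) {w : ℂ} (hw : 0 ≤ w.re) :
    ‖digammaTerm n w‖ ≤ (1 + √‖w‖) * (1 / (n + 1 : ℝ) ^ (3 / 2 : ℝ)) := by
  set k : ℝ := n + 1 with hk
  have hk1 : 1 ≤ k := by simp [hk]
  have hk0 : 0 < k := by linarith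
  have split : digammaTerm n w =
      ((Real.log (1 + 1 / k) - 1 / k : ℝ) : ℂ) + w / (k * (k + w)) := by
    have hne : (k + w : ℂ) ≠ 0 := by simpa [hk] using natCast_add_one_add_ne_zero n hw
    have hkne : (k : ℂ) ≠ 0 := ofReal_ne_zero.mpr hk0.ne'
    rw [digammaTerm, show (n + 1 + w : ℂ) = k + w by simp [hk], ← hk]
    push_cast
    field_simp
    ring
  have geometric_mean : √k * √‖w‖ ≤ ‖(k + w : ℂ)‖ := by
    rw [← Real.sqrt_mul hk0.le]
    refine Real.sqrt_le_iff.mpr ⟨norm_nonneg _, ?_⟩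
    rw [sq]
    gcongr
    · simpa [hk] using le_norm_natCast_add_one_add n hw
    · exact norm_le_norm_ofReal_add hk0.le hw
  rw [split, add_mul, one_mul, rpow_three_div_two_eq_mul_sqrt hk0.le]
  refine (norm_add_le _ _).trans (add_le_add ?_ ?_)
  · rw [norm_real]
    refine (abs_log_one_add_inv_sub_inv_le hk0).trans ?_
    rw [sq]
    gcongr
    exact Real.sqrt_le_iff.mpr ⟨hk0.le, by nlinarith⟩
  · rcases eq_or_ne w 0 with rfl | hw0
    · simp
    have hnorm : 0 < ‖w‖ := norm_pos_iff.mpr hw0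
    calc ‖w / (k * (k + w))‖ = ‖w‖ / (k * ‖(k + w : ℂ)‖) := by
          rw [norm_div, norm_mul, norm_real, Real.norm_of_nonneg hk0.le]
      _ ≤ ‖w‖ / (k * (√k * √‖w‖)) := by gcongr
      _ = √‖w‖ * (1 / (k * √k)) := by
          field_simp
          rw [Real.sq_sqrt hnorm.le]

theorem summable_one_div_succ_rpow_three_halves :
    Summable fun n : ℕ => 1 / (n + 1 : ℝ) ^ (3 / 2 : ℝ) := by
  simpa using (summable_nat_add_iff 1).mpr
    (Real.summable_one_div_nat_rpow (p := 3 / 2).mpr (by norm_num))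

theorem summable_digammaTerm {w : ℂ} (hw : 0 ≤ w.re) : Summable fun n => digammaTerm n w :=
  .of_norm_bounded (summable_one_div_succ_rpow_three_halves.mul_left _)
    fun n => norm_digammaTerm_le n hw

theorem one_add_div_mem_slitPlane (n : ℕ) {w : ℂ} (hw : 0 ≤ w.re) :
    1 + w / (n + 1) ∈ slitPlane := by
  left
  have : (w / ((n : ℂ) + 1)).re = w.re / (n + 1) := by
    exact_mod_cast div_ofReal_re w (n + 1)
  rw [add_re, one_re, this]
  positivity

theorem hasDerivAt_logGammaTerm (n : ℕ) {w : ℂ} (hw : 0 ≤ w.re) :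
    HasDerivAt (logGammaTerm n) (digammaTerm n w) w := by
  have affine : HasDerivAt (fun w : ℂ => 1 + w / ((n : ℂ) + 1)) (1 / ((n : ℂ) + 1)) w := by
    simpa using ((hasDerivAt_id w).div_const ((n : ℂ) + 1)).const_add 1
  have hslit := one_add_div_mem_slitPlane n hw
  refine (((hasDerivAt_id w).mul_const _).sub (affine.clog hslit)).congr_deriv ?_
  have hn : ((n : ℂ) + 1) ≠ 0 := n.cast_add_one_ne_zero
  have := slitPlane_ne_zero hslit
  have hne := natCast_add_one_add_ne_zero n hw
  rw [digammaTerm, one_mul]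
  field_simp

theorem logGammaTerm_one (n : ℕ) : logGammaTerm n 1 = 0 := by
  rw [logGammaTerm, one_mul, ofReal_log (by positivity)]
  push_cast
  exact sub_self _

theorem summable_logGammaTerm_and_hasDerivAt_tsum {w : ℂ} (hw : 0 < w.re) :
    (Summable fun n => logGammaTerm n w) ∧
      HasDerivAt (fun z => ∑' n, logGammaTerm n z) (∑' n, digammaTerm n w) w := by
  set U : Set ℂ := {z | 0 < z.re} ∩ Metric.ball 0 (‖w‖ + 2)
  have hU : IsOpen U := (isOpen_lt continuous_const continuous_re).inter Metric.isOpen_ball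
  have hU' : IsPreconnected U :=
    ((convex_halfSpace_re_gt 0).inter (convex_ball _ _)).isPreconnected
  have hderiv : ∀ n, ∀ z ∈ U, HasDerivAt (logGammaTerm n) (digammaTerm n z) z :=
    fun n z hz => hasDerivAt_logGammaTerm n (le_of_lt hz.1)
  have hbound : ∀ n, ∀ z ∈ U, ‖digammaTerm n z‖ ≤
      (1 + √(‖w‖ + 2)) * (1 / (n + 1 : ℝ) ^ (3 / 2 : ℝ)) := fun n z hz => by
    refine (norm_digammaTerm_le n (le_of_lt hz.1)).trans ?_
    gcongr
    exact (mem_ball_zero_iff.mp hz.2).le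
  have one_mem : (1 : ℂ) ∈ U := by
    refine ⟨by simp, mem_ball_zero_iff.mpr ?_⟩
    rw [norm_one]
    linarith [norm_nonneg w]
  have w_mem : w ∈ U := ⟨hw, mem_ball_zero_iff.mpr (by simp)⟩
  have summable_one : Summable fun n => logGammaTerm n 1 := by
    simpa only [logGammaTerm_one] using summable_zero
  have hu := summable_one_div_succ_rpow_three_halves.mul_left (1 + √(‖w‖ + 2))
  exact ⟨summable_of_summable_hasDerivAt_of_isPreconnected hu hU hU' hderiv hbound one_mem
      summable_one w_mem,
    hasDerivAt_tsum_of_isPreconnected hu hU hU' hderiv hbound one_mem summable_one w_mem⟩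

theorem exp_logGammaTerm (n : ℕ) {w : ℂ} (hw : 0 ≤ w.re) :
    exp (logGammaTerm n w) =
      ((n + 1 + 1 : ℕ) : ℂ) ^ w / ((n + 1 : ℕ) : ℂ) ^ w * ((n + 1) / (n + 1 + w)) := by
  have hn : ((n : ℂ) + 1) ≠ 0 := n.cast_add_one_ne_zero
  have hlog : Real.log (1 + 1 / (n + 1 : ℝ)) =
      Real.log ((n + 1 + 1 : ℕ) : ℝ) - Real.log ((n + 1 : ℕ) : ℝ) := by
    rw [← Real.log_div (by positivity) (by positivity)]
    congr 1
    push_cast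
    field_simp
  rw [logGammaTerm, exp_sub, exp_log (slitPlane_ne_zero (one_add_div_mem_slitPlane n hw)), hlog,
    cpow_def_of_ne_zero (Nat.cast_ne_zero.mpr (by lia)),
    cpow_def_of_ne_zero (Nat.cast_ne_zero.mpr (by lia)), ← exp_sub, ← natCast_log,
    ← natCast_log, div_eq_mul_inv]
  congr 2
  · push_cast
    ring
  · field_simp

theorem exp_sum_logGammaTerm (N : ℕ) {w : ℂ} (hw : 0 < w.re) :
    exp (∑ n ∈ Finset.range N, logGammaTerm n w) =
      w * GammaSeq w (N + 1) * (1 + w / (N + 1)) := by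
  have hw0 : w ≠ 0 := by
    rintro rfl
    simp at hw
  induction N with
  | zero =>
    have : w + 1 ≠ 0 := by simpa [add_comm] using natCast_add_one_add_ne_zero 0 hw.le
    simp only [GammaSeq, Finset.range_zero, Finset.sum_empty, exp_zero, zero_add, Nat.cast_one,
      one_cpow, Nat.factorial_one, mul_one, Nat.reduceAdd, Finset.prod_range_succ,
      Finset.range_one, Finset.prod_singleton, CharP.cast_eq_zero, add_zero, one_div, mul_inv_rev,
      div_one]
    field_simp
    ring
  | succ N ih =>
    have hprod : ∏ j ∈ Finset.range (N + 1 + 1), (w + j) ≠ 0 := by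
      refine Finset.prod_ne_zero_iff.mpr fun j _ hj => ?_
      have := congrArg re hj
      simp only [add_re, natCast_re, zero_re] at this
      linarith [(j.cast_nonneg : (0 : ℝ) ≤ j)]
    have hpow : ((N + 1 : ℕ) : ℂ) ^ w ≠ 0 := by
      rw [cpow_ne_zero_iff]
      exact .inl (Nat.cast_ne_zero.mpr N.succ_ne_zero)
    have hN := natCast_add_one_add_ne_zero N hw.le
    have hN' := natCast_add_one_add_ne_zero (N + 1) hw.le
    have hNw : (w + (N + 1 + 1 : ℕ) : ℂ) = (N + 1 : ℕ) + 1 + w := by push_cast; ring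
    have hN1 : (N + 1 : ℂ) ≠ 0 := N.cast_add_one_ne_zero
    have hN2 : ((N + 1 : ℕ) + 1 : ℂ) ≠ 0 := (N + 1).cast_add_one_ne_zero
    rw [Finset.sum_range_succ, exp_add, ih, exp_logGammaTerm N hw.le, GammaSeq, GammaSeq,
      Finset.prod_range_succ _ (N + 1 + 1), Nat.factorial_succ (N + 1), hNw]
    push_cast at *
    field_simp

theorem exp_tsum_logGammaTerm {w : ℂ} (hw : 0 < w.re) :
    exp (∑' n, logGammaTerm n w) = Gamma (w + 1) := by
  have hw0 : w ≠ 0 := by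
    rintro rfl
    simp at hw
  have hlim : Tendsto (fun N : ℕ => w * GammaSeq w (N + 1) * (1 + w / (N + 1))) atTop
      (𝓝 (w * Gamma w * (1 + 0))) := by
    refine (((GammaSeq_tendsto_Gamma w).comp (tendsto_add_atTop_nat 1)).const_mul w).mul ?_
    have := tendsto_const_div_atTop_nhds_zero_nat w
    exact_mod_cast (this.comp (tendsto_add_atTop_nat 1)).const_add 1
  rw [add_zero, mul_one, ← Gamma_add_one w hw0] at hlim
  have hsum := (summable_logGammaTerm_and_hasDerivAt_tsum hw).1.hasSum.tendsto_sum_nat.cexp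
  simp only [exp_sum_logGammaTerm _ hw] at hsum
  exact tendsto_nhds_unique hsum hlim

theorem digamma_add_one {w : ℂ} (hw : 0 < w.re) :
    digamma (w + 1) = ∑' n, digammaTerm n w := by
  have hderiv := (summable_logGammaTerm_and_hasDerivAt_tsum hw).2.cexp
  have heq : (fun z => exp (∑' n, logGammaTerm n z)) =ᶠ[𝓝 w] fun z => Gamma (z + 1) := by
    filter_upwards [(isOpen_lt continuous_const continuous_re).mem_nhds hw] with z hz
    exact exp_tsum_logGammaTerm hz
  have hGamma := (heq.hasDerivAt_iff.mp hderiv).deriv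
  rw [deriv_comp_add_const] at hGamma
  rw [digamma_def, logDeriv_apply, hGamma, exp_tsum_logGammaTerm hw, mul_div_cancel_left₀]
  refine Gamma_ne_zero_of_re_pos ?_
  rw [add_re, one_re]
  linarith

theorem exists_norm_digamma_add_one_le :
    ∃ C > 0, ∀ w : ℂ, 0 < w.re → ‖digamma (w + 1)‖ ≤ C * (1 + √‖w‖) := by
  have hs := summable_one_div_succ_rpow_three_halves
  refine ⟨∑' n : ℕ, 1 / (n + 1 : ℝ) ^ (3 / 2 : ℝ),
    hs.tsum_pos (fun n => by positivity) 0 (by positivity), fun w hw => ?_⟩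
  rw [digamma_add_one hw, mul_comm, ← tsum_mul_left]
  exact tsum_of_norm_bounded (hs.mul_left _).hasSum fun n => norm_digammaTerm_le n hw.le

theorem re_one_div_natCast_add_one_add_le (n : ℕ) {w : ℂ} {r : ℝ} (hr : 0 ≤ r) (hw : r ≤ w.re) :
    (1 / (n + 1 + w : ℂ)).re ≤ 1 / (n + 1 + r) := by
  have hle : n + 1 + r ≤ ‖(n + 1 + w : ℂ)‖ := by
    have := re_le_norm (n + 1 + w : ℂ)
    simp only [add_re, natCast_re, one_re] at this
    linarith
  refine (re_le_norm _).trans ?_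
  rw [norm_div, norm_one]
  gcongr

theorem le_re_digammaTerm (n : ℕ) {w : ℂ} {r : ℝ} (hr : 0 ≤ r) (hw : r ≤ w.re) :
    Real.log (1 + 1 / (n + 1 : ℝ)) - 1 / (n + 1 + r) ≤ (digammaTerm n w).re := by
  rw [digammaTerm, sub_re, ofReal_re]
  linarith [re_one_div_natCast_add_one_add_le n hr hw]

theorem re_digammaTerm_nonneg (n : ℕ) {w : ℂ} (hw : 1 ≤ w.re) : 0 ≤ (digammaTerm n w).re := by
  refine le_trans ?_ (le_re_digammaTerm n zero_le_one hw)
  have := Real.one_sub_inv_le_log_of_pos (x := 1 + 1 / (n + 1 : ℝ)) (by positivity)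
  have heq : 1 - (1 + 1 / (n + 1 : ℝ))⁻¹ = 1 / (n + 1 + 1) := by
    field_simp
    ring
  linarith

theorem sum_log_one_add_inv (N : ℕ) :
    ∑ n ∈ Finset.range N, Real.log (1 + 1 / (n + 1 : ℝ)) = Real.log (N + 1) := by
  induction N with
  | zero => simp
  | succ N ih =>
    rw [Finset.sum_range_succ, ih, ← Real.log_mul (by positivity) (by positivity)]
    congr 1
    push_cast
    field_simp

theorem log_sub_one_le_re_digamma (N : ℕ) {w : ℂ} (hw : 1 ≤ w.re) (hN : N ≤ w.re) :
    Real.log (N + 1) - 1 ≤ (digamma (w + 1)).re := by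
  have hw0 : 0 < w.re := by linarith
  have hsum := summable_digammaTerm hw0.le
  have partial_le : ∑ n ∈ Finset.range N, (digammaTerm n w).re ≤ ∑' n, (digammaTerm n w).re :=
    (reCLM.summable hsum).sum_le_tsum _ fun n _ => re_digammaTerm_nonneg n hw
  have inv_le : ∑ n ∈ Finset.range N, 1 / (n + 1 + N : ℝ) ≤ 1 := by
    calc ∑ n ∈ Finset.range N, 1 / (n + 1 + N : ℝ) ≤ N • (1 / N : ℝ) := by
          refine (Finset.sum_le_card_nsmul _ _ (1 / N : ℝ) fun n hn => ?_).trans_eq (by simp)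
          have : (0 : ℝ) < N := by exact_mod_cast (Finset.mem_range.mp hn).pos
          gcongr
          linarith [(n.cast_nonneg : (0 : ℝ) ≤ n)]
      _ ≤ 1 := by simpa using mul_inv_le_one
  rw [digamma_add_one hw0, re_tsum hsum]
  calc Real.log (N + 1) - 1
      ≤ ∑ n ∈ Finset.range N, (Real.log (1 + 1 / (n + 1 : ℝ)) - 1 / (n + 1 + N : ℝ)) := by
        rw [Finset.sum_sub_distrib, sum_log_one_add_inv]
        linarith
    _ ≤ ∑ n ∈ Finset.range N, (digammaTerm n w).re :=
        Finset.sum_le_sum fun n _ => le_re_digammaTerm n N.cast_nonneg hN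
    _ ≤ _ := partial_le

/-! ### The xi function -/

/-- The entire function `2ξ(z) = z(z - 1)Λ(z)`, where `ξ` is Riemann's xi function and `Λ` the
completed zeta function. Writing it through the entire part `Λ₀` of `Λ` gives it its correct
values at the poles `0` and `1` of `Λ`. -/
noncomputable def riemannXi (z : ℂ) : ℂ := z * (z - 1) * completedRiemannZeta₀ z + 1

theorem differentiable_riemannXi : Differentiable ℂ riemannXi := by
  have := differentiable_completedZeta₀
  unfold riemannXi
  fun_prop

theorem riemannXi_one_sub (z : ℂ) : riemannXi (1 - z) = riemannXi z := by
  rw [riemannXi, riemannXi, completedRiemannZeta₀_one_sub]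
  ring

theorem riemannXi_one : riemannXi 1 = 1 := by simp [riemannXi]

theorem ne_zero_of_re_pos {z : ℂ} (hz : 0 < z.re) : z ≠ 0 := by
  rintro rfl
  exact lt_irrefl _ hz

theorem ne_one_of_one_lt_re {z : ℂ} (hz : 1 < z.re) : z ≠ 1 := by
  rintro rfl
  exact lt_irrefl _ hz

theorem riemannXi_eq_mul_riemannZeta {z : ℂ} (hz : 0 < z.re) (hz1 : z ≠ 1) :
    riemannXi z = z * (z - 1) * (Gammaℝ z * riemannZeta z) := by
  have hz0 := ne_zero_of_re_pos hz
  have hG := Gammaℝ_ne_zero_of_re_pos hz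
  have : 1 - z ≠ 0 := sub_ne_zero.mpr hz1.symm
  rw [riemannZeta_def_of_ne_zero hz0, mul_div_cancel₀ _ hG, completedRiemannZeta_eq, riemannXi]
  field_simp
  ring

theorem Gammaℝ_conj (z : ℂ) : Gammaℝ (conj z) = conj (Gammaℝ z) := by
  have hpow := cpow_conj (x := (Real.pi : ℂ)) (n := -z / 2) (by
    rw [arg_ofReal_of_nonneg Real.pi_pos.le]
    exact Real.pi_pos.ne)
  rw [conj_ofReal] at hpow
  rw [Gammaℝ_def, Gammaℝ_def, map_mul, ← Gamma_conj, ← hpow]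
  simp [map_ofNat]

theorem riemannXi_conj (z : ℂ) : riemannXi (conj z) = conj (riemannXi z) := by
  have right_half (z : ℂ) (hz : 0 < z.re) : riemannXi (conj z) = conj (riemannXi z) := by
    by_cases hz1 : z = 1
    · rw [hz1, map_one, riemannXi_one, map_one]
    · have hz1' : conj z ≠ 1 := fun h => hz1 (by rw [← conj_conj z, h, map_one])
      rw [riemannXi_eq_mul_riemannZeta hz hz1,
        riemannXi_eq_mul_riemannZeta (by simpa using hz) hz1', riemannZeta_conj, Gammaℝ_conj]
      simp
  rcases lt_or_ge 0 z.re with h | h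
  · exact right_half z h
  · have := right_half (1 - z) (by rw [sub_re, one_re]; linarith)
    rwa [map_sub, map_one, riemannXi_one_sub, riemannXi_one_sub] at this

theorem riemannXi_ne_zero (hRH : RiemannHypothesis) {z : ℂ} (hz : 1 / 2 < z.re) :
    riemannXi z ≠ 0 := by
  by_cases hz1 : z = 1
  · rw [hz1, riemannXi_one]
    exact one_ne_zero
  have hz0 : 0 < z.re := by linarith
  rw [riemannXi_eq_mul_riemannZeta hz0 hz1]
  refine mul_ne_zero (mul_ne_zero (ne_zero_of_re_pos hz0) (sub_ne_zero.mpr hz1))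
    (mul_ne_zero (Gammaℝ_ne_zero_of_re_pos hz0) fun hζ => ?_)
  have not_trivial : ¬∃ n : ℕ, z = -2 * (n + 1) := by
    rintro ⟨n, rfl⟩
    have : (0 : ℝ) ≤ n := n.cast_nonneg
    simp at hz0
    linarith
  linarith [hRH z hζ not_trivial hz1]

theorem exists_norm_mellin_le {f : ℝ → ℂ} {A B : ℝ} (hA : MellinConvergent f A)
    (hB : MellinConvergent f B) :
    ∃ C : ℝ, 0 ≤ C ∧ ∀ z : ℂ, A ≤ z.re → z.re ≤ B → ‖mellin f z‖ ≤ C := by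
  have hnorm (σ : ℝ) (hσ : MellinConvergent f σ) :
      IntegrableOn (fun t : ℝ => t ^ (σ - 1) * ‖f t‖) (Set.Ioi 0) := by
    refine IntegrableOn.congr_fun hσ.norm (fun t ht => ?_) measurableSet_Ioi
    simp [norm_cpow_eq_rpow_re_of_pos ht]
  refine ⟨∫ t in Set.Ioi (0 : ℝ), (t ^ (A - 1) * ‖f t‖ + t ^ (B - 1) * ‖f t‖),
    setIntegral_nonneg measurableSet_Ioi fun t (ht : 0 < t) => by positivity,
    fun z hAz hzB => norm_integral_le_of_norm_le ((hnorm A hA).add (hnorm B hB)) ?_⟩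
  filter_upwards [ae_restrict_mem measurableSet_Ioi] with t (ht : 0 < t)
  rw [norm_smul, norm_cpow_eq_rpow_re_of_pos ht, ← add_mul, sub_re, one_re]
  gcongr
  have hA0 : 0 ≤ t ^ (A - 1) := by positivity
  have hB0 : 0 ≤ t ^ (B - 1) := by positivity
  rcases le_total 1 t with h | h
  · linarith [Real.rpow_le_rpow_of_exponent_le h (sub_le_sub_right hzB 1)]
  · linarith [Real.rpow_le_rpow_of_exponent_ge ht h (sub_le_sub_right hAz 1)]

theorem exists_norm_completedRiemannZeta₀_le (A B : ℝ) :
    ∃ C : ℝ, 0 ≤ C ∧ ∀ z : ℂ, A ≤ z.re → z.re ≤ B → ‖completedRiemannZeta₀ z‖ ≤ C := by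
  set P := HurwitzZeta.hurwitzEvenFEPair 0
  have hconv (s : ℂ) : MellinConvergent P.f_modif s :=
    (P.isStrongFEPair_toStrongFEPair.hasMellin s).1
  obtain ⟨C, hC0, hC⟩ := exists_norm_mellin_le (A := A / 2) (B := B / 2) (hconv _) (hconv _)
  refine ⟨C, hC0, fun z hA hB => ?_⟩
  have hz2 : (z / 2).re = z.re / 2 := by simp
  calc ‖completedRiemannZeta₀ z‖ = ‖mellin P.f_modif (z / 2)‖ / 2 := by
        rw [show completedRiemannZeta₀ z = mellin P.f_modif (z / 2) / 2 from rfl, norm_div,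
          norm_ofNat]
    _ ≤ ‖mellin P.f_modif (z / 2)‖ := half_le_self (norm_nonneg _)
    _ ≤ C := hC _ (by linarith) (by linarith)

theorem norm_le_mul_one_add_abs_im {A B : ℝ} {z : ℂ} (hA : A ≤ z.re) (hB : z.re ≤ B) :
    ‖z‖ ≤ (|A| + |B| + 1) * (1 + |z.im|) := by
  have hre : |z.re| ≤ |A| + |B| := by
    rw [abs_le]
    constructor <;> linarith [neg_abs_le A, le_abs_self B, abs_nonneg A, abs_nonneg B]
  nlinarith [norm_le_abs_re_add_abs_im z, abs_nonneg z.im, abs_nonneg A, abs_nonneg B]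

theorem exists_norm_riemannXi_le (A B : ℝ) :
    ∃ C : ℝ, 1 ≤ C ∧ ∀ z : ℂ, A ≤ z.re → z.re ≤ B → ‖riemannXi z‖ ≤ C * (1 + |z.im|) ^ 2 := by
  obtain ⟨C, hC0, hC⟩ := exists_norm_completedRiemannZeta₀_le A B
  set D := |A| + |B| + 1
  have : 1 ≤ D := by linarith [abs_nonneg A, abs_nonneg B]
  refine ⟨D * (D + 1) * C + 1, by simpa using by positivity, fun z hA hB => ?_⟩
  have hz : ‖z‖ ≤ D * (1 + |z.im|) := norm_le_mul_one_add_abs_im hA hB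
  have hz1 : ‖z - 1‖ ≤ (D + 1) * (1 + |z.im|) := by
    have : ‖z - 1‖ ≤ ‖z‖ + 1 := (norm_sub_le _ _).trans_eq (by rw [norm_one])
    linarith [abs_nonneg z.im]
  calc ‖riemannXi z‖ ≤ ‖z‖ * ‖z - 1‖ * ‖completedRiemannZeta₀ z‖ + 1 :=
        (norm_add_le _ _).trans_eq (by rw [norm_mul, norm_mul, norm_one])
    _ ≤ D * (1 + |z.im|) * ((D + 1) * (1 + |z.im|)) * C + 1 * (1 + |z.im|) ^ 2 := by
        gcongr
        · exact hC z hA hB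
        · nlinarith [abs_nonneg z.im]
    _ = (D * (D + 1) * C + 1) * (1 + |z.im|) ^ 2 := by ring

/-! ### The logarithmic derivative of the xi function -/

theorem mul_Gammaℝ {z : ℂ} (hz : z ≠ 0) :
    z * Gammaℝ z = 2 * ((Real.pi : ℂ) ^ (-z / 2) * Gamma (z / 2 + 1)) := by
  rw [Gamma_add_one _ (div_ne_zero hz two_ne_zero), Gammaℝ_def]
  ring

theorem differentiableAt_Gamma_of_re_pos {z : ℂ} (hz : 0 < z.re) : DifferentiableAt ℂ Gamma z := by
  refine differentiableAt_Gamma _ fun m h => ?_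
  have := congrArg re h
  simp only [neg_re, natCast_re] at this
  linarith [(m.cast_nonneg : (0 : ℝ) ≤ m)]

theorem logDeriv_pi_cpow (z : ℂ) :
    logDeriv (fun w : ℂ => (Real.pi : ℂ) ^ (-w / 2)) z = -(Real.log Real.pi / 2 : ℝ) := by
  have hpi : (Real.pi : ℂ) ≠ 0 := ofReal_ne_zero.mpr Real.pi_ne_zero
  have hderiv : HasDerivAt (fun w : ℂ => (Real.pi : ℂ) ^ (-w / 2))
      ((Real.pi : ℂ) ^ (-z / 2) * log Real.pi * (-1 / 2)) z :=
    ((hasDerivAt_id z).neg.div_const 2).const_cpow (.inl hpi)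
  rw [logDeriv_apply, hderiv.deriv, mul_assoc,
    mul_div_cancel_left₀ _ (cpow_ne_zero_iff.mpr (.inl hpi)), ofReal_div, ofReal_log Real.pi_pos.le]
  push_cast
  ring

theorem logDeriv_Gamma_half_add_one {z : ℂ} (hz : 0 < z.re) :
    logDeriv (fun w : ℂ => Gamma (w / 2 + 1)) z = digamma (z / 2 + 1) / 2 := by
  have hd : HasDerivAt (fun w : ℂ => w / 2 + 1) (1 / 2) z :=
    ((hasDerivAt_id z).div_const 2).add_const 1
  have hG : DifferentiableAt ℂ Gamma (z / 2 + 1) :=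
    differentiableAt_Gamma_of_re_pos (by simp; linarith)
  have := logDeriv_comp (f := Gamma) (g := fun w : ℂ => w / 2 + 1) hG hd.differentiableAt
  rw [hd.deriv, mul_one_div] at this
  exact this

theorem logDeriv_Gamma_half_mul_riemannZeta {z : ℂ} (hz : 1 < z.re) :
    logDeriv (fun w : ℂ => Gamma (w / 2 + 1) * riemannZeta w) z =
      digamma (z / 2 + 1) / 2 - LSeries (fun n => (vonMangoldt n : ℂ)) z := by
  have hre : 0 < (z / 2 + 1).re := by simp; linarith
  rw [logDeriv_mul (f := fun w : ℂ => Gamma (w / 2 + 1)) z (Gamma_ne_zero_of_re_pos hre)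
    (riemannZeta_ne_zero_of_one_lt_re hz)
    ((differentiableAt_Gamma_of_re_pos hre).comp (f := fun w : ℂ => w / 2 + 1) z (by fun_prop))
    (differentiableAt_riemannZeta (ne_one_of_one_lt_re hz)),
    logDeriv_Gamma_half_add_one (by linarith),
    ArithmeticFunction.LSeries_vonMangoldt_eq_deriv_riemannZeta_div hz, logDeriv_apply]
  ring

theorem riemannXi_eq_mul_Gamma_mul_riemannZeta {z : ℂ} (hz : 0 < z.re) (hz1 : z ≠ 1) :
    riemannXi z = 2 * (z - 1) *
      ((Real.pi : ℂ) ^ (-z / 2) * (Gamma (z / 2 + 1) * riemannZeta z)) := by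
  rw [riemannXi_eq_mul_riemannZeta hz hz1]
  linear_combination ((z - 1) * riemannZeta z) * mul_Gammaℝ (ne_zero_of_re_pos hz)

theorem logDeriv_riemannXi {z : ℂ} (hz : 1 < z.re) :
    logDeriv riemannXi z = 1 / (z - 1) - (Real.log Real.pi / 2 : ℝ) + digamma (z / 2 + 1) / 2 -
      LSeries (fun n => (vonMangoldt n : ℂ)) z := by
  have heq : riemannXi =ᶠ[𝓝 z] fun w => 2 * (w - 1) *
      ((Real.pi : ℂ) ^ (-w / 2) * (Gamma (w / 2 + 1) * riemannZeta w)) := by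
    filter_upwards [(isOpen_lt continuous_const continuous_re).mem_nhds hz] with w (hw : 1 < w.re)
    exact riemannXi_eq_mul_Gamma_mul_riemannZeta (by linarith) (ne_one_of_one_lt_re hw)
  have hre : 0 < (z / 2 + 1).re := by simp; linarith
  have hpi : (Real.pi : ℂ) ^ (-z / 2) ≠ 0 :=
    cpow_ne_zero_iff.mpr (.inl (ofReal_ne_zero.mpr Real.pi_ne_zero))
  have hGζ : Gamma (z / 2 + 1) * riemannZeta z ≠ 0 :=
    mul_ne_zero (Gamma_ne_zero_of_re_pos hre) (riemannZeta_ne_zero_of_one_lt_re hz)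
  have hGζ' : DifferentiableAt ℂ (fun w => Gamma (w / 2 + 1) * riemannZeta w) z :=
    ((differentiableAt_Gamma_of_re_pos hre).comp (f := fun w : ℂ => w / 2 + 1) z
      (by fun_prop)).mul (differentiableAt_riemannZeta (ne_one_of_one_lt_re hz))
  have hpi' : DifferentiableAt ℂ (fun w : ℂ => (Real.pi : ℂ) ^ (-w / 2)) z :=
    (by fun_prop : DifferentiableAt ℂ (fun w : ℂ => -w / 2) z).const_cpow
      (.inl (ofReal_ne_zero.mpr Real.pi_ne_zero))
  have hlin : HasDerivAt (fun w : ℂ => 2 * (w - 1)) 2 z := by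
    simpa using ((hasDerivAt_id z).sub_const 1).const_mul 2
  have hz1 : z - 1 ≠ 0 := sub_ne_zero.mpr (ne_one_of_one_lt_re hz)
  have hlin' : logDeriv (fun w : ℂ => 2 * (w - 1)) z = 1 / (z - 1) := by
    rw [logDeriv_apply, hlin.deriv]
    field_simp
  rw [logDeriv_apply, heq.deriv_eq, heq.eq_of_nhds, ← logDeriv_apply,
    logDeriv_mul (f := fun w : ℂ => 2 * (w - 1))
      (g := fun w : ℂ => (Real.pi : ℂ) ^ (-w / 2) * (Gamma (w / 2 + 1) * riemannZeta w))
      z (mul_ne_zero two_ne_zero hz1) (mul_ne_zero hpi hGζ) hlin.differentiableAt (hpi'.mul hGζ'),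
    logDeriv_mul (g := fun w : ℂ => Gamma (w / 2 + 1) * riemannZeta w) z hpi hGζ hpi' hGζ',
    hlin', logDeriv_pi_cpow, logDeriv_Gamma_half_mul_riemannZeta hz]
  ring

theorem exists_norm_LSeries_vonMangoldt_le :
    ∃ C : ℝ, 0 ≤ C ∧ ∀ z : ℂ, 2 ≤ z.re → ‖LSeries (fun n => (vonMangoldt n : ℂ)) z‖ ≤ C := by
  have hs := (ArithmeticFunction.LSeriesSummable_vonMangoldt (s := 2) (by simp)).norm
  exact ⟨_, tsum_nonneg fun n => norm_nonneg _, fun z hz => tsum_of_norm_bounded hs.hasSum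
    fun n => LSeries.norm_term_le_of_re_le_re _ (by simpa using hz) n⟩

theorem exists_norm_logDeriv_riemannXi_le :
    ∃ C : ℝ, 0 ≤ C ∧ ∀ z : ℂ, 2 ≤ z.re → ‖logDeriv riemannXi z‖ ≤ C * (1 + √‖z‖) := by
  obtain ⟨K, hK0, hK⟩ := exists_norm_LSeries_vonMangoldt_le
  obtain ⟨D, hD0, hD⟩ := exists_norm_digamma_add_one_le
  refine ⟨1 + |Real.log Real.pi / 2| + D + K, by positivity, fun z hz => ?_⟩
  have pole : ‖1 / (z - 1)‖ ≤ 1 := by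
    have : 1 ≤ ‖z - 1‖ := by
      have := re_le_norm (z - 1)
      rw [sub_re, one_re] at this
      linarith
    rw [norm_div, norm_one]
    exact div_le_one_of_le₀ this (norm_nonneg _)
  have gamma : ‖digamma (z / 2 + 1) / 2‖ ≤ D * (1 + √‖z‖) := by
    have hz2 : ‖z / 2‖ ≤ ‖z‖ := by
      rw [norm_div, norm_ofNat]
      exact half_le_self (norm_nonneg _)
    rw [norm_div, norm_ofNat]
    refine (half_le_self (norm_nonneg _)).trans ((hD (z / 2) (by simp; linarith)).trans ?_)
    gcongr
  have hsqrt := Real.sqrt_nonneg ‖z‖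
  rw [logDeriv_riemannXi (by linarith)]
  calc _ ≤ ‖1 / (z - 1)‖ + ‖((Real.log Real.pi / 2 : ℝ) : ℂ)‖ + ‖digamma (z / 2 + 1) / 2‖ +
        ‖LSeries (fun n => (vonMangoldt n : ℂ)) z‖ :=
        (norm_sub_le _ _).trans (add_le_add_left ((norm_add_le _ _).trans
          (add_le_add_left (norm_sub_le _ _) _)) _)
    _ ≤ 1 + |Real.log Real.pi / 2| + D * (1 + √‖z‖) + K := by
        gcongr
        · exact (norm_real _).le
        · exact hK z hz
    _ ≤ _ := by nlinarith [mul_nonneg (abs_nonneg (Real.log Real.pi / 2)) hsqrt,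
        mul_nonneg hK0 hsqrt]

theorem exists_re_logDeriv_riemannXi_nonneg :
    ∃ B : ℝ, 2 ≤ B ∧ ∀ z : ℂ, B ≤ z.re → 0 ≤ (logDeriv riemannXi z).re := by
  obtain ⟨K, -, hK⟩ := exists_norm_LSeries_vonMangoldt_le
  obtain ⟨N, hN⟩ := exists_nat_ge (Real.exp (Real.log Real.pi + 2 * K + 1))
  have : (0 : ℝ) ≤ N := N.cast_nonneg
  refine ⟨2 * N + 2, by linarith, fun z hz => ?_⟩
  have pole : 0 ≤ (1 / (z - 1)).re := by
    rw [one_div, inv_re, sub_re, one_re]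
    exact div_nonneg (by linarith) (normSq_nonneg _)
  have prime := (re_le_norm _).trans (hK z (by linarith))
  have gamma : Real.log (N + 1) - 1 ≤ (digamma (z / 2 + 1)).re :=
    log_sub_one_le_re_digamma N (by simp; linarith) (by simp; linarith)
  have hlog : Real.log Real.pi + 2 * K + 1 ≤ Real.log (N + 1) := by
    rw [Real.le_log_iff_exp_le (by positivity)]
    linarith
  have hhalf : (digamma (z / 2 + 1) / 2).re = (digamma (z / 2 + 1)).re / 2 := by simp
  rw [logDeriv_riemannXi (by linarith), sub_re, add_re, sub_re, ofReal_re, hhalf]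
  linarith

/-! ### Positivity of the real part of the logarithmic derivative -/

theorem exists_eq_mul_exp_of_ne_zero {f : ℂ → ℂ} {c : ℂ} {R : ℝ} (hR : 0 < R)
    (hf : DifferentiableOn ℂ f (Metric.ball c R)) (hne : ∀ w ∈ Metric.ball c R, f w ≠ 0) :
    ∃ L : ℂ → ℂ, DifferentiableOn ℂ L (Metric.ball c R) ∧ L c = 0 ∧
      ∀ w ∈ Metric.ball c R, f w = f c * exp (L w) := by
  have hball : IsOpen (Metric.ball c R) := Metric.isOpen_ball
  have hlog : DifferentiableOn ℂ (logDeriv f) (Metric.ball c R) := (hf.deriv hball).div hf hne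
  obtain ⟨L, hLc, hL⟩ := hlog.isExactOn_ball.with_val_at c 0
  refine ⟨L, fun w hw => (hL w hw).differentiableAt.differentiableWithinAt, hLc, fun w hw => ?_⟩
  have hderiv : ∀ w ∈ Metric.ball c R, HasDerivAt (fun w => f w * exp (-L w)) 0 w := by
    intro w hw
    refine ((hf.differentiableAt (hball.mem_nhds hw)).hasDerivAt.mul
      (hL w hw).fun_neg.cexp).congr_deriv ?_
    have := hne w hw
    rw [logDeriv_apply]
    field_simp
    ring
  have hconst : f w * exp (-L w) = f c * exp (-L c) :=
    hball.is_const_of_deriv_eq_zero (convex_ball c R).isPreconnected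
      (fun w hw => (hderiv w hw).differentiableAt.differentiableWithinAt)
      (fun w hw => (hderiv w hw).deriv) hw (Metric.mem_ball_self hR)
  rw [hLc, neg_zero, exp_zero, mul_one] at hconst
  rw [← hconst, mul_assoc, ← exp_add, neg_add_cancel, exp_zero, mul_one]

theorem mapsTo_const_add_ball_zero (c : ℂ) (R : ℝ) :
    Set.MapsTo (fun u => c + u) (Metric.ball 0 R) (Metric.ball c R) := fun u hu => by
  simpa using hu

theorem norm_le_of_re_le_of_map_center_eq_zero {f : ℂ → ℂ} {c : ℂ} {R M : ℝ} (hM : 0 < M)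
    (hf : DifferentiableOn ℂ f (Metric.ball c R)) (hfc : f c = 0)
    (hre : ∀ w ∈ Metric.ball c R, (f w).re ≤ M) {w : ℂ} (hw : w ∈ Metric.ball c R) :
    ‖f w‖ ≤ 2 * M * dist w c / (R - dist w c) := by
  have hR : 0 < R := Metric.nonempty_ball.mp ⟨w, hw⟩
  have hmaps := mapsTo_const_add_ball_zero c R
  have := borelCaratheodory_zero (f := fun u => f (c + u)) (z := w - c) hM
    (hf.comp (by fun_prop) hmaps) (fun u hu => hre _ (hmaps hu)) hR
    (by rwa [mem_ball_zero_iff, ← dist_eq_norm]) (by simpa using hfc)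
  rwa [add_sub_cancel, ← dist_eq_norm] at this

theorem norm_inv_le_of_norm_le_exp_mul {f : ℂ → ℂ} {c : ℂ} {R M : ℝ} (hM : 0 < M)
    (hf : DifferentiableOn ℂ f (Metric.ball c R)) (hne : ∀ w ∈ Metric.ball c R, f w ≠ 0)
    (hle : ∀ w ∈ Metric.ball c R, ‖f w‖ ≤ Real.exp M * ‖f c‖) {w : ℂ}
    (hw : w ∈ Metric.ball c R) :
    ‖(f w)⁻¹‖ ≤ Real.exp (2 * M * dist w c / (R - dist w c)) * ‖(f c)⁻¹‖ := by
  have hR : 0 < R := Metric.nonempty_ball.mp ⟨w, hw⟩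
  obtain ⟨L, hLd, hLc, hL⟩ := exists_eq_mul_exp_of_ne_zero hR hf hne
  have hfc : 0 < ‖f c‖ := norm_pos_iff.mpr (hne c (Metric.mem_ball_self hR))
  have hre : ∀ w ∈ Metric.ball c R, (L w).re ≤ M := fun w hw => by
    have := hle w hw
    rw [hL w hw, norm_mul, norm_exp, mul_comm] at this
    exact Real.exp_le_exp.mp (le_of_mul_le_mul_right this hfc)
  have hbound := norm_le_of_re_le_of_map_center_eq_zero hM hLd hLc hre hw
  rw [hL w hw, mul_inv, norm_mul, ← exp_neg, norm_exp, mul_comm]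
  gcongr
  exact (re_le_norm _).trans (by rwa [norm_neg])

theorem norm_le_mul_div_of_re_nonneg {f : ℂ → ℂ} {c : ℂ} {R : ℝ}
    (hf : DifferentiableOn ℂ f (Metric.ball c R)) (hre : ∀ w ∈ Metric.ball c R, 0 ≤ (f w).re)
    {w : ℂ} (hw : w ∈ Metric.ball c R) :
    ‖f w‖ ≤ ‖f c‖ * (R + dist w c) / (R - dist w c) := by
  have hR : 0 < R := Metric.nonempty_ball.mp ⟨w, hw⟩
  have hmaps := mapsTo_const_add_ball_zero c R
  have hbound : ∀ᶠ M : ℝ in 𝓝[>] 0, ‖f w‖ ≤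
      2 * M * dist w c / (R - dist w c) + ‖f c‖ * (R + dist w c) / (R - dist w c) := by
    filter_upwards [self_mem_nhdsWithin] with M (hM : 0 < M)
    have := borelCaratheodory (f := fun u => -f (c + u)) (z := w - c) hM
      (hf.comp (by fun_prop) hmaps).neg
      (fun u hu => by
        have := hre _ (hmaps hu)
        rw [Set.mem_ofPred_eq, neg_re]
        linarith)
      hR (by rwa [mem_ball_zero_iff, ← dist_eq_norm])
    simpa only [add_sub_cancel, add_zero, norm_neg, ← dist_eq_norm] using this
  refine ge_of_tendsto (((Continuous.tendsto' (by fun_prop) _ _ ?_).mono_left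
    nhdsWithin_le_nhds)) hbound
  simp

theorem norm_inv_le_of_norm_logDeriv_le {f : ℂ → ℂ} {z w : ℂ} {K : ℝ}
    (hf : ∀ u ∈ segment ℝ z w, DifferentiableAt ℂ f u) (hne : ∀ u ∈ segment ℝ z w, f u ≠ 0)
    (hK : ∀ u ∈ segment ℝ z w, ‖logDeriv f u‖ ≤ K) :
    ‖(f w)⁻¹‖ ≤ ‖(f z)⁻¹‖ * Real.exp (K * ‖w - z‖) := by
  set γ : ℝ → ℂ := fun s => z + s * (w - z)
  have hγ : ∀ s ∈ Set.Icc (0 : ℝ) 1, γ s ∈ segment ℝ z w := fun s hs => by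
    rw [segment_eq_image']
    exact ⟨s, hs, by simp [γ]⟩
  have hγ' (s : ℝ) : HasDerivAt γ (w - z) s := by
    simpa [γ] using ((hasDerivAt_id s).ofReal_comp.mul_const (w - z)).const_add z
  have hderiv : ∀ s ∈ Set.Icc (0 : ℝ) 1, HasDerivAt (fun s => (f (γ s))⁻¹)
      (-(logDeriv f (γ s) * (w - z)) * (f (γ s))⁻¹) s := fun s hs => by
    have := hne _ (hγ s hs)
    refine (((hf _ (hγ s hs)).hasDerivAt.comp s (hγ' s)).fun_inv this).congr_deriv ?_
    rw [logDeriv_apply, Function.comp_apply]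
    field_simp
  have := norm_le_gronwallBound_of_norm_deriv_right_le (ε := 0) (K := K * ‖w - z‖)
    (fun s hs => (hderiv s hs).continuousAt.continuousWithinAt)
    (fun s hs => (hderiv s (Set.Ico_subset_Icc_self hs)).hasDerivWithinAt) le_rfl
    (fun s hs => ?_) 1 (by simp)
  · simpa [gronwallBound_ε0, γ] using this
  · rw [norm_mul, norm_neg, norm_mul, add_zero]
    gcongr
    exact hK _ (hγ s (Set.Ico_subset_Icc_self hs))

theorem norm_le_norm_of_re_logDeriv_nonneg {f : ℂ → ℂ} (hf : Differentiable ℂ f) {x y t : ℝ}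
    (hxy : x ≤ y) (hre : ∀ s ∈ Set.Icc x y, 0 ≤ (logDeriv f (s + t * I)).re) :
    ‖f (x + t * I)‖ ≤ ‖f (y + t * I)‖ := by
  have hderiv (s : ℝ) : HasDerivAt (fun s : ℝ => ‖f (s + t * I)‖ ^ 2)
      (2 * inner ℝ (f (s + t * I)) (deriv f (s + t * I))) s := by
    have := ((hf _).hasDerivAt.comp (s : ℂ) ((hasDerivAt_id _).add_const (t * I))).comp_ofReal
    rw [mul_one] at this
    exact this.norm_sq
  have hmono : MonotoneOn (fun s : ℝ => ‖f (s + t * I)‖ ^ 2) (Set.Icc x y) := by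
    refine monotoneOn_of_deriv_nonneg (convex_Icc x y)
      (fun s _ => (hderiv s).continuousAt.continuousWithinAt)
      (fun s _ => (hderiv s).differentiableAt.differentiableWithinAt) fun s hs => ?_
    rw [(hderiv s).deriv, Complex.inner]
    refine mul_nonneg zero_le_two ?_
    by_cases hzero : f (s + t * I) = 0
    · simp [hzero]
    · have : deriv f (s + t * I) * conj (f (s + t * I)) =
          logDeriv f (s + t * I) * (normSq (f (s + t * I)) : ℝ) := by
        rw [← mul_conj, logDeriv_apply]
        field_simp
      rw [this, re_mul_ofReal]
      exact mul_nonneg (hre s (interior_subset hs)) (normSq_nonneg _)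
  exact (pow_le_pow_iff_left₀ (norm_nonneg _) (norm_nonneg _) two_ne_zero).mp
    (hmono ⟨le_rfl, hxy⟩ ⟨hxy, le_rfl⟩ hxy)

theorem exists_norm_inv_riemannXi_vertical_le (hRH : RiemannHypothesis) {m : ℝ} (hm : 2 ≤ m) :
    ∃ C : ℝ, 0 ≤ C ∧ ∀ t : ℝ, ‖(riemannXi (m + t * I))⁻¹‖ ≤ Real.exp (C * (1 + |t|) ^ 2) := by
  obtain ⟨K, hK0, hK⟩ := exists_norm_logDeriv_riemannXi_le
  set D := ‖(riemannXi m)⁻¹‖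
  have hD : 0 ≤ D := norm_nonneg _
  refine ⟨D + K * (2 + m), by positivity, fun t => ?_⟩
  have ht := abs_nonneg t
  have hsegment : ∀ u ∈ segment ℝ (m : ℂ) (m + t * I), 2 ≤ u.re ∧ ‖u‖ ≤ m + |t| := by
    rw [segment_eq_image']
    rintro _ ⟨s, hs, rfl⟩
    refine ⟨by simpa using hm, (norm_add_le _ _).trans ?_⟩
    rw [norm_smul, Real.norm_of_nonneg hs.1, add_sub_cancel_left, norm_mul, norm_I, mul_one,
      norm_real, norm_real, Real.norm_of_nonneg (by linarith), Real.norm_eq_abs]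
    gcongr
    exact mul_le_of_le_one_left ht hs.2
  have hbound := norm_inv_le_of_norm_logDeriv_le (f := riemannXi) (K := K * (2 + m + |t|))
    (fun u _ => differentiable_riemannXi u)
    (fun u hu => riemannXi_ne_zero hRH (by linarith [(hsegment u hu).1]))
    (fun u hu => by
      obtain ⟨hre, hnorm⟩ := hsegment u hu
      have : √‖u‖ ≤ 1 + ‖u‖ := by
        rw [Real.sqrt_le_left (by positivity)]
        nlinarith [norm_nonneg u]
      exact (hK u hre).trans (mul_le_mul_of_nonneg_left (by linarith) hK0))
  rw [add_sub_cancel_left, norm_mul, norm_I, mul_one, norm_real, Real.norm_eq_abs] at hbound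
  calc ‖(riemannXi (m + t * I))⁻¹‖ ≤ D * Real.exp (K * (2 + m + |t|) * |t|) := hbound
    _ ≤ Real.exp D * Real.exp (K * (2 + m + |t|) * |t|) := by
        gcongr
        linarith [Real.add_one_le_exp D]
    _ = Real.exp (D + K * ((2 + m + |t|) * |t|)) := by rw [← Real.exp_add, mul_assoc]
    _ ≤ Real.exp (D * (1 + |t|) ^ 2 + K * ((2 + m) * (1 + |t|) ^ 2)) := by
        refine Real.exp_le_exp.mpr (add_le_add ?_ (mul_le_mul_of_nonneg_left ?_ hK0))
        · nlinarith [mul_nonneg hD ht]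
        · nlinarith [mul_nonneg (show 0 ≤ 1 + m by linarith) (sq_nonneg |t|),
            mul_nonneg (show 0 ≤ 2 + m by linarith) ht]
    _ = Real.exp ((D + K * (2 + m)) * (1 + |t|) ^ 2) := by ring_nf

theorem abs_re_sub_lt_and_abs_im_le_of_mem_ball {x t R : ℝ} {w : ℂ}
    (hw : w ∈ Metric.ball (x + t * I : ℂ) R) : |w.re - x| < R ∧ |w.im| ≤ |t| + R := by
  rw [mem_ball_iff_norm] at hw
  have hre := (abs_re_le_norm _).trans_lt hw
  have him := (abs_im_le_norm _).trans_lt hw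
  simp only [sub_re, add_re, ofReal_re, re_ofReal_mul, I_re, mul_zero, add_zero] at hre
  simp only [sub_im, add_im, ofReal_im, im_ofReal_mul, I_im, mul_one, zero_add] at him
  refine ⟨hre, ?_⟩
  have := abs_add_le (w.im - t) t
  rw [sub_add_cancel] at this
  linarith

theorem dist_ofReal_add_im_mul_I {x : ℝ} {z : ℂ} (hz : z.re ≤ x) :
    dist z (x + z.im * I) = x - z.re := by
  have : z - (x + z.im * I) = ((z.re - x : ℝ) : ℂ) := by apply Complex.ext <;> simp
  rw [dist_eq_norm, this, norm_real, Real.norm_of_nonpos (by linarith), neg_sub]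

theorem riemannXi_ne_zero_of_mem_ball (hRH : RiemannHypothesis) {m t : ℝ} {w : ℂ}
    (hw : w ∈ Metric.ball (m + t * I : ℂ) (m - 1 / 2)) : riemannXi w ≠ 0 :=
  riemannXi_ne_zero hRH
    (by linarith [(abs_lt.mp (abs_re_sub_lt_and_abs_im_le_of_mem_ball hw).1).1])

theorem exists_norm_riemannXi_le_exp_mul_of_mem_ball (hRH : RiemannHypothesis) {m : ℝ}
    (hm : 2 ≤ m) :
    ∃ C : ℝ, 0 < C ∧ ∀ t : ℝ, ∀ w ∈ Metric.ball (m + t * I : ℂ) (m - 1 / 2),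
      ‖riemannXi w‖ ≤ Real.exp (C * (1 + |t|) ^ 2) * ‖riemannXi (m + t * I)‖ := by
  obtain ⟨C₁, hC₁0, hC₁⟩ := exists_norm_inv_riemannXi_vertical_le hRH hm
  obtain ⟨C₀, hC₀1, hC₀⟩ := exists_norm_riemannXi_le 0 (2 * m)
  obtain ⟨R, hR⟩ : ∃ R, R = m - 1 / 2 := ⟨_, rfl⟩
  have hR0 : 0 < R := by linarith
  refine ⟨C₀ * (1 + R) ^ 2 + C₁, by positivity, fun t w hw => ?_⟩
  rw [← hR] at hw
  obtain ⟨hre, him⟩ := abs_re_sub_lt_and_abs_im_le_of_mem_ball hw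
  obtain ⟨hre₁, hre₂⟩ := abs_lt.mp hre
  have hcenter : 0 < ‖riemannXi (m + t * I)‖ :=
    norm_pos_iff.mpr (riemannXi_ne_zero_of_mem_ball hRH (Metric.mem_ball_self (hR ▸ hR0)))
  have hinv := hC₁ t
  rw [norm_inv, inv_le_iff_one_le_mul₀ hcenter] at hinv
  calc ‖riemannXi w‖ ≤ C₀ * (1 + |w.im|) ^ 2 := hC₀ w (by linarith) (by linarith)
    _ ≤ C₀ * ((1 + R) * (1 + |t|)) ^ 2 := by
        gcongr
        nlinarith [mul_nonneg hR0.le (abs_nonneg t)]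
    _ = C₀ * (1 + R) ^ 2 * (1 + |t|) ^ 2 := by ring
    _ ≤ Real.exp (C₀ * (1 + R) ^ 2 * (1 + |t|) ^ 2) :=
        (le_add_of_nonneg_right zero_le_one).trans (Real.add_one_le_exp _)
    _ ≤ Real.exp (C₀ * (1 + R) ^ 2 * (1 + |t|) ^ 2) *
          (Real.exp (C₁ * (1 + |t|) ^ 2) * ‖riemannXi (m + t * I)‖) :=
        le_mul_of_one_le_right (Real.exp_pos _).le hinv
    _ = _ := by rw [← mul_assoc, ← Real.exp_add, add_mul]

-- On the disc about `m + t * I` that touches the critical line, `riemannXi` has a logarithm, which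
-- Borel–Carathéodory bounds.
theorem exists_norm_inv_riemannXi_le (hRH : RiemannHypothesis) {b m : ℝ} (hb : 0 < b)
    (hm : 2 ≤ m) :
    ∃ C : ℝ, 0 ≤ C ∧ ∀ z : ℂ, 1 / 2 + b ≤ z.re → z.re ≤ m →
      ‖(riemannXi z)⁻¹‖ ≤ Real.exp (C * (1 + |z.im|) ^ 2) := by
  obtain ⟨C₁, hC₁0, hC₁⟩ := exists_norm_inv_riemannXi_vertical_le hRH hm
  obtain ⟨C₂, hC₂0, hC₂⟩ := exists_norm_riemannXi_le_exp_mul_of_mem_ball hRH hm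
  obtain ⟨R, hR⟩ : ∃ R, R = m - 1 / 2 := ⟨_, rfl⟩
  rw [← hR] at hC₂
  have hR0 : 0 < R := by linarith
  refine ⟨2 * C₂ * R / b + C₁, by positivity, fun z hz hzm => ?_⟩
  set t := z.im
  have hdist : dist z (m + t * I) = m - z.re := dist_ofReal_add_im_mul_I hzm
  calc ‖(riemannXi z)⁻¹‖
    _ ≤ Real.exp (2 * (C₂ * (1 + |t|) ^ 2) * (m - z.re) / (R - (m - z.re))) *
          ‖(riemannXi (m + t * I))⁻¹‖ := by
        rw [← hdist]
        exact norm_inv_le_of_norm_le_exp_mul (by positivity)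
          differentiable_riemannXi.differentiableOn
          (fun w hw => riemannXi_ne_zero_of_mem_ball hRH (hR ▸ hw)) (hC₂ t)
          (by rw [Metric.mem_ball, hdist]; linarith)
    _ ≤ Real.exp (2 * (C₂ * (1 + |t|) ^ 2) * R / b) * Real.exp (C₁ * (1 + |t|) ^ 2) := by
        gcongr
        exacts [by linarith, by linarith, hC₁ t]
    _ = Real.exp ((2 * C₂ * R / b + C₁) * (1 + |t|) ^ 2) := by
        rw [← Real.exp_add]
        ring_nf

theorem one_add_sq_le_mul_exp {B y : ℝ} (hB : 1 ≤ B) (hy : 0 ≤ y) :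
    (1 + y) ^ 2 ≤ 4 * B ^ 2 * Real.exp (1 / B * y) := by
  have hexp : 1 + y ≤ 2 * B * Real.exp (y / (2 * B)) := by
    have : 2 * B * (y / (2 * B) + 1) = y + 2 * B := by field_simp
    nlinarith [Real.add_one_le_exp (y / (2 * B))]
  calc (1 + y) ^ 2 ≤ (2 * B * Real.exp (y / (2 * B))) ^ 2 := by gcongr
    _ = 4 * B ^ 2 * Real.exp (2 * (y / (2 * B))) := by
        rw [mul_pow, ← Real.exp_nat_mul]
        push_cast
        ring
    _ = _ := by
        congr 2
        field_simp

theorem norm_riemannXi_div_of_re_eq_half (hRH : RiemannHypothesis) {b : ℝ} (hb : 0 < b) {z : ℂ}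
    (hz : z.re = 1 / 2) : ‖riemannXi (z - b) / riemannXi (z + b)‖ = 1 := by
  have hreflect : 1 - (z - b) = conj (z + b) := by
    apply Complex.ext
    · simp
      linarith
    · simp
  rw [← riemannXi_one_sub, hreflect, riemannXi_conj, norm_div, norm_conj,
    div_self (norm_ne_zero_iff.mpr (riemannXi_ne_zero hRH (by simp; linarith)))]

theorem differentiableOn_riemannXi_div (hRH : RiemannHypothesis) {b : ℝ} (hb : 0 < b) :
    DifferentiableOn ℂ (fun z => riemannXi (z - b) / riemannXi (z + b)) {z | 1 / 2 ≤ z.re} := by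
  refine DifferentiableOn.div ?_ ?_ fun z hz =>
    riemannXi_ne_zero hRH (by simp only [Set.mem_ofPred_eq] at hz; simp; linarith)
  · exact (differentiable_riemannXi.comp (by fun_prop)).differentiableOn
  · exact (differentiable_riemannXi.comp (by fun_prop)).differentiableOn

theorem exists_norm_riemannXi_div_le (hRH : RiemannHypothesis) {B b : ℝ} (hB : 2 ≤ B)
    (hb : 0 < b) (hb1 : b ≤ 1) :
    ∃ C : ℝ, ∀ z : ℂ, 1 / 2 ≤ z.re → z.re ≤ B + 1 →
      ‖riemannXi (z - b) / riemannXi (z + b)‖ ≤ Real.exp (C * Real.exp (1 / B * |z.im|)) := by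
  obtain ⟨C₀, hC₀1, hC₀⟩ := exists_norm_riemannXi_le (-1) (B + 1)
  obtain ⟨C₁, hC₁0, hC₁⟩ := exists_norm_inv_riemannXi_le hRH hb (show 2 ≤ B + 2 by linarith)
  refine ⟨(C₀ + C₁) * (4 * B ^ 2), fun z hz hzB => ?_⟩
  have hnum := hC₀ (z - b) (by simp; linarith) (by simp; linarith)
  have hden := hC₁ (z + b) (by simp; linarith) (by simp; linarith)
  simp only [sub_im, ofReal_im, sub_zero, add_im, add_zero] at hnum hden
  calc ‖riemannXi (z - b) / riemannXi (z + b)‖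
      ≤ C₀ * (1 + |z.im|) ^ 2 * Real.exp (C₁ * (1 + |z.im|) ^ 2) := by
        rw [div_eq_mul_inv, norm_mul]
        gcongr
    _ ≤ Real.exp (C₀ * (1 + |z.im|) ^ 2) * Real.exp (C₁ * (1 + |z.im|) ^ 2) := by
        gcongr
        linarith [Real.add_one_le_exp (C₀ * (1 + |z.im|) ^ 2)]
    _ = Real.exp ((C₀ + C₁) * (1 + |z.im|) ^ 2) := by rw [← Real.exp_add, add_mul]
    _ ≤ _ := by
        rw [mul_assoc]
        gcongr
        exact one_add_sq_le_mul_exp (by linarith) (abs_nonneg _)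

theorem norm_riemannXi_div_le_one (hRH : RiemannHypothesis) {B b : ℝ} (hB2 : 2 ≤ B)
    (hB : ∀ z : ℂ, B ≤ z.re → 0 ≤ (logDeriv riemannXi z).re) (hb : 0 < b) (hb1 : b ≤ 1) {z : ℂ}
    (hz : 1 / 2 ≤ z.re) (hzB : z.re ≤ B + 1) :
    ‖riemannXi (z - b) / riemannXi (z + b)‖ ≤ 1 := by
  obtain ⟨C, hC⟩ := exists_norm_riemannXi_div_le hRH hB2 hb hb1
  refine PhragmenLindelof.vertical_strip (a := 1 / 2) (b := B + 1)
    (f := fun z => riemannXi (z - b) / riemannXi (z + b)) ?_ ⟨1 / B, ?_, C, ?_⟩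
    (fun w hw => (norm_riemannXi_div_of_re_eq_half hRH hb hw).le) (fun w hw => ?_) hz hzB
  · refine ((differentiableOn_riemannXi_div hRH hb).mono ?_).diffContOnCl
    exact closure_minimal (fun w hw => hw.1.le) (isClosed_le continuous_const continuous_re)
  · rw [div_lt_div_iff₀ (by linarith) (by linarith)]
    nlinarith [Real.pi_gt_three]
  · refine Asymptotics.IsBigO.of_bound 1 ?_
    rw [eventually_inf_principal]
    refine Eventually.of_forall fun w hw => ?_
    rw [one_mul, Real.norm_of_nonneg (Real.exp_pos _).le]
    exact hC w hw.1.le hw.2.le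
  · have hle := norm_le_norm_of_re_logDeriv_nonneg (x := w.re - b) (y := w.re + b) (t := w.im)
      differentiable_riemannXi (by linarith) fun s hs => hB _ (by
        have := hs.1
        simp
        linarith)
    have hsub : ((w.re - b : ℝ) : ℂ) + w.im * I = w - b := by apply Complex.ext <;> simp
    have hadd : ((w.re + b : ℝ) : ℂ) + w.im * I = w + b := by apply Complex.ext <;> simp
    rw [hsub, hadd] at hle
    rw [norm_div]
    exact div_le_one_of_le₀ hle (norm_nonneg _)

theorem hasDerivAt_re_riemannXi_div {z : ℂ} (hz : riemannXi z ≠ 0) :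
    HasDerivAt (fun b : ℝ => (riemannXi (z - b) / riemannXi (z + b)).re)
      (-2 * (logDeriv riemannXi z).re) 0 := by
  have hsub : HasDerivAt (fun b : ℂ => riemannXi (z - b)) (-deriv riemannXi z) 0 := by
    simpa using (differentiable_riemannXi (z - 0)).hasDerivAt.comp_const_sub z 0
  have hadd : HasDerivAt (fun b : ℂ => riemannXi (z + b)) (deriv riemannXi z) 0 := by
    simpa using (differentiable_riemannXi (z + 0)).hasDerivAt.comp_const_add z 0
  have hdiv := hsub.fun_div hadd (by simpa using hz)
  rw [← ofReal_zero] at hdiv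
  refine hdiv.real_of_complex.congr_deriv ?_
  rw [← re_ofReal_mul, logDeriv_apply]
  congr 1
  push_cast
  rw [sub_zero, add_zero]
  field_simp
  ring

theorem re_logDeriv_riemannXi_nonneg (hRH : RiemannHypothesis) {z : ℂ} (hz : 1 / 2 < z.re) :
    0 ≤ (logDeriv riemannXi z).re := by
  obtain ⟨B, hB2, hB⟩ := exists_re_logDeriv_riemannXi_nonneg
  rcases le_total B z.re with h | h
  · exact hB z h
  have hne := riemannXi_ne_zero hRH hz
  suffices -2 * (logDeriv riemannXi z).re ≤ 0 by linarith
  refine le_of_tendsto (hasDerivAt_re_riemannXi_div hne).tendsto_slope_zero_right ?_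
  filter_upwards [Ioc_mem_nhdsGT (zero_lt_one (α := ℝ))] with b hb
  have hle := (re_le_norm _).trans
    (norm_riemannXi_div_le_one hRH hB2 hB hb.1 hb.2 hz.le (by linarith))
  rw [zero_add, smul_eq_mul, ofReal_zero, sub_zero, add_zero, div_self hne, one_re]
  exact mul_nonpos_of_nonneg_of_nonpos (inv_nonneg.mpr hb.1.le) (by linarith)

theorem differentiableAt_logDeriv_riemannXi (hRH : RiemannHypothesis) {z : ℂ}
    (hz : 1 / 2 < z.re) : DifferentiableAt ℂ (logDeriv riemannXi) z :=
  (differentiable_riemannXi.analyticAt z).deriv.differentiableAt.div (differentiable_riemannXi z)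
    (riemannXi_ne_zero hRH hz)

theorem one_add_sqrt_norm_le {z : ℂ} (hz : |z.re| ≤ 4) :
    1 + √‖z‖ ≤ 3 * (1 + |z.im|) ^ (1 / 2 : ℝ) := by
  have him := abs_nonneg z.im
  have hnorm : ‖z‖ ≤ 2 ^ 2 * (1 + |z.im|) := by linarith [norm_le_abs_re_add_abs_im z]
  have hsqrt : √‖z‖ ≤ 2 * (1 + |z.im|) ^ (1 / 2 : ℝ) := by
    rw [← Real.sqrt_eq_rpow, ← Real.sqrt_sq (zero_le_two (α := ℝ)), ← Real.sqrt_mul (by norm_num)]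
    exact Real.sqrt_le_sqrt hnorm
  linarith [Real.one_le_rpow (by linarith : 1 ≤ 1 + |z.im|) (by norm_num : (0 : ℝ) ≤ 1 / 2)]

theorem exists_norm_logDeriv_riemannXi_le_rpow (hRH : RiemannHypothesis) {a : ℝ} (ha : 0 < a) :
    ∃ C : ℝ, 0 ≤ C ∧ ∀ z : ℂ, 1 / 2 + a ≤ z.re → z.re ≤ 2 →
      ‖logDeriv riemannXi z‖ ≤ C * (1 + |z.im|) ^ (1 / 2 : ℝ) := by
  obtain ⟨K, hK0, hK⟩ := exists_norm_logDeriv_riemannXi_le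
  refine ⟨K * 3 * 3 / a, by positivity, fun z hz hz2 => ?_⟩
  set t := z.im
  set c : ℂ := (2 : ℝ) + t * I
  have hre : ∀ w ∈ Metric.ball c (3 / 2), 1 / 2 < w.re := fun w hw => by
    linarith [(abs_lt.mp (abs_re_sub_lt_and_abs_im_le_of_mem_ball hw).1).1]
  have hdist : dist z c = 2 - z.re := dist_ofReal_add_im_mul_I hz2
  have hcenter : ‖logDeriv riemannXi c‖ ≤ K * (3 * (1 + |t|) ^ (1 / 2 : ℝ)) := by
    have := one_add_sqrt_norm_le (z := c) (by simp [c]; norm_num)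
    refine (hK c (by simp [c])).trans (mul_le_mul_of_nonneg_left ?_ hK0)
    simpa [c] using this
  calc ‖logDeriv riemannXi z‖
    _ ≤ ‖logDeriv riemannXi c‖ * (3 / 2 + (2 - z.re)) / (3 / 2 - (2 - z.re)) := by
        rw [← hdist]
        exact norm_le_mul_div_of_re_nonneg
          (fun w hw => (differentiableAt_logDeriv_riemannXi hRH (hre w hw)).differentiableWithinAt)
          (fun w hw => re_logDeriv_riemannXi_nonneg hRH (hre w hw))
          (by rw [Metric.mem_ball, hdist]; linarith)
    _ ≤ K * (3 * (1 + |t|) ^ (1 / 2 : ℝ)) * 3 / a := by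
        gcongr <;> linarith
    _ = _ := by ring

/-! ### Moving a vertical line of integration -/

theorem integrable_one_add_abs_rpow {r : ℝ} (hr : 1 < r) :
    Integrable fun τ : ℝ => (1 + |τ|) ^ (-r) := by
  simpa [Real.norm_eq_abs] using
    integrable_one_add_norm (E := ℝ) (μ := volume) (r := r) (by simpa using hr)

theorem norm_integral_vertical_sub_le {f : ℂ → ℂ} {α β T B : ℝ} (hαβ : α ≤ β)
    (hf : DifferentiableOn ℂ f {s | α ≤ s.re ∧ s.re ≤ β})
    (hB : ∀ s : ℂ, α ≤ s.re → s.re ≤ β → |s.im| = |T| → ‖f s‖ ≤ B) :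
    ‖(∫ τ in (-T)..T, f (β + τ * I)) - ∫ τ in (-T)..T, f (α + τ * I)‖ ≤ 2 * (B * (β - α)) := by
  have hedge (T' : ℝ) (hT' : |T'| = |T|) : ‖∫ x in α..β, f (x + T' * I)‖ ≤ B * (β - α) := by
    have := intervalIntegral.norm_integral_le_of_norm_le_const (a := α) (b := β)
      (f := fun x : ℝ => f (x + T' * I)) (C := B) fun x hx => by
        rw [Set.uIoc_of_le hαβ] at hx
        exact hB _ (by simpa using hx.1.le) (by simpa using hx.2) (by simpa using hT')
    rwa [abs_of_nonneg (sub_nonneg.mpr hαβ)] at this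
  have hrect := integral_boundary_rect_eq_zero_of_differentiableOn f
    (α + ((-T : ℝ) : ℂ) * I) (β + T * I) (hf.mono fun s hs => by
      have := hs.1
      simp only [add_re, ofReal_re, re_ofReal_mul, I_re, mul_zero, add_zero, Set.uIcc_of_le hαβ]
        at this
      exact this)
  simp only [add_re, ofReal_re, re_ofReal_mul, I_re, mul_zero, add_zero, add_im, ofReal_im,
    im_ofReal_mul, I_im, mul_one, zero_add, smul_eq_mul] at hrect
  have hsides : (∫ x in α..β, f (x + T * I)) - ∫ x in α..β, f (x + (-T : ℝ) * I) =
      I * ((∫ τ in (-T)..T, f (β + τ * I)) - ∫ τ in (-T)..T, f (α + τ * I)) := by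
    linear_combination (-1 : ℂ) * hrect
  calc _ = ‖(∫ x in α..β, f (x + T * I)) - ∫ x in α..β, f (x + (-T : ℝ) * I)‖ := by
        rw [hsides, norm_mul, norm_I, one_mul]
    _ ≤ B * (β - α) + B * (β - α) :=
        (norm_sub_le _ _).trans (add_le_add (hedge T rfl) (hedge (-T) (abs_neg T)))
    _ = _ := (two_mul _).symm

theorem integrable_vertical {f : ℂ → ℂ} {S : Set ℂ} {σ C r : ℝ} (hr : 1 < r)
    (hf : ContinuousOn f S) (hS : ∀ τ : ℝ, (σ + τ * I : ℂ) ∈ S)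
    (hC : ∀ s ∈ S, ‖f s‖ ≤ C * (1 + |s.im|) ^ (-r)) :
    Integrable fun τ : ℝ => f (σ + τ * I) :=
  ((integrable_one_add_abs_rpow hr).const_mul C).mono'
    (hf.comp_continuous (by fun_prop) hS).aestronglyMeasurable
    (.of_forall fun τ => by simpa using hC _ (hS τ))

theorem integral_vertical_eq {f : ℂ → ℂ} {α β C r : ℝ} (hαβ : α ≤ β) (hr : 1 < r)
    (hf : DifferentiableOn ℂ f {s | α ≤ s.re ∧ s.re ≤ β})
    (hC : ∀ s ∈ {s : ℂ | α ≤ s.re ∧ s.re ≤ β}, ‖f s‖ ≤ C * (1 + |s.im|) ^ (-r)) :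
    ∫ τ : ℝ, f (α + τ * I) = ∫ τ : ℝ, f (β + τ * I) := by
  have hlim {σ : ℝ} (hσ : α ≤ σ ∧ σ ≤ β) := intervalIntegral_tendsto_integral
    (integrable_vertical hr hf.continuousOn (fun τ => by simpa using hσ) hC)
    tendsto_neg_atTop_atBot tendsto_id
  have hbound : ∀ T : ℝ, 0 ≤ T →
      ‖(∫ τ in (-T)..T, f (β + τ * I)) - ∫ τ in (-T)..T, f (α + τ * I)‖ ≤
        2 * (C * (1 + T) ^ (-r) * (β - α)) := fun T hT =>
    norm_integral_vertical_sub_le hαβ hf fun s hα hβ him => by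
      rw [← abs_of_nonneg hT, ← him]
      exact hC s ⟨hα, hβ⟩
  have hdecay : Tendsto (fun T : ℝ => 2 * (C * (1 + T) ^ (-r) * (β - α))) atTop (𝓝 0) := by
    simpa using ((((tendsto_rpow_neg_atTop (zero_lt_one.trans hr)).comp
      (tendsto_atTop_add_const_left atTop (1 : ℝ) tendsto_id)).const_mul C).mul_const
        (β - α)).const_mul 2
  have := tendsto_nhds_unique ((hlim ⟨hαβ, le_rfl⟩).sub (hlim ⟨le_rfl, hαβ⟩))
    (squeeze_zero_norm' (eventually_atTop.mpr ⟨0, hbound⟩) hdecay)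
  exact (sub_eq_zero.mp this).symm

/-! ### The tent function and its Laplace transform -/

/-- The triangular function supported on `[-δ, δ]`, the test function of the explicit formula. -/
noncomputable def tent (δ x : ℝ) : ℝ := max (δ - |x|) 0

theorem tent_nonneg (δ x : ℝ) : 0 ≤ tent δ x := le_max_right _ _

theorem tent_neg (δ x : ℝ) : tent δ (-x) = tent δ x := by rw [tent, tent, abs_neg]

theorem continuous_tent (δ : ℝ) : Continuous (tent δ) := by
  unfold tent
  fun_prop

theorem tent_eq_zero {δ x : ℝ} (h : δ ≤ |x|) : tent δ x = 0 := max_eq_right (sub_nonpos.mpr h)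

theorem tent_of_abs_le {δ x : ℝ} (h : |x| ≤ δ) : tent δ x = δ - |x| :=
  max_eq_left (sub_nonneg.mpr h)

theorem tent_le {δ : ℝ} (hδ : 0 ≤ δ) (x : ℝ) : tent δ x ≤ δ :=
  max_le (sub_le_self δ (abs_nonneg x)) hδ

/-- The two-sided Laplace transform `(2 sinh(δs/2) / s)²` of `tent δ`. The slope `dslope` takes
care of the removable singularity at `s = 0`. -/
noncomputable def tentLaplace (δ : ℝ) (s : ℂ) : ℂ := (δ * dslope sinh 0 (δ * s / 2)) ^ 2

theorem differentiable_tentLaplace (δ : ℝ) : Differentiable ℂ (tentLaplace δ) := by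
  have hslope : Differentiable ℂ (dslope sinh 0) := by
    rw [← differentiableOn_univ, differentiableOn_dslope univ_mem]
    exact differentiable_sinh.differentiableOn
  exact ((hslope.comp (by fun_prop : Differentiable ℂ fun s : ℂ => δ * s / 2)).const_mul _).pow 2

theorem dslope_sinh_zero {w : ℂ} (hw : w ≠ 0) : dslope sinh 0 w = sinh w / w := by
  rw [dslope_of_ne _ hw, slope_def_field, sinh_zero, sub_zero, sub_zero]

theorem dslope_sinh_zero_mul_I (x : ℝ) : dslope sinh 0 (x * I) = Real.sinc x := by
  rcases eq_or_ne x 0 with rfl | hx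
  · simp
  · rw [dslope_sinh_zero (mul_ne_zero (ofReal_ne_zero.mpr hx) I_ne_zero), sinh_mul_I,
      mul_div_mul_right _ _ I_ne_zero, Real.sinc_of_ne_zero hx]
    push_cast
    rfl

theorem tentLaplace_mul_I (δ τ : ℝ) :
    tentLaplace δ (τ * I) = ((δ * Real.sinc (δ * τ / 2)) ^ 2 : ℝ) := by
  have : (δ : ℂ) * (τ * I) / 2 = (δ * τ / 2 : ℝ) * I := by
    push_cast
    ring
  rw [tentLaplace, this, dslope_sinh_zero_mul_I]
  push_cast
  rfl

theorem tentLaplace_of_ne_zero {δ : ℝ} {s : ℂ} (hδ : δ ≠ 0) (hs : s ≠ 0) :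
    tentLaplace δ s = (exp (δ * s) + exp (-(δ * s)) - 2) / s ^ 2 := by
  have hδ' : (δ : ℂ) ≠ 0 := ofReal_ne_zero.mpr hδ
  have hsq (w : ℂ) : exp w = exp (w / 2) ^ 2 := by
    rw [← exp_nat_mul]
    congr 1
    push_cast
    ring
  have hinv : exp (δ * s / 2) * exp (-(δ * s / 2)) = 1 := by
    rw [← exp_add, add_neg_cancel, exp_zero]
  rw [tentLaplace, dslope_sinh_zero (by simp [hδ', hs]), sinh, hsq (δ * s), hsq (-(δ * s)),
    neg_div]
  field_simp
  linear_combination (-2 : ℂ) * hinv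

theorem norm_exp_ofReal_mul_le {δ β : ℝ} {s : ℂ} (hs : |s.re| ≤ β) :
    ‖exp (δ * s)‖ ≤ Real.exp (|δ| * β) := by
  rw [norm_exp, re_ofReal_mul]
  refine Real.exp_le_exp.mpr ?_
  calc δ * s.re ≤ |δ| * |s.re| := (le_abs_self _).trans_eq (abs_mul _ _)
    _ ≤ |δ| * β := by gcongr

theorem exists_norm_tentLaplace_le (δ β : ℝ) :
    ∃ C : ℝ, 0 ≤ C ∧ ∀ s : ℂ, |s.re| ≤ β → ‖tentLaplace δ s‖ ≤ C * (1 + |s.im|) ^ (-2 : ℝ) := by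
  rcases eq_or_ne δ 0 with rfl | hδ
  · exact ⟨0, le_rfl, fun s _ => by simp [tentLaplace]⟩
  obtain ⟨C, hC⟩ := ((isCompact_Icc (a := -β) (b := β)).reProdIm
    (isCompact_Icc (a := (-1 : ℝ)) (b := 1))).exists_bound_of_continuousOn
      (differentiable_tentLaplace δ).continuous.continuousOn
  set D := Real.exp (|δ| * β) + Real.exp (|δ| * β) + 2
  have hD : 0 < D := by positivity
  refine ⟨4 * |C| + 4 * D, by positivity, fun s hs => ?_⟩
  rw [Real.rpow_neg (by positivity), Real.rpow_two, ← div_eq_mul_inv, le_div_iff₀ (by positivity)]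
  rcases le_total |s.im| 1 with him | him
  · have hbound : ‖tentLaplace δ s‖ ≤ |C| :=
      (hC s ⟨abs_le.mp hs, abs_le.mp him⟩).trans (le_abs_self C)
    have : (1 + |s.im|) ^ 2 ≤ 4 := by nlinarith [abs_nonneg s.im]
    calc ‖tentLaplace δ s‖ * (1 + |s.im|) ^ 2 ≤ |C| * 4 := by gcongr
      _ ≤ 4 * |C| + 4 * D := by linarith
  · have hs0 : s ≠ 0 := by
      rintro rfl
      norm_num at him
    have hnum : ‖exp (δ * s) + exp (-(δ * s)) - 2‖ ≤ D := by
      refine (norm_sub_le _ _).trans (add_le_add ((norm_add_le _ _).trans (add_le_add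
        (norm_exp_ofReal_mul_le hs) ?_)) (norm_ofNat 2).le)
      simpa using norm_exp_ofReal_mul_le (δ := -δ) hs
    have hden : (1 + |s.im|) ^ 2 ≤ 4 * ‖s‖ ^ 2 := by nlinarith [abs_im_le_norm s]
    rw [tentLaplace_of_ne_zero hδ hs0, norm_div, norm_pow, div_mul_eq_mul_div,
      div_le_iff₀ (by positivity)]
    calc _ ≤ D * (4 * ‖s‖ ^ 2) := by gcongr
      _ ≤ _ := by nlinarith [mul_nonneg (abs_nonneg C) (sq_nonneg ‖s‖)]

theorem hasDerivAt_tent_mul_exp_antideriv {s : ℂ} (hs : s ≠ 0) (δ x : ℝ) :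
    HasDerivAt (fun x : ℝ => (δ - x) * (exp (s * x) - exp (-(s * x))) / s +
      (exp (s * x) + exp (-(s * x))) / s ^ 2) ((δ - x) * (exp (s * x) + exp (-(s * x)))) x := by
  have hlin : HasDerivAt (fun x : ℝ => s * (x : ℂ)) s x := by
    simpa using (hasDerivAt_id x).ofReal_comp.const_mul s
  have hpos := hlin.cexp
  have hneg := hlin.fun_neg.cexp
  have hsub : HasDerivAt (fun x : ℝ => (δ : ℂ) - x) (-1) x := by
    simpa using (hasDerivAt_id x).ofReal_comp.const_sub (δ : ℂ)
  refine (((hsub.fun_mul (hpos.fun_sub hneg)).div_const s).fun_add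
    ((hpos.fun_add hneg).div_const (s ^ 2))).congr_deriv ?_
  field_simp
  ring

theorem integral_tent_mul_exp {δ : ℝ} (hδ : 0 < δ) {s : ℂ} (hs : s ≠ 0) :
    ∫ x : ℝ, (tent δ x : ℂ) * exp (-(s * x)) = tentLaplace δ s := by
  set f : ℝ → ℂ := fun x => (tent δ x : ℂ) * exp (-(s * x))
  have hcont : Continuous f := by
    have := continuous_tent δ
    fun_prop
  have hsupport : Function.support f ⊆ Set.Ioc (-δ) δ := fun x hx => by
    by_contra hmem
    refine hx ?_
    have : δ ≤ |x| := by
      by_contra! hlt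
      exact hmem ⟨(abs_lt.mp hlt).1, (abs_lt.mp hlt).2.le⟩
    simp [f, tent_eq_zero this]
  have hfold : ∫ x, f x = ∫ x in (0 : ℝ)..δ, (δ - x) * (exp (s * x) + exp (-(s * x))) := by
    have hreflect : ∫ x in (-δ)..0, f x = ∫ x in (0 : ℝ)..δ, f (-x) := by
      simp [intervalIntegral.integral_comp_neg]
    rw [← intervalIntegral.integral_eq_integral_of_support_subset hsupport,
      ← intervalIntegral.integral_add_adjacent_intervals (hcont.intervalIntegrable _ _)
        (hcont.intervalIntegrable 0 δ), hreflect,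
      ← intervalIntegral.integral_add (f := fun x => f (-x))
        ((hcont.comp continuous_neg).intervalIntegrable _ _)
        (hcont.intervalIntegrable 0 δ)]
    refine intervalIntegral.integral_congr fun x hx => ?_
    rw [Set.uIcc_of_le hδ.le] at hx
    have htent : tent δ x = δ - x := by
      rw [tent_of_abs_le (by rw [abs_of_nonneg hx.1]; exact hx.2), abs_of_nonneg hx.1]
    simp only [f, tent_neg, htent]
    push_cast
    ring_nf
  rw [hfold, intervalIntegral.integral_eq_sub_of_hasDerivAt
    (fun x _ => hasDerivAt_tent_mul_exp_antideriv hs δ x)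
    ((by fun_prop : Continuous _).intervalIntegrable _ _), tentLaplace_of_ne_zero hδ.ne' hs]
  simp only [ofReal_zero, mul_zero, neg_zero, exp_zero]
  ring_nf

/-- The integrand `T(s) e^{us}`, for the Laplace transform `T` of `tent δ`, at `s = β + iτ`. -/
noncomputable def tentKernel (δ β u τ : ℝ) : ℂ :=
  tentLaplace δ (β + τ * I) * exp (u * (β + τ * I))

theorem continuous_tentKernel (δ β u : ℝ) : Continuous (tentKernel δ β u) := by
  have := (differentiable_tentLaplace δ).continuous
  unfold tentKernel
  fun_prop

theorem exists_norm_tentKernel_le (δ β u : ℝ) :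
    ∃ C : ℝ, 0 ≤ C ∧ ∀ τ, ‖tentKernel δ β u τ‖ ≤ C * (1 + |τ|) ^ (-2 : ℝ) := by
  obtain ⟨C, hC0, hC⟩ := exists_norm_tentLaplace_le δ |β|
  refine ⟨C * Real.exp (u * β), by positivity, fun τ => ?_⟩
  have := hC (β + τ * I) (by simp)
  rw [tentKernel, norm_mul, norm_exp, mul_right_comm]
  gcongr
  · simpa using this
  · simp

theorem integrable_tentKernel (δ β u : ℝ) : Integrable (tentKernel δ β u) := by
  obtain ⟨C, -, hC⟩ := exists_norm_tentKernel_le δ β u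
  exact ((integrable_one_add_abs_rpow one_lt_two).const_mul C).mono'
    (continuous_tentKernel δ β u).aestronglyMeasurable (.of_forall hC)

theorem fourier_tent_mul_exp {δ β : ℝ} (hδ : 0 < δ) (hβ : β ≠ 0) (ξ : ℝ) :
    FourierTransform.fourier (fun x : ℝ => (tent δ x : ℂ) * exp (-(β * x))) ξ =
      tentLaplace δ (β + (2 * Real.pi * ξ : ℝ) * I) := by
  have hne : (β + (2 * Real.pi * ξ : ℝ) * I : ℂ) ≠ 0 := fun h => hβ (by simpa using congrArg re h)
  rw [Real.fourier_real_eq_integral_exp_smul, ← integral_tent_mul_exp hδ hne]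
  refine integral_congr_ae (.of_forall fun x => ?_)
  simp only [smul_eq_mul]
  rw [mul_left_comm, ← exp_add]
  congr 2
  push_cast
  ring

theorem integral_tentKernel {δ β : ℝ} (hδ : 0 < δ) (hβ : β ≠ 0) (u : ℝ) :
    ∫ τ, tentKernel δ β u τ = 2 * Real.pi * tent δ u := by
  set f : ℝ → ℂ := fun x => (tent δ x : ℂ) * exp (-(β * x))
  have hcont : Continuous f := by
    have := continuous_tent δ
    fun_prop
  have hsupport : HasCompactSupport f := by
    refine HasCompactSupport.intro (isCompact_Icc (a := -δ) (b := δ)) fun x hx => ?_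
    have : δ ≤ |x| := by
      by_contra! hlt
      exact hx (abs_le.mp hlt.le)
    simp [f, tent_eq_zero this]
  have hfourier : FourierTransform.fourier f =
      fun ξ : ℝ => tentLaplace δ (β + (2 * Real.pi * ξ : ℝ) * I) :=
    funext (fourier_tent_mul_exp hδ hβ)
  have hinteg : Integrable (FourierTransform.fourier f) := by
    have := (integrable_tentKernel δ β 0).comp_mul_left' Real.two_pi_pos.ne'
    simpa [hfourier, tentKernel] using this
  have hinv := (hcont.integrable_of_hasCompactSupport hsupport).fourierInv_fourier_eq hinteg
    (hcont.continuousAt (x := u))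
  rw [Real.fourierInv_eq', hfourier] at hinv
  have hscale := Measure.integral_comp_mul_left (tentKernel δ β u) (2 * Real.pi)
  rw [abs_of_pos (inv_pos.mpr Real.two_pi_pos)] at hscale
  have hkernel (ξ : ℝ) : tentKernel δ β u (2 * Real.pi * ξ) = exp (β * u) *
      (exp ((2 * Real.pi * inner ℝ ξ u : ℝ) * I) •
        tentLaplace δ (β + (2 * Real.pi * ξ : ℝ) * I)) := by
    rw [tentKernel, smul_eq_mul, ← mul_assoc, ← exp_add, mul_comm]
    congr 2
    simp only [RCLike.inner_apply, conj_trivial]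
    push_cast
    ring
  simp_rw [hkernel] at hscale
  rw [integral_const_mul, hinv, mul_left_comm, ← exp_add, add_neg_cancel, exp_zero, mul_one,
    real_smul, ofReal_inv,
    eq_inv_mul_iff_mul_eq₀ (ofReal_ne_zero.mpr Real.two_pi_pos.ne')] at hscale
  rw [← hscale]
  push_cast
  rfl

/-! ### The explicit formula -/

theorem integrable_and_hasSum_integral_of_norm_le {α : Type*} {m : MeasurableSpace α}
    {μ : Measure α} {F : ℕ → α → ℂ} {f : α → ℂ} {b : ℕ → ℝ} {G : α → ℝ}
    (hF : ∀ n, AEStronglyMeasurable (F n) μ) (hb : Summable b) (hG : Integrable G μ)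
    (hle : ∀ n x, ‖F n x‖ ≤ b n * G x) (hf : ∀ x, HasSum (F · x) (f x)) :
    Integrable f μ ∧ HasSum (fun n => ∫ x, F n x ∂μ) (∫ x, f x ∂μ) := by
  have hsum (x : α) : Summable fun n => b n * G x := hb.mul_right (G x)
  have hint : Integrable (fun x => ∑' n, b n * G x) μ := by
    simpa only [tsum_mul_right] using hG.const_mul (∑' n, b n)
  refine ⟨hint.mono' (aestronglyMeasurable_of_tendsto_ae atTop
      (fun N => Finset.aestronglyMeasurable_fun_sum (Finset.range N) fun n _ => hF n)
      (.of_forall fun x => (hf x).tendsto_sum_nat)) (.of_forall fun x => ?_),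
    hasSum_integral_of_dominated_convergence (fun n x => b n * G x) hF
      (fun n => .of_forall (hle n)) (.of_forall hsum) hint (.of_forall hf)⟩
  rw [← (hf x).tsum_eq]
  exact tsum_of_norm_bounded (hsum x).hasSum fun n => hle n x

/-- The convolution of `tent δ` with the one-sided exponential `exp(-κ v)`, `v > 0`. -/
noncomputable def expTent (δ κ u : ℝ) : ℝ :=
  ∫ v in Set.Ioi (0 : ℝ), Real.exp (-(κ * v)) * tent δ (u - v)

theorem exp_neg_mul_tentKernel (δ β u v τ : ℝ) :
    exp (-(v * (β + τ * I))) * tentKernel δ β u τ = tentKernel δ β (u - v) τ := by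
  rw [tentKernel, tentKernel, mul_left_comm, ← exp_add]
  congr 2
  push_cast
  ring

theorem integrable_tentKernel_mul_exp (δ u : ℝ) {β κ : ℝ} (hκ : 0 < β + κ) :
    Integrable (Function.uncurry fun τ v : ℝ =>
      tentKernel δ β u τ * exp (-((β + τ * I) + κ) * v))
      (volume.prod (volume.restrict (Set.Ioi 0))) := by
  have := continuous_tentKernel δ β u
  refine ((integrable_tentKernel δ β u).norm.mul_prod
    (integrableOn_exp_mul_Ioi (neg_lt_zero.mpr hκ) 0)).mono'
    (Continuous.aestronglyMeasurable (by fun_prop)) (.of_forall fun p => le_of_eq ?_)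
  rw [Function.uncurry, norm_mul, norm_exp]
  simp

theorem integral_tentKernel_div {δ β κ : ℝ} (hδ : 0 < δ) (hβ : 0 < β) (hκ : 0 < β + κ) (u : ℝ) :
    ∫ τ : ℝ, tentKernel δ β u τ / ((β + τ * I) + κ) = 2 * Real.pi * expTent δ κ u := by
  have hlaplace (τ : ℝ) : tentKernel δ β u τ / ((β + τ * I) + κ) =
      ∫ v in Set.Ioi (0 : ℝ), tentKernel δ β u τ * exp (-((β + τ * I) + κ) * v) := by
    have hre : (-((β + τ * I : ℂ) + κ)).re < 0 := by
      simpa [← sub_eq_add_neg, neg_lt_iff_pos_add] using hκ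
    rw [integral_const_mul, integral_exp_mul_complex_Ioi hre, ofReal_zero, mul_zero, exp_zero,
      neg_div_neg_eq, mul_one_div]
  have hshift (v : ℝ) : ∫ τ : ℝ, tentKernel δ β u τ * exp (-((β + τ * I) + κ) * v) =
      2 * Real.pi * (Real.exp (-(κ * v)) * tent δ (u - v) : ℝ) := by
    have (τ : ℝ) : tentKernel δ β u τ * exp (-((β + τ * I) + κ) * v) =
        exp (-(κ * v)) * tentKernel δ β (u - v) τ := by
      rw [← exp_neg_mul_tentKernel, ← mul_assoc, ← exp_add, mul_comm]
      congr 2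
      ring
    simp_rw [this]
    rw [integral_const_mul, integral_tentKernel hδ hβ.ne']
    push_cast
    ring
  simp_rw [hlaplace]
  rw [integral_integral_swap (integrable_tentKernel_mul_exp δ u hκ)]
  simp_rw [hshift]
  rw [integral_const_mul, integral_complex_ofReal, expTent]

theorem integrable_tentKernel_div (δ u : ℝ) {β κ : ℝ} (hκ : 0 < β + κ) :
    Integrable fun τ : ℝ => tentKernel δ β u τ / ((β + τ * I) + κ) := by
  have hre (τ : ℝ) : ((β + τ * I : ℂ) + κ).re = β + κ := by simp
  refine ((integrable_tentKernel δ β u).norm.mul_const (β + κ)⁻¹).mono'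
    (((continuous_tentKernel δ β u).div (by fun_prop) fun τ h => ?_).aestronglyMeasurable)
    (.of_forall fun τ => ?_)
  · exact hκ.ne' (by rw [← hre τ, h, zero_re])
  · rw [norm_div, div_eq_mul_inv]
    exact mul_le_mul_of_nonneg_left (inv_anti₀ hκ ((hre τ).symm.trans_le (re_le_norm _)))
      (norm_nonneg _)

/-- The `n`-th archimedean term of the explicit formula: the contribution of the pole at
`-2(n + 1)` of the Gamma factor `Γ(z / 2 + 1)`, with its normalising logarithm. -/
noncomputable def archPart (a δ u : ℝ) (n : ℕ) : ℝ :=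
  Real.log (1 + 1 / (n + 1 : ℝ)) / 2 * tent δ u - expTent δ (2 * (n + 1) + 1 / 2 + a) u

/-- The `n`-th term of the sum over prime powers in the explicit formula. -/
noncomputable def primePart (a δ u : ℝ) (n : ℕ) : ℝ :=
  vonMangoldt n * (n : ℝ) ^ (-(1 / 2 + a)) * tent δ (u - Real.log n)

/-- The value of `(2π)⁻¹ ∫ (ξ'/ξ)(1/2 + a + iτ) T(iτ) exp(iuτ) dτ`, with `T` the Laplace transform
of `tent δ`, given by the explicit formula: the terms come from the pole of `ζ` at `1`, the power
of `π`, the Gamma factor and the prime powers. -/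
noncomputable def weilV (a δ u : ℝ) : ℝ :=
  expTent δ (a - 1 / 2) u - Real.log Real.pi / 2 * tent δ u + ∑' n, archPart a δ u n -
    ∑' n, primePart a δ u n

section RightLine

variable {a δ : ℝ}

theorem integral_digammaTerm_mul_tentKernel (hδ : 0 < δ) (ha : a < 3 / 2) (u : ℝ) (n : ℕ) :
    ∫ τ : ℝ, digammaTerm n ((2 + τ * I) / 2) / 2 * tentKernel δ (3 / 2 - a) u τ =
      2 * Real.pi * archPart a δ u n := by
  have hβ : 0 < 3 / 2 - a := sub_pos.mpr ha
  have hκ : 0 < 3 / 2 - a + (2 * (n + 1) + 1 / 2 + a) := by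
    have : (0 : ℝ) ≤ n := n.cast_nonneg
    linarith
  have hsplit (τ : ℝ) : digammaTerm n ((2 + τ * I) / 2) / 2 * tentKernel δ (3 / 2 - a) u τ =
      (Real.log (1 + 1 / (n + 1 : ℝ)) / 2 : ℝ) * tentKernel δ (3 / 2 - a) u τ -
        tentKernel δ (3 / 2 - a) u τ /
          (((3 / 2 - a : ℝ) + τ * I) + (2 * (n + 1) + 1 / 2 + a : ℝ)) := by
    have hden : (((3 / 2 - a : ℝ) + τ * I) + (2 * (n + 1) + 1 / 2 + a : ℝ) : ℂ) =
        2 * (n + 1 + (2 + τ * I) / 2) := by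
      push_cast
      ring
    rw [hden, digammaTerm, mul_comm 2, ← div_div]
    push_cast
    ring
  simp_rw [hsplit]
  rw [integral_sub ((integrable_tentKernel δ _ u).const_mul _) (integrable_tentKernel_div δ u hκ),
    integral_const_mul, integral_tentKernel hδ hβ.ne', integral_tentKernel_div hδ hβ hκ, archPart]
  push_cast
  ring

theorem rpow_half_mul_rpow_neg_two {t : ℝ} (ht : 0 < t) :
    t ^ (1 / 2 : ℝ) * t ^ (-2 : ℝ) = t ^ (-(3 / 2) : ℝ) := by
  rw [← Real.rpow_add ht]
  norm_num

theorem integrable_sqrt_norm_mul_tentKernel (β δ u : ℝ) :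
    Integrable fun τ : ℝ => (1 + √‖((2 + τ * I) / 2 : ℂ)‖) * ‖tentKernel δ β u τ‖ := by
  obtain ⟨C, -, hC⟩ := exists_norm_tentKernel_le δ β u
  have := continuous_tentKernel δ β u
  refine ((integrable_one_add_abs_rpow (r := 3 / 2) (by norm_num)).const_mul (3 * C)).mono'
    (Continuous.aestronglyMeasurable (by fun_prop)) (.of_forall fun τ => ?_)
  have hsqrt : 1 + √‖((2 + τ * I) / 2 : ℂ)‖ ≤ 3 * (1 + |τ|) ^ (1 / 2 : ℝ) := by
    refine (one_add_sqrt_norm_le (by norm_num)).trans ?_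
    have : |((2 + τ * I) / 2 : ℂ).im| ≤ |τ| := by
      simp [abs_div]
    gcongr
  rw [Real.norm_of_nonneg (by positivity), ← rpow_half_mul_rpow_neg_two (by positivity)]
  calc _ ≤ 3 * (1 + |τ|) ^ (1 / 2 : ℝ) * (C * (1 + |τ|) ^ (-2 : ℝ)) :=
        mul_le_mul hsqrt (hC τ) (norm_nonneg _) (by positivity)
    _ = _ := by ring

theorem integrable_and_hasSum_archPart (hδ : 0 < δ) (ha : a < 3 / 2) (u : ℝ) :
    Integrable (fun τ : ℝ =>
      digamma ((2 + τ * I) / 2 + 1) / 2 * tentKernel δ (3 / 2 - a) u τ) ∧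
    HasSum (fun n : ℕ => 2 * Real.pi * (archPart a δ u n : ℂ))
      (∫ τ : ℝ, digamma ((2 + τ * I) / 2 + 1) / 2 * tentKernel δ (3 / 2 - a) u τ) := by
  have hre (τ : ℝ) : ((2 + τ * I) / 2 : ℂ).re = 1 := by simp
  have hcont (n : ℕ) : Continuous fun τ : ℝ => digammaTerm n ((2 + τ * I) / 2) := by
    unfold digammaTerm
    exact continuous_const.sub (continuous_const.div (by fun_prop) fun τ =>
      natCast_add_one_add_ne_zero n (by simp [hre]))
  simp_rw [← integral_digammaTerm_mul_tentKernel hδ ha]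
  refine integrable_and_hasSum_integral_of_norm_le
    (fun n => (((hcont n).div_const 2).mul (continuous_tentKernel _ _ _)).aestronglyMeasurable)
    summable_one_div_succ_rpow_three_halves (integrable_sqrt_norm_mul_tentKernel (3 / 2 - a) δ u)
    (fun n τ => ?_) fun τ => ?_
  · rw [norm_mul, norm_div, norm_ofNat, ← mul_assoc, mul_comm (1 / _ : ℝ)]
    gcongr
    exact (half_le_self (norm_nonneg _)).trans (norm_digammaTerm_le n (by simp [hre]))
  · rw [digamma_add_one (by simp [hre])]
    exact ((summable_digammaTerm (by simp [hre])).hasSum.div_const 2).mul_right _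

theorem term_mul_tentKernel (a δ u τ : ℝ) (n : ℕ) :
    LSeries.term (fun n => (vonMangoldt n : ℂ)) (2 + τ * I) n * tentKernel δ (3 / 2 - a) u τ =
      (vonMangoldt n * (n : ℝ) ^ (-(1 / 2 + a)) : ℝ) *
        tentKernel δ (3 / 2 - a) (u - Real.log n) τ := by
  rcases Nat.eq_zero_or_pos n with rfl | hn
  · simp
  have hn' : (0 : ℝ) < n := Nat.cast_pos.mpr hn
  have hexp : exp (-(Real.log n * (2 + τ * I))) = exp ((Real.log n * -(1 / 2 + a) : ℝ) : ℂ) *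
      exp (-(Real.log n * ((3 / 2 - a : ℝ) + τ * I))) := by
    rw [← exp_add]
    congr 1
    push_cast
    ring
  rw [LSeries.term_of_ne_zero hn.ne', ← exp_neg_mul_tentKernel, ofReal_mul,
    Real.rpow_def_of_pos hn', cpow_def_of_ne_zero (Nat.cast_ne_zero.mpr hn.ne'),
    ← ofReal_natCast n, ← ofReal_log hn'.le, div_eq_mul_inv, ← exp_neg, ofReal_exp, hexp]
  ring

theorem integrable_and_hasSum_primePart (hδ : 0 < δ) (ha : a < 3 / 2) (u : ℝ) :
    Integrable (fun τ : ℝ =>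
      LSeries (fun n => (vonMangoldt n : ℂ)) (2 + τ * I) * tentKernel δ (3 / 2 - a) u τ) ∧
    HasSum (fun n : ℕ => 2 * Real.pi * (primePart a δ u n : ℂ))
      (∫ τ : ℝ, LSeries (fun n => (vonMangoldt n : ℂ)) (2 + τ * I) *
        tentKernel δ (3 / 2 - a) u τ) := by
  have hterm (n : ℕ) : ∫ τ : ℝ, LSeries.term (fun n => (vonMangoldt n : ℂ)) (2 + τ * I) n *
      tentKernel δ (3 / 2 - a) u τ = 2 * Real.pi * (primePart a δ u n : ℂ) := by
    simp_rw [term_mul_tentKernel]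
    rw [integral_const_mul, integral_tentKernel hδ (sub_pos.mpr ha).ne', primePart]
    push_cast
    ring
  simp_rw [← hterm]
  refine integrable_and_hasSum_integral_of_norm_le (fun n => ?_)
    (ArithmeticFunction.LSeriesSummable_vonMangoldt (s := 2) (by simp)).norm
    (integrable_tentKernel δ (3 / 2 - a) u).norm (fun n τ => ?_) fun τ => ?_
  · simp_rw [term_mul_tentKernel]
    exact ((integrable_tentKernel _ _ _).const_mul _).aestronglyMeasurable
  · rw [norm_mul]
    gcongr
    exact LSeries.norm_term_le_of_re_le_re _ (by simp) n
  · exact (ArithmeticFunction.LSeriesSummable_vonMangoldt (by simp)).hasSum.mul_right _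

theorem summable_of_hasSum_two_pi_mul {f : ℕ → ℝ} {c : ℂ}
    (h : HasSum (fun n => 2 * Real.pi * (f n : ℂ)) c) : Summable f :=
  summable_ofReal.mp ((summable_mul_left_iff (by simp [Real.pi_ne_zero])).mp h.summable)

theorem summable_archPart (hδ : 0 < δ) (ha : a < 3 / 2) (u : ℝ) : Summable (archPart a δ u) :=
  summable_of_hasSum_two_pi_mul (integrable_and_hasSum_archPart hδ ha u).2

theorem summable_primePart (hδ : 0 < δ) (ha : a < 3 / 2) (u : ℝ) : Summable (primePart a δ u) :=
  summable_of_hasSum_two_pi_mul (integrable_and_hasSum_primePart hδ ha u).2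

theorem integral_logDeriv_mul_tentKernel_right (hδ : 0 < δ) (ha : a < 3 / 2) (u : ℝ) :
    ∫ τ : ℝ, logDeriv riemannXi (2 + τ * I) * tentKernel δ (3 / 2 - a) u τ =
      2 * Real.pi * (weilV a δ u : ℝ) := by
  have hβ : 0 < 3 / 2 - a := sub_pos.mpr ha
  have hκ : 0 < 3 / 2 - a + (a - 1 / 2) := by linarith
  have hK := (integrable_tentKernel δ (3 / 2 - a) u).const_mul ((Real.log Real.pi / 2 : ℝ) : ℂ)
  have hpole := integrable_tentKernel_div δ u hκ
  obtain ⟨harch, hsum_arch⟩ := integrable_and_hasSum_archPart hδ ha u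
  obtain ⟨hprime, hsum_prime⟩ := integrable_and_hasSum_primePart hδ ha u
  have hsplit (τ : ℝ) : logDeriv riemannXi (2 + τ * I) * tentKernel δ (3 / 2 - a) u τ =
      tentKernel δ (3 / 2 - a) u τ / (((3 / 2 - a : ℝ) + τ * I) + (a - 1 / 2 : ℝ)) -
      (Real.log Real.pi / 2 : ℝ) * tentKernel δ (3 / 2 - a) u τ +
      digamma ((2 + τ * I) / 2 + 1) / 2 * tentKernel δ (3 / 2 - a) u τ -
      LSeries (fun n => (vonMangoldt n : ℂ)) (2 + τ * I) * tentKernel δ (3 / 2 - a) u τ := by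
    have hden : (((3 / 2 - a : ℝ) + τ * I) + (a - 1 / 2 : ℝ) : ℂ) = 2 + τ * I - 1 := by
      push_cast
      ring
    rw [logDeriv_riemannXi (by simp), hden]
    ring
  simp_rw [hsplit]
  rw [integral_sub ((hpole.sub' hK).fun_add harch) hprime,
    integral_add (hpole.sub' hK) harch,
    integral_sub hpole hK, integral_const_mul, integral_tentKernel hδ hβ.ne',
    integral_tentKernel_div hδ hβ hκ, ← hsum_arch.tsum_eq, ← hsum_prime.tsum_eq,
    tsum_mul_left, tsum_mul_left, ← ofReal_tsum, ← ofReal_tsum, weilV]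
  push_cast
  ring

end RightLine

/-! ### Positive semidefiniteness -/

section CriticalLine

variable {a δ : ℝ}

theorem exists_norm_logDeriv_mul_tentLaplace_le (hRH : RiemannHypothesis) (ha : 0 < a)
    (δ u : ℝ) : ∃ C : ℝ, ∀ s : ℂ, 0 ≤ s.re → s.re ≤ 3 / 2 - a →
      ‖logDeriv riemannXi (1 / 2 + a + s) * (tentLaplace δ s * exp (u * s))‖ ≤
        C * (1 + |s.im|) ^ (-(3 / 2) : ℝ) := by
  obtain ⟨C₁, hC₁, hxi⟩ := exists_norm_logDeriv_riemannXi_le_rpow hRH ha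
  obtain ⟨C₂, -, hlaplace⟩ := exists_norm_tentLaplace_le δ (3 / 2 - a)
  refine ⟨C₁ * (C₂ * Real.exp (|u| * (3 / 2 - a))), fun s hs₀ hs₁ => ?_⟩
  have hre : |s.re| ≤ 3 / 2 - a := by rwa [abs_of_nonneg hs₀]
  have hxi_s := hxi (1 / 2 + a + s) (by simpa using hs₀)
    (by simp only [add_re, ofReal_re, one_div, inv_re, re_ofNat]; norm_num; linarith)
  simp only [add_im, one_div, inv_im, im_ofNat, ofReal_im] at hxi_s
  rw [norm_mul, norm_mul, ← rpow_half_mul_rpow_neg_two (by positivity)]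
  calc _ ≤ (C₁ * (1 + |s.im|) ^ (1 / 2 : ℝ)) *
        ((C₂ * (1 + |s.im|) ^ (-2 : ℝ)) * Real.exp (|u| * (3 / 2 - a))) := by
        gcongr
        · simpa using hxi_s
        · exact (norm_nonneg _).trans (hlaplace s hre)
        · exact hlaplace s hre
        · exact norm_exp_ofReal_mul_le hre
    _ = _ := by ring

theorem integrable_and_integral_logDeriv_mul_tentLaplace (hRH : RiemannHypothesis) (hδ : 0 < δ)
    (ha : 0 < a) (ha' : a < 3 / 2) (u : ℝ) :
    Integrable (fun τ : ℝ => logDeriv riemannXi (1 / 2 + a + τ * I) *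
      (tentLaplace δ (τ * I) * exp (u * (τ * I)))) ∧
    ∫ τ : ℝ, logDeriv riemannXi (1 / 2 + a + τ * I) * (tentLaplace δ (τ * I) * exp (u * (τ * I))) =
      2 * Real.pi * (weilV a δ u : ℝ) := by
  set f : ℂ → ℂ := fun s =>
    logDeriv riemannXi (1 / 2 + a + s) * (tentLaplace δ s * exp (u * s))
  obtain ⟨C, hC⟩ := exists_norm_logDeriv_mul_tentLaplace_le hRH ha δ u
  have hdiff : DifferentiableOn ℂ f {s | 0 ≤ s.re} := fun s (hs : 0 ≤ s.re) => by
    have hxi : DifferentiableAt ℂ (logDeriv riemannXi) (1 / 2 + a + s) :=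
      differentiableAt_logDeriv_riemannXi hRH
        (by simpa [add_assoc] using add_pos_of_pos_of_nonneg ha hs)
    have := differentiable_tentLaplace δ
    exact ((hxi.comp s (by fun_prop : DifferentiableAt ℂ (fun s : ℂ => 1 / 2 + (a : ℂ) + s) s)).mul
      (by fun_prop)).differentiableWithinAt
  constructor
  · refine ((integrable_one_add_abs_rpow (r := 3 / 2) (by norm_num)).const_mul C).mono'
      (Continuous.aestronglyMeasurable ?_) (.of_forall fun τ => ?_)
    · exact hdiff.continuousOn.comp_continuous (f := fun τ : ℝ => (τ : ℂ) * I) (by fun_prop)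
        fun τ => by simp
    · simpa using hC (τ * I) (by simp) (by simpa using ha'.le)
  · have hshift := integral_vertical_eq (f := f) (sub_pos.mpr ha').le
      (by norm_num : (1 : ℝ) < 3 / 2) (hdiff.mono fun s hs => hs.1) fun s hs => hC s hs.1 hs.2
    simp only [f, ofReal_zero, zero_add] at hshift
    rw [hshift, ← integral_logDeriv_mul_tentKernel_right hδ ha' u]
    congr 1 with τ
    rw [tentKernel]
    congr 2
    push_cast
    ring

theorem sum_sum_mul_exp_sub_mul_I {ι : Type*} (s : Finset ι) (c u : ι → ℝ) (τ : ℝ) :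
    ∑ i ∈ s, ∑ j ∈ s, ((c i * c j : ℝ) : ℂ) * exp ((u i - u j : ℝ) * (τ * I)) =
      (‖∑ i ∈ s, c i * exp (u i * τ * I)‖ ^ 2 : ℝ) := by
  rw [← normSq_eq_norm_sq, ← mul_conj, map_sum, Finset.sum_mul_sum]
  refine Finset.sum_congr rfl fun i _ => Finset.sum_congr rfl fun j _ => ?_
  have hexp : exp ((u i - u j : ℝ) * (τ * I)) = exp (u i * τ * I) * exp (conj (u j * τ * I)) := by
    rw [← exp_add]
    congr 1
    simp only [map_mul, conj_ofReal, conj_I]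
    push_cast
    ring
  rw [hexp, map_mul conj (c j : ℂ), conj_ofReal, ← exp_conj]
  push_cast
  ring

theorem weilV_posSemidef (hRH : RiemannHypothesis) (hδ : 0 < δ) (ha : 0 < a) (ha' : a < 3 / 2)
    {ι : Type*} (s : Finset ι) (c u : ι → ℝ) :
    0 ≤ ∑ i ∈ s, ∑ j ∈ s, c i * c j * weilV a δ (u i - u j) := by
  set g : ℝ → ℂ := fun τ => ∑ i ∈ s, ∑ j ∈ s, ((c i * c j : ℝ) : ℂ) *
    (logDeriv riemannXi (1 / 2 + a + τ * I) *
      (tentLaplace δ (τ * I) * exp ((u i - u j : ℝ) * (τ * I)))) with hg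
  have hformula (v : ℝ) :=
    integrable_and_integral_logDeriv_mul_tentLaplace hRH hδ ha ha' v
  have hinner (i : ι) := integrable_finsetSum s fun j _ =>
    (hformula (u i - u j)).1.const_mul ((c i * c j : ℝ) : ℂ)
  have hinteg : Integrable g := integrable_finsetSum _ fun i _ => hinner i
  have hint : ∫ τ, g τ =
      (2 * Real.pi * ∑ i ∈ s, ∑ j ∈ s, c i * c j * weilV a δ (u i - u j) : ℝ) := by
    rw [integral_finsetSum _ fun i _ => hinner i]
    simp_rw [integral_finsetSum _ fun _ _ => (hformula _).1.const_mul _, integral_const_mul,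
      (hformula _).2]
    push_cast
    simp_rw [Finset.mul_sum]
    refine Finset.sum_congr rfl fun i _ => Finset.sum_congr rfl fun j _ => ?_
    ring
  have hfactor (τ : ℝ) : g τ = logDeriv riemannXi (1 / 2 + a + τ * I) *
      ((δ * Real.sinc (δ * τ / 2)) ^ 2 * ‖∑ i ∈ s, c i * exp (u i * τ * I)‖ ^ 2 : ℝ) := by
    rw [ofReal_mul, ← tentLaplace_mul_I, ← sum_sum_mul_exp_sub_mul_I]
    simp_rw [hg, Finset.mul_sum]
    refine Finset.sum_congr rfl fun i _ => Finset.sum_congr rfl fun j _ => ?_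
    ring
  have hre : 0 ≤ ∫ τ, (g τ).re := integral_nonneg fun τ => by
    rw [Pi.zero_apply, hfactor, re_mul_ofReal]
    exact mul_nonneg (re_logDeriv_riemannXi_nonneg hRH (by simpa using ha)) (by positivity)
  rw [show ∫ τ, (g τ).re = (∫ τ, g τ).re from integral_re hinteg, hint, ofReal_re] at hre
  exact nonneg_of_mul_nonneg_right hre (by positivity)

/-- The symmetrisation `V(u) + V(-u)` of `weilV`. -/
noncomputable def weilW (a δ u : ℝ) : ℝ := weilV a δ u + weilV a δ (-u)

theorem weilW_neg (a δ u : ℝ) : weilW a δ (-u) = weilW a δ u := by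
  rw [weilW, weilW, neg_neg, add_comm]

theorem weilW_posSemidef (hRH : RiemannHypothesis) (hδ : 0 < δ) (ha : 0 < a) (ha' : a < 3 / 2)
    {ι : Type*} (s : Finset ι) (c u : ι → ℝ) :
    0 ≤ ∑ i ∈ s, ∑ j ∈ s, c i * c j * weilW a δ (u i - u j) := by
  have hneg := weilV_posSemidef hRH hδ ha ha' s c fun i => -u i
  simp only [neg_sub_neg] at hneg
  simp only [weilW, mul_add, Finset.sum_add_distrib, neg_sub]
  exact add_nonneg (weilV_posSemidef hRH hδ ha ha' s c u) hneg

end CriticalLine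

/-! ### Bounds for the symmetrised functional -/

theorem tent_zero {δ : ℝ} (hδ : 0 ≤ δ) : tent δ 0 = δ := by
  rw [tent_of_abs_le (by simpa), abs_zero, sub_zero]

theorem le_tent_of_pos (δ : ℝ) {x : ℝ} (hx : 0 < x) : δ - x ≤ tent δ x :=
  (le_max_left _ _).trans_eq' (by rw [abs_of_pos hx])

theorem integrable_exp_mul_tent (δ κ u : ℝ) :
    Integrable fun v : ℝ => Real.exp (-(κ * v)) * tent δ (u - v) := by
  have := continuous_tent δ
  refine Continuous.integrable_of_hasCompactSupport (by fun_prop)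
    (.intro (isCompact_Icc (a := u - δ) (b := u + δ)) fun v hv => ?_)
  rw [tent_eq_zero, mul_zero]
  by_contra! habs
  rw [abs_lt] at habs
  exact hv ⟨by linarith, by linarith⟩

theorem integrable_tent_sub (δ u : ℝ) : Integrable fun v : ℝ => tent δ (u - v) := by
  simpa using integrable_exp_mul_tent δ 0 u

theorem setIntegral_tent {δ : ℝ} (hδ : 0 ≤ δ) : ∫ v in Set.Ioi (0 : ℝ), tent δ v = δ ^ 2 / 2 := by
  have htail : ∫ v in Set.Ioi (0 : ℝ), tent δ v = ∫ v in Set.Ioc 0 δ, tent δ v :=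
    setIntegral_eq_of_subset_of_forall_sdiff_eq_zero measurableSet_Ioi (fun v hv => hv.1)
      fun v hv => tent_eq_zero <| by
        rw [abs_of_pos hv.1]
        by_contra! hlt
        exact hv.2 ⟨hv.1, hlt.le⟩
  have hlinear : ∫ v in Set.Ioc 0 δ, tent δ v = ∫ v in (0 : ℝ)..δ, (δ - v) := by
    rw [intervalIntegral.integral_of_le hδ]
    refine setIntegral_congr_fun measurableSet_Ioc fun v hv => ?_
    rw [tent_of_abs_le (by rw [abs_of_pos hv.1]; exact hv.2), abs_of_pos hv.1]
  rw [htail, hlinear, intervalIntegral.integral_sub (by simp) (by simp),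
    intervalIntegral.integral_const, integral_id, smul_eq_mul]
  ring

theorem integral_tent {δ : ℝ} (hδ : 0 ≤ δ) : ∫ v, tent δ v = δ ^ 2 := by
  have habs (x : ℝ) : tent δ |x| = tent δ x := by rw [tent, abs_abs, tent]
  rw [← integral_congr_ae (.of_forall habs), integral_comp_abs, setIntegral_tent hδ]
  ring

theorem setIntegral_tent_sub {δ u : ℝ} (hδ : 0 ≤ δ) (hu : δ ≤ u) :
    ∫ v in Set.Ioi (0 : ℝ), tent δ (u - v) = δ ^ 2 := by
  rw [← integral_tent hδ, ← integral_sub_left_eq_self (tent δ) volume u]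
  refine setIntegral_eq_integral_of_forall_compl_eq_zero fun v hv => tent_eq_zero ?_
  have : v ≤ 0 := by simpa using hv
  rw [abs_of_nonneg] <;> linarith

theorem expTent_nonneg (δ κ u : ℝ) : 0 ≤ expTent δ κ u :=
  setIntegral_nonneg measurableSet_Ioi fun _ _ => mul_nonneg (Real.exp_pos _).le (tent_nonneg _ _)

theorem expTent_eq_zero {δ u : ℝ} (κ : ℝ) (hu : u ≤ -δ) : expTent δ κ u = 0 :=
  setIntegral_eq_zero_of_forall_eq_zero fun v (hv : 0 < v) => by
    rw [tent_eq_zero, mul_zero]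
    exact (by linarith : δ ≤ -(u - v)).trans (neg_le_abs _)

theorem expTent_le {δ κ u E : ℝ} (hδ : 0 ≤ δ) (hu : δ ≤ u)
    (hE : ∀ v, |u - v| ≤ δ → Real.exp (-(κ * v)) ≤ E) : expTent δ κ u ≤ E * δ ^ 2 := by
  rw [← setIntegral_tent_sub hδ hu, ← integral_const_mul]
  refine setIntegral_mono (integrable_exp_mul_tent δ κ u).integrableOn
    ((integrable_tent_sub δ u).const_mul E).integrableOn fun v => ?_
  rcases le_total |u - v| δ with h | h
  · exact mul_le_mul_of_nonneg_right (hE v h) (tent_nonneg _ _)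
  · simp [tent_eq_zero h]

theorem le_expTent {δ κ u E : ℝ} (hδ : 0 ≤ δ) (hu : δ ≤ u)
    (hE : ∀ v, |u - v| ≤ δ → E ≤ Real.exp (-(κ * v))) : E * δ ^ 2 ≤ expTent δ κ u := by
  rw [← setIntegral_tent_sub hδ hu, ← integral_const_mul]
  refine setIntegral_mono ((integrable_tent_sub δ u).const_mul E).integrableOn
    (integrable_exp_mul_tent δ κ u).integrableOn fun v => ?_
  rcases le_total |u - v| δ with h | h
  · exact mul_le_mul_of_nonneg_right (hE v h) (tent_nonneg _ _)
  · simp [tent_eq_zero h]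

theorem expTent_zero_le {δ κ : ℝ} (hδ : 0 ≤ δ) (hκ : -(1 / 2) ≤ κ) :
    expTent δ κ 0 ≤ Real.exp (δ / 2) * (δ ^ 2 / 2) := by
  have hint := integrable_tent_sub δ 0
  rw [← setIntegral_tent hδ, ← integral_const_mul, expTent]
  simp only [zero_sub, tent_neg] at hint ⊢
  refine setIntegral_mono_on
    (by simpa [tent_neg] using (integrable_exp_mul_tent δ κ 0).integrableOn)
    (hint.const_mul _).integrableOn measurableSet_Ioi fun v (hv : 0 < v) => ?_
  rcases le_total |v| δ with h | h
  · rw [abs_of_pos hv] at h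
    exact mul_le_mul_of_nonneg_right (Real.exp_le_exp.mpr (by nlinarith)) (tent_nonneg _ _)
  · simp [tent_eq_zero h]

theorem le_expTent_zero (δ : ℝ) {κ : ℝ} (hκ : 0 < κ) :
    δ / κ - 1 / κ ^ 2 ≤ expTent δ κ 0 := by
  have hexp : IntegrableOn (fun v : ℝ => Real.exp (-(κ * v))) (Set.Ioi 0) := by
    simpa using integrableOn_exp_mul_Ioi (neg_lt_zero.mpr hκ) 0
  have hmul : IntegrableOn (fun v : ℝ => v * Real.exp (-(κ * v))) (Set.Ioi 0) := by
    simpa using integrableOn_rpow_mul_exp_neg_mul_rpow (p := 1) (s := 1) (by norm_num) one_pos hκ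
  have hint_exp : ∫ v in Set.Ioi (0 : ℝ), Real.exp (-(κ * v)) = 1 / κ := by
    simpa using integral_exp_mul_Ioi (neg_lt_zero.mpr hκ) 0
  have hint_mul : ∫ v in Set.Ioi (0 : ℝ), v * Real.exp (-(κ * v)) = 1 / κ ^ 2 := by
    have := Real.integral_rpow_mul_exp_neg_mul_Ioi two_pos hκ
    norm_num at this
    simpa using this
  calc δ / κ - 1 / κ ^ 2
      = ∫ v in Set.Ioi (0 : ℝ), (δ * Real.exp (-(κ * v)) - v * Real.exp (-(κ * v))) := by
        rw [integral_sub (hexp.const_mul δ) hmul, integral_const_mul, hint_exp, hint_mul,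
          mul_one_div]
    _ ≤ expTent δ κ 0 := by
        refine setIntegral_mono_on ((hexp.const_mul δ).sub hmul)
          (integrable_exp_mul_tent δ κ 0).integrableOn measurableSet_Ioi fun v (hv : 0 < v) => ?_
        rw [← sub_mul, mul_comm, zero_sub, tent_neg]
        exact mul_le_mul_of_nonneg_left (le_tent_of_pos δ hv) (Real.exp_pos _).le

theorem primePart_nonneg (a δ u : ℝ) (n : ℕ) : 0 ≤ primePart a δ u n :=
  mul_nonneg (mul_nonneg ArithmeticFunction.vonMangoldt_nonneg (Real.rpow_nonneg n.cast_nonneg _))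
    (tent_nonneg _ _)

section Weil

variable {a δ u : ℝ}

theorem weilV_of_le_abs (hu : δ ≤ |u|) :
    weilV a δ u = expTent δ (a - 1 / 2) u -
      ∑' n : ℕ, expTent δ (2 * (n + 1) + 1 / 2 + a) u - ∑' n, primePart a δ u n := by
  simp only [weilV, archPart, tent_eq_zero hu, mul_zero, zero_sub, sub_zero, tsum_neg,
    ← sub_eq_add_neg]

theorem weilV_eq_zero (hδ : 0 ≤ δ) (hu : u ≤ -δ) : weilV a δ u = 0 := by
  have hprime (n : ℕ) : primePart a δ u n = 0 := by
    have := Real.log_natCast_nonneg n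
    rw [primePart, tent_eq_zero, mul_zero]
    rw [abs_of_nonpos] <;> linarith
  rw [weilV_of_le_abs (by rw [abs_of_nonpos] <;> linarith)]
  simp [hprime, expTent_eq_zero _ hu]

theorem weilW_of_le (hδ : 0 ≤ δ) (hu : δ ≤ u) :
    weilW a δ u = expTent δ (a - 1 / 2) u -
      ∑' n : ℕ, expTent δ (2 * (n + 1) + 1 / 2 + a) u - ∑' n, primePart a δ u n := by
  rw [weilW, weilV_eq_zero hδ (neg_le_neg hu), add_zero,
    weilV_of_le_abs (hu.trans (le_abs_self u))]

theorem weilW_abs (a δ u : ℝ) : weilW a δ |u| = weilW a δ u := by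
  rcases abs_choice u with h | h <;> rw [h]
  exact weilW_neg a δ u

theorem weilW_le (hδ : 0 ≤ δ) (ha : 0 ≤ a) (hu : δ ≤ |u|) :
    weilW a δ u ≤ Real.exp ((|u| + δ) / 2) * δ ^ 2 := by
  have harch : 0 ≤ ∑' n : ℕ, expTent δ (2 * (n + 1) + 1 / 2 + a) |u| :=
    tsum_nonneg fun n => expTent_nonneg _ _ _
  have hprime : 0 ≤ ∑' n, primePart a δ |u| n := tsum_nonneg (primePart_nonneg a δ |u|)
  have hpole : expTent δ (a - 1 / 2) |u| ≤ Real.exp ((|u| + δ) / 2) * δ ^ 2 :=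
    expTent_le hδ hu fun v hv => Real.exp_le_exp.mpr (by nlinarith [abs_le.mp hv])
  rw [← weilW_abs, weilW_of_le hδ hu]
  linarith

theorem archPart_zero_le_log (hδ : 0 ≤ δ) (n : ℕ) :
    archPart a δ 0 n ≤ δ / 2 * Real.log (1 + 1 / (n + 1 : ℝ)) := by
  rw [archPart, tent_zero hδ]
  linarith [expTent_nonneg δ (2 * (n + 1) + 1 / 2 + a) 0]

theorem archPart_zero_le (hδ : 0 ≤ δ) (ha : 0 ≤ a) (ha' : a ≤ 1 / 2) {n : ℕ} (hn : 0 < n) :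
    archPart a δ 0 n ≤ (1 + δ) / 4 * (1 / (n : ℝ) - 1 / (n + 1 : ℝ)) := by
  have hn' : (0 : ℝ) < n := Nat.cast_pos.mpr hn
  rw [archPart, tent_zero hδ]
  obtain ⟨κ, hκ_def⟩ : ∃ κ : ℝ, 2 * (n + 1) + 1 / 2 + a = κ := ⟨_, rfl⟩
  have hκ : 2 * (n + 1) ≤ κ := by linarith
  have hκ' : κ ≤ 2 * (n + 1) + 1 := by linarith
  rw [hκ_def]
  have hκ0 : 0 < κ := by linarith
  have hpole := le_expTent_zero δ hκ0
  have hlog : Real.log (1 + 1 / (n + 1 : ℝ)) ≤ 1 / (n + 1) := by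
    linarith [Real.log_le_sub_one_of_pos (by positivity : (0 : ℝ) < 1 + 1 / (n + 1))]
  have hlinear : 1 / (n + 1 : ℝ) / 2 - 1 / κ ≤ (1 / (n : ℝ) - 1 / (n + 1 : ℝ)) / 4 := by
    have : 1 / (2 * (n + 1) + 1 : ℝ) ≤ 1 / κ := by gcongr
    have : 1 / (n + 1 : ℝ) / 2 - 1 / (2 * (n + 1) + 1) ≤ (1 / (n : ℝ) - 1 / (n + 1 : ℝ)) / 4 := by
      field_simp
      nlinarith
    linarith
  have hsquare : 1 / κ ^ 2 ≤ (1 / (n : ℝ) - 1 / (n + 1 : ℝ)) / 4 := by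
    have : 1 / κ ^ 2 ≤ 1 / (2 * (n + 1 : ℝ)) ^ 2 := by gcongr
    refine this.trans ?_
    field_simp
    linarith
  have := mul_le_mul_of_nonneg_left hlinear hδ
  have := mul_le_mul_of_nonneg_left hlog hδ
  rw [div_eq_mul_one_div] at hpole
  linarith

theorem tsum_archPart_zero_le (hδ : 0 < δ) (ha : 0 ≤ a) (ha' : a ≤ 1 / 2) {M : ℕ} (hM : 0 < M) :
    ∑' n, archPart a δ 0 n ≤ δ / 2 * Real.log (M + 1) + (1 + δ) / 4 * (1 / M) := by
  have hsummable : Summable (archPart a δ 0) := summable_archPart hδ (by linarith) 0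
  rw [← hsummable.sum_add_tsum_nat_add M]
  refine add_le_add ?_ (((summable_nat_add_iff M).mpr hsummable).tsum_le_of_sum_range_le
    fun K => ?_)
  · rw [← sum_log_one_add_inv, Finset.mul_sum]
    exact Finset.sum_le_sum fun n _ => archPart_zero_le_log hδ.le n
  · calc ∑ k ∈ Finset.range K, archPart a δ 0 (k + M)
        ≤ ∑ k ∈ Finset.range K,
            (1 + δ) / 4 * (1 / ((k + M : ℕ) : ℝ) - 1 / ((k + 1 + M : ℕ) : ℝ)) :=
          Finset.sum_le_sum fun k _ => by
            have := archPart_zero_le hδ.le ha ha' (Nat.add_pos_right k hM)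
            rwa [add_right_comm, Nat.cast_add_one]
      _ = (1 + δ) / 4 * (1 / M - 1 / ((K + M : ℕ) : ℝ)) := by
          rw [← Finset.mul_sum, Finset.sum_range_sub' fun k => 1 / ((k + M : ℕ) : ℝ), zero_add]
      _ ≤ _ := by
          gcongr
          exact sub_le_self _ (by positivity)

theorem weilW_zero_le (hδ : 0 < δ) (ha : 0 ≤ a) (ha' : a ≤ 1 / 2) :
    weilW a δ 0 ≤ δ * (δ * Real.exp (δ / 2) + Real.log (1 / δ + 2) + (1 + δ) / 2 -
      Real.log Real.pi) := by
  set M := ⌈1 / δ⌉₊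
  have hM : 0 < M := Nat.ceil_pos.mpr (by positivity)
  have hMδ : 1 / δ ≤ M := Nat.le_ceil _
  have harch := tsum_archPart_zero_le hδ ha ha' hM
  have hprime : 0 ≤ ∑' n, primePart a δ 0 n := tsum_nonneg (primePart_nonneg a δ 0)
  have hpole := expTent_zero_le (κ := a - 1 / 2) hδ.le (by linarith)
  have hlog : δ / 2 * Real.log (M + 1) ≤ δ / 2 * Real.log (1 / δ + 2) := by
    have : (M : ℝ) < 1 / δ + 1 := Nat.ceil_lt_add_one (by positivity)
    exact mul_le_mul_of_nonneg_left (Real.log_le_log (by positivity) (by linarith)) (by positivity)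
  have hinv : (1 + δ) / 4 * (1 / (M : ℝ)) ≤ (1 + δ) / 4 * δ := by
    gcongr
    exact (one_div_le (by positivity) hδ).mpr hMδ
  rw [weilW, neg_zero, weilV, tent_zero hδ.le]
  linarith

theorem tsum_expTent_le (hδ : 0 ≤ δ) (ha : 0 ≤ a) (hu : 1 + δ ≤ u) :
    ∑' n : ℕ, expTent δ (2 * (n + 1) + 1 / 2 + a) u ≤ δ ^ 2 / 5 := by
  have hexp : Real.exp (-2) ≤ 1 / 6 := by
    rw [Real.exp_neg, ← one_div, show (2 : ℝ) = 1 + 1 by norm_num, Real.exp_add]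
    exact one_div_le_one_div_of_le (by norm_num) (by nlinarith [Real.exp_one_gt_d9])
  have hterm (n : ℕ) :
      expTent δ (2 * (n + 1) + 1 / 2 + a) u ≤ (1 / 6 : ℝ) ^ n * (1 / 6 * δ ^ 2) := by
    rw [← mul_assoc, ← pow_succ]
    refine expTent_le hδ (by linarith) fun v hv => ?_
    have hv1 : 1 ≤ v := by linarith [abs_le.mp hv]
    calc Real.exp (-((2 * (n + 1) + 1 / 2 + a) * v)) ≤ Real.exp ((n + 1 : ℕ) * (-2)) := by
          refine Real.exp_le_exp.mpr ?_
          push_cast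
          nlinarith [(n.cast_nonneg : (0 : ℝ) ≤ n)]
      _ = Real.exp (-2) ^ (n + 1) := Real.exp_nat_mul _ _
      _ ≤ _ := by gcongr
  have hgeom := (hasSum_geometric_of_lt_one (r := (1 / 6 : ℝ)) (by norm_num)
    (by norm_num)).mul_right (1 / 6 * δ ^ 2)
  calc _ ≤ ∑' n : ℕ, (1 / 6 : ℝ) ^ n * (1 / 6 * δ ^ 2) :=
        (hgeom.summable.of_nonneg_of_le (fun n => expTent_nonneg _ _ _) hterm).tsum_le_tsum hterm
          hgeom.summable
    _ = δ ^ 2 / 5 := by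
        rw [hgeom.tsum_eq]
        ring

theorem le_weilW (hδ : 0 ≤ δ) (ha : 0 ≤ a) (ha' : a ≤ 1 / 2) (hu : 1 + δ ≤ u) :
    δ ^ 2 * (Real.exp ((1 / 2 - a) * (u - δ)) - 1 / 5) - ∑' n, primePart a δ u n ≤
      weilW a δ u := by
  have hpole : Real.exp ((1 / 2 - a) * (u - δ)) * δ ^ 2 ≤ expTent δ (a - 1 / 2) u :=
    le_expTent hδ (by linarith) fun v hv => Real.exp_le_exp.mpr (by nlinarith [abs_le.mp hv])
  have := tsum_expTent_le hδ ha hu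
  rw [weilW_of_le hδ (by linarith)]
  linarith

end Weil

/-! ### Primes near well-spaced points -/

theorem log_le_mul_sqrt {x : ℝ} (hx : 2 ^ 24 ≤ x) : Real.log x ≤ 0.0041 * √x := by
  have hexp : Real.exp 2 ≤ 2 ^ 24 := by
    rw [show (2 : ℝ) = 1 + 1 by norm_num, Real.exp_add]
    nlinarith [Real.exp_pos 1, Real.exp_one_lt_d9]
  have hsqrt : √((2 : ℝ) ^ 24) = 4096 := by
    rw [show (2 : ℝ) ^ 24 = 4096 ^ 2 by norm_num, Real.sqrt_sq (by norm_num)]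
  have hanti : Real.log x / √x ≤ Real.log (2 ^ 24) / √(2 ^ 24) :=
    Real.log_div_sqrt_antitoneOn hexp (hexp.trans hx) hx
  rw [hsqrt, Real.log_pow, div_le_iff₀ (Real.sqrt_pos.mpr (by linarith))] at hanti
  refine hanti.trans (mul_le_mul_of_nonneg_right ?_ (Real.sqrt_nonneg x))
  rw [div_le_iff₀ (by norm_num)]
  push_cast
  linarith [Real.log_two_lt_d9]

theorem sixteen_le_log {x : ℝ} (hx : 2 ^ 24 ≤ x) : 16 ≤ Real.log x := by
  have := Real.log_le_log (by norm_num) hx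
  rw [Real.log_pow] at this
  push_cast at this
  linarith [Real.log_two_gt_d9]

theorem sqrt_div_four {x : ℝ} (hx : 0 ≤ x) : √(x / 4) = √x / 2 := by
  rw [Real.sqrt_div hx, show (4 : ℝ) = 2 ^ 2 by norm_num, Real.sqrt_sq zero_le_two]

/-- No odd prime has its logarithm within `δ` of `v`. -/
def AvoidsOddPrimes (δ v : ℝ) : Prop :=
  ∀ p : ℕ, p.Prime → Odd p → δ ≤ |v - Real.log p|

section PrimePart

variable {a δ x u : ℝ} {n : ℕ}

theorem primePart_eq_zero_of_lt (hx : 0 < x) (hu : u + δ ≤ Real.log x) (hn : x < n) :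
    primePart a δ u n = 0 := by
  have := Real.log_le_log hx hn.le
  rw [primePart, tent_eq_zero, mul_zero]
  exact (by linarith : δ ≤ -(u - Real.log n)).trans (neg_le_abs _)

theorem primePart_eq_zero_of_le (hu : Real.log x + δ ≤ u) (hn : n ≤ x) :
    primePart a δ u n = 0 := by
  rcases n.eq_zero_or_pos with rfl | hn0
  · simp [primePart]
  · have := Real.log_le_log (Nat.cast_pos.mpr hn0) hn
    rw [primePart, tent_eq_zero, mul_zero]
    exact (by linarith : δ ≤ u - Real.log n).trans (le_abs_self _)

theorem primePart_eq_zero_of_prime (hx : 2 ≤ x) (hu : Real.log x + δ ≤ u)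
    (hp : AvoidsOddPrimes δ u) (hn : n.Prime) :
    primePart a δ u n = 0 := by
  rcases hn.eq_two_or_odd' with rfl | hodd
  · exact primePart_eq_zero_of_le hu (by simpa using hx)
  · rw [primePart, tent_eq_zero (hp n hn hodd), mul_zero]

end PrimePart

section WellSpaced

variable {ι : Type*} [Fintype ι] {a δ x : ℝ} {u : ι → ℝ}

theorem card_filter_mem_Ico_le_one (hu : Pairwise fun i j => δ ≤ |u i - u j|) (b : ℝ) :
    (Finset.univ.filter fun i => u i ∈ Set.Ico b (b + δ)).card ≤ 1 :=
  Finset.card_le_one.mpr fun i hi j hj => by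
    simp only [Finset.mem_filter, Finset.mem_univ, true_and, Set.mem_Ico] at hi hj
    by_contra hij
    exact (hu hij).not_gt (abs_sub_lt_iff.mpr ⟨by linarith, by linarith⟩)

theorem sum_tent_le (hδ : 0 ≤ δ) (hu : Pairwise fun i j => δ ≤ |u i - u j|) (v : ℝ) :
    ∑ i, tent δ (u i - v) ≤ 2 * δ := by
  classical
  set s : ℝ → Finset ι := fun b => Finset.univ.filter fun i => u i ∈ Set.Ico b (b + δ)
  have hsupport : ∑ i, tent δ (u i - v) = ∑ i ∈ s (v - δ) ∪ s v, tent δ (u i - v) := by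
    refine (Finset.sum_subset (Finset.subset_univ _) fun i _ hi => tent_eq_zero ?_).symm
    by_contra! habs
    rw [abs_lt] at habs
    refine hi ?_
    simp only [s, Finset.mem_union, Finset.mem_filter, Finset.mem_univ, true_and, Set.mem_Ico,
      sub_add_cancel]
    rcases lt_or_ge (u i) v with h | h
    · exact .inl ⟨by linarith, h⟩
    · exact .inr ⟨h, by linarith⟩
  have hcard : (s (v - δ) ∪ s v).card ≤ 2 := (Finset.card_union_le _ _).trans
    (Nat.add_le_add (card_filter_mem_Ico_le_one hu _) (card_filter_mem_Ico_le_one hu _))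
  calc ∑ i, tent δ (u i - v) ≤ (s (v - δ) ∪ s v).card • δ :=
        hsupport.trans_le (Finset.sum_le_card_nsmul _ _ _ fun i _ => tent_le hδ _)
    _ ≤ 2 * δ := by
        rw [nsmul_eq_mul]
        exact mul_le_mul_of_nonneg_right (by exact_mod_cast hcard) hδ

theorem sum_primePart_apply_le (hx : 0 < x) (hδ : 0 ≤ δ) (ha : 0 ≤ a)
    (hu : Pairwise fun i j => δ ≤ |u i - u j|) (hlo : ∀ i, Real.log (x / 4) + δ ≤ u i) {n : ℕ}
    (hn : 0 < n) : ∑ i, primePart a δ (u i) n ≤ 4 * δ / √x * vonMangoldt n := by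
  have hΛ : 0 ≤ vonMangoldt n := ArithmeticFunction.vonMangoldt_nonneg
  rcases le_or_gt (n : ℝ) (x / 4) with h | h
  · rw [Finset.sum_eq_zero fun i _ => primePart_eq_zero_of_le (hlo i) h]
    positivity
  · have hpow : (n : ℝ) ^ (-(1 / 2 + a)) ≤ 2 / √x := by
      calc (n : ℝ) ^ (-(1 / 2 + a)) ≤ (n : ℝ) ^ (-(1 / 2) : ℝ) :=
            Real.rpow_le_rpow_of_exponent_le (by exact_mod_cast hn) (by linarith)
        _ ≤ (x / 4) ^ (-(1 / 2) : ℝ) :=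
            Real.rpow_le_rpow_of_nonpos (by positivity) h.le (by norm_num)
        _ = 2 / √x := by
            rw [Real.rpow_neg (by positivity), ← Real.sqrt_eq_rpow, sqrt_div_four hx.le, inv_div]
    calc ∑ i, primePart a δ (u i) n
        = vonMangoldt n * (n : ℝ) ^ (-(1 / 2 + a)) * ∑ i, tent δ (u i - Real.log n) := by
          simp only [primePart, Finset.mul_sum]
      _ ≤ vonMangoldt n * (2 / √x) * (2 * δ) :=
          mul_le_mul (mul_le_mul_of_nonneg_left hpow hΛ) (sum_tent_le hδ hu _)
            (Finset.sum_nonneg fun i _ => tent_nonneg _ _) (by positivity)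
      _ = 4 * δ / √x * vonMangoldt n := by ring

theorem sum_tsum_primePart_le (hx : 8 ≤ x) (hδ : 0 < δ) (ha : 0 ≤ a) (ha' : a < 3 / 2)
    (hu : Pairwise fun i j => δ ≤ |u i - u j|)
    (hlo : ∀ i, Real.log (x / 4) + δ ≤ u i) (hhi : ∀ i, u i + δ ≤ Real.log x)
    (hp : ∀ i, AvoidsOddPrimes δ (u i)) :
    ∑ i, ∑' n, primePart a δ (u i) n ≤ 8 * δ * Real.log x := by
  have hx0 : 0 < x := by linarith
  have : 0 < √x := Real.sqrt_pos.mpr hx0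
  set s : Finset ℕ := {n ∈ Finset.Ioc 0 ⌊x⌋₊ | ¬ n.Prime}
  have hzero : ∀ n ∉ s, ∑ i, primePart a δ (u i) n = 0 := by
    refine fun n hn => Finset.sum_eq_zero fun i _ => ?_
    rcases n.eq_zero_or_pos with rfl | hn0
    · simp [primePart]
    by_cases hnx : n ≤ ⌊x⌋₊
    · have hprime : n.Prime := by
        by_contra h
        exact hn (Finset.mem_filter.mpr ⟨Finset.mem_Ioc.mpr ⟨hn0, hnx⟩, h⟩)
      exact primePart_eq_zero_of_prime (by linarith) (hlo i) (hp i) hprime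
    · exact primePart_eq_zero_of_lt hx0 (hhi i) ((Nat.floor_lt hx0.le).mp (not_le.mp hnx))
  calc ∑ i, ∑' n, primePart a δ (u i) n = ∑ n ∈ s, ∑ i, primePart a δ (u i) n := by
        rw [← Summable.tsum_finsetSum fun i _ => summable_primePart hδ ha' (u i),
          tsum_eq_sum hzero]
    _ ≤ ∑ n ∈ s, 4 * δ / √x * vonMangoldt n := Finset.sum_le_sum fun n hn =>
        sum_primePart_apply_le hx0 hδ.le ha hu hlo
          (Finset.mem_Ioc.mp (Finset.mem_filter.mp hn).1).1
    _ = 4 * δ / √x * (Chebyshev.psi x - Chebyshev.theta x) := by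
        rw [← Finset.mul_sum, Chebyshev.psi_sub_theta_eq_sum_not_prime]
    _ ≤ 4 * δ / √x * (2 * √x * Real.log x) :=
        mul_le_mul_of_nonneg_left (Chebyshev.psi_sub_theta_le (by linarith)) (by positivity)
    _ = 8 * δ * Real.log x := by
        field_simp
        ring

end WellSpaced

section Estimates

variable {a δ x u : ℝ}

theorem weilW_zero_le_mul_log (hx : 4 ≤ x) (hδ : 0 < δ) (hδ' : δ ≤ 1 / 100) (hδx : 61 ≤ δ * x)
    (ha : 0 ≤ a) (ha' : a ≤ 1 / 2) : weilW a δ 0 ≤ δ * Real.log x := by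
  refine (weilW_zero_le hδ ha ha').trans (mul_le_mul_of_nonneg_left ?_ hδ.le)
  have hlog : Real.log (1 / δ + 2) ≤ Real.log x := by
    have : 1 / δ ≤ x / 61 := by
      rw [div_le_div_iff₀ hδ (by norm_num)]
      linarith
    exact Real.log_le_log (by positivity) (by linarith)
  have hpi : 1 ≤ Real.log Real.pi := by
    rw [Real.le_log_iff_exp_le Real.pi_pos]
    linarith [Real.exp_one_lt_d9, Real.pi_gt_three]
  have hexp : Real.exp (δ / 2) ≤ 3 :=
    (Real.exp_le_exp.mpr (by linarith : δ / 2 ≤ 1)).trans (by linarith [Real.exp_one_lt_d9])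
  have := mul_le_mul_of_nonneg_left hexp hδ.le
  linarith

theorem weilW_sub_le (hx : 0 < x) (hδ : 0 ≤ δ) (ha : 0 ≤ a) {v : ℝ} (huv : δ ≤ |u - v|)
    (hu : Real.log (x / 4) + δ ≤ u) (hu' : u + δ ≤ Real.log x)
    (hv : Real.log (x / 4) + δ ≤ v) (hv' : v + δ ≤ Real.log x) :
    weilW a δ (u - v) ≤ 2 * δ ^ 2 := by
  refine (weilW_le hδ ha huv).trans (mul_le_mul_of_nonneg_right ?_ (sq_nonneg δ))
  have hlog : Real.log (x / 4) = Real.log x - 2 * Real.log 2 := by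
    rw [Real.log_div hx.ne' (by norm_num), show (4 : ℝ) = 2 ^ 2 by norm_num, Real.log_pow]
    norm_cast
  have hdist : |u - v| ≤ 2 * Real.log 2 - δ := abs_sub_le_iff.mpr ⟨by linarith, by linarith⟩
  calc Real.exp ((|u - v| + δ) / 2) ≤ Real.exp (Real.log 2) :=
        Real.exp_le_exp.mpr (by linarith)
    _ = 2 := Real.exp_log two_pos

theorem le_weilW_of_log_add_le (hx : 32 ≤ x) (hδ : 0 ≤ δ) (ha : 0 ≤ a) (ha' : a ≤ 1 / 2)
    (hax : a * Real.log x ≤ 1 / 100) (hu : Real.log (x / 4) + δ ≤ u) :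
    δ ^ 2 * (0.495 * √x - 1 / 5) - ∑' n, primePart a δ u n ≤ weilW a δ u := by
  have hlog : 1 ≤ Real.log (x / 4) := by
    rw [Real.le_log_iff_exp_le (by positivity)]
    linarith [Real.exp_one_lt_d9]
  have hsqrt : √x / 2 = Real.exp (1 / 2 * Real.log (x / 4)) := by
    rw [mul_comm, ← Real.rpow_def_of_pos (by positivity), ← Real.sqrt_eq_rpow,
      sqrt_div_four (by positivity)]
  have hmain : 0.495 * √x ≤ Real.exp ((1 / 2 - a) * (u - δ)) := by
    have : a * Real.log (x / 4) ≤ a * Real.log x :=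
      mul_le_mul_of_nonneg_left (Real.log_le_log (by positivity) (by linarith)) ha
    calc 0.495 * √x = √x / 2 * (-(1 / 100) + 1) := by ring
      _ ≤ √x / 2 * Real.exp (-(1 / 100)) :=
          mul_le_mul_of_nonneg_left (Real.add_one_le_exp _) (by positivity)
      _ = Real.exp (1 / 2 * Real.log (x / 4) + -(1 / 100)) := by rw [hsqrt, Real.exp_add]
      _ ≤ _ := Real.exp_le_exp.mpr (by nlinarith)
  refine le_trans (sub_le_sub_right ?_ _) (le_weilW hδ ha ha' (by linarith))
  exact mul_le_mul_of_nonneg_left (sub_le_sub_right hmain _) (sq_nonneg δ)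

end Estimates

theorem sum_sum_le_of_diag_of_offDiag {ι : Type*} [Fintype ι] {K : ι → ι → ℝ} {C D : ℝ}
    (hC : 0 ≤ C) (hD : ∀ i, K i i ≤ D) (hK : ∀ i j, i ≠ j → K i j ≤ C) :
    ∑ i, ∑ j, K i j ≤ Fintype.card ι * D + (Fintype.card ι : ℝ) ^ 2 * C := by
  classical
  calc ∑ i, ∑ j, K i j ≤ ∑ i, ∑ j, ((if i = j then D else 0) + C) :=
        Finset.sum_le_sum fun i _ => Finset.sum_le_sum fun j _ => by
          split_ifs with hij
          · exact hij ▸ (hD i).trans (le_add_of_nonneg_right hC)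
          · exact (hK i j hij).trans_eq (zero_add C).symm
    _ = Fintype.card ι * D + (Fintype.card ι : ℝ) ^ 2 * C := by
        simp only [Finset.sum_add_distrib, Finset.sum_ite_eq, Finset.mem_univ, if_true,
          Finset.sum_const, Finset.card_univ, nsmul_eq_mul]
        ring

section WellSpaced

variable {ι : Type*} [Fintype ι] {a δ x : ℝ} {u : ι → ℝ}

theorem sq_sum_weilW_le (hRH : RiemannHypothesis) (hδ : 0 < δ) (ha : 0 < a) (ha' : a < 3 / 2)
    (u : ι → ℝ) :
    (∑ i, weilW a δ (u i)) ^ 2 ≤ weilW a δ 0 * ∑ i, ∑ j, weilW a δ (u i - u j) := by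
  have hquad (c : ℝ) : 0 ≤ weilW a δ 0 * (c * c) + -2 * (∑ i, weilW a δ (u i)) * c +
      ∑ i, ∑ j, weilW a δ (u i - u j) := by
    have := weilW_posSemidef hRH hδ ha ha' Finset.univ
      (fun i : Option ι => i.elim (-c) fun _ => 1) (fun i => i.elim 0 u)
    simp only [Fintype.sum_option, Option.elim, sub_zero, zero_sub, weilW_neg, one_mul, mul_one,
      mul_neg, neg_mul, Finset.sum_add_distrib, Finset.sum_neg_distrib, ← Finset.mul_sum] at this
    linarith
  have hdiscrim := discrim_le_zero hquad
  rw [discrim] at hdiscrim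
  linarith

theorem le_sum_weilW (hx : 2 ^ 24 ≤ x) (hδ : 0 < δ) (ha : 0 ≤ a) (ha' : a ≤ 1 / 2)
    (hax : a * Real.log x ≤ 1 / 100) (hι : 0.3 ≤ Fintype.card ι * δ)
    (hu : Pairwise fun i j => δ ≤ |u i - u j|)
    (hlo : ∀ i, Real.log (x / 4) + δ ≤ u i) (hhi : ∀ i, u i + δ ≤ Real.log x)
    (hp : ∀ i, AvoidsOddPrimes δ (u i)) :
    0.11 * δ * √x ≤ ∑ i, weilW a δ (u i) := by
  have hsqrt : 4096 ≤ √x := by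
    rw [Real.le_sqrt' (by norm_num)]
    linarith
  have hprime : ∑ i, ∑' n, primePart a δ (u i) n ≤ 8 * δ * Real.log x :=
    sum_tsum_primePart_le (by linarith) hδ ha (by linarith) hu hlo hhi hp
  have hsum : Fintype.card ι * (δ ^ 2 * (0.495 * √x - 1 / 5)) -
      ∑ i, ∑' n, primePart a δ (u i) n ≤ ∑ i, weilW a δ (u i) := by
    have := Finset.sum_le_sum fun i (_ : i ∈ Finset.univ) =>
      le_weilW_of_log_add_le (by linarith) hδ.le ha ha' hax (hlo i)
    rwa [Finset.sum_sub_distrib, Finset.sum_const, Finset.card_univ, nsmul_eq_mul] at this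
  have hpole : 0.3 * (δ * (0.495 * √x - 1 / 5)) ≤
      Fintype.card ι * δ * (δ * (0.495 * √x - 1 / 5)) :=
    mul_le_mul_of_nonneg_right hι (mul_nonneg hδ.le (by linarith))
  have hlog : δ * Real.log x ≤ δ * (0.0041 * √x) :=
    mul_le_mul_of_nonneg_left (log_le_mul_sqrt hx) hδ.le
  have : δ * 4096 ≤ δ * √x := mul_le_mul_of_nonneg_left hsqrt hδ.le
  linarith

theorem sum_sum_weilW_sub_le (hx : 0 < x) (hδ : 0 < δ) (ha : 0 ≤ a)
    (hzero : weilW a δ 0 ≤ δ * Real.log x) (hlog : 0 ≤ Real.log x)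
    (hι : Fintype.card ι * δ ≤ 1 / 3) (hu : Pairwise fun i j => δ ≤ |u i - u j|)
    (hlo : ∀ i, Real.log (x / 4) + δ ≤ u i) (hhi : ∀ i, u i + δ ≤ Real.log x) :
    ∑ i, ∑ j, weilW a δ (u i - u j) ≤ Real.log x / 3 + 2 / 9 := by
  have hsquare : (Fintype.card ι * δ) ^ 2 ≤ (1 / 3) ^ 2 := pow_le_pow_left₀ (by positivity) hι 2
  have hdiag : Fintype.card ι * δ * Real.log x ≤ 1 / 3 * Real.log x :=
    mul_le_mul_of_nonneg_right hι hlog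
  have := sum_sum_le_of_diag_of_offDiag (K := fun i j => weilW a δ (u i - u j))
    (D := δ * Real.log x) (by positivity) (fun i => by rwa [sub_self]) fun i j hij =>
      weilW_sub_le hx hδ.le ha (hu hij) (hlo i) (hhi i) (hlo j) (hhi j)
  linarith

theorem exists_not_avoidsOddPrimes (hRH : RiemannHypothesis) (hx : 2 ^ 24 ≤ x) (hδ : 0 < δ)
    (hδ' : δ ≤ 1 / 100) (hδx : 61 * Real.log x ^ 2 ≤ δ * x)
    (hι : 0.3 ≤ Fintype.card ι * δ) (hι' : Fintype.card ι * δ ≤ 1 / 3)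
    (hu : Pairwise fun i j => δ ≤ |u i - u j|)
    (hlo : ∀ i, Real.log (x / 4) + δ ≤ u i) (hhi : ∀ i, u i + δ ≤ Real.log x) :
    ∃ i, ¬ AvoidsOddPrimes δ (u i) := by
  by_contra! hp
  have hx0 : 0 < x := by linarith
  have hlog := sixteen_le_log hx
  obtain ⟨a, ha, hax⟩ : ∃ a, 0 < a ∧ a * Real.log x = 1 / 100 :=
    ⟨1 / (100 * Real.log x), by positivity, by field_simp⟩
  have ha' : a ≤ 1 / 2 := by nlinarith
  have hzero : weilW a δ 0 ≤ δ * Real.log x :=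
    weilW_zero_le_mul_log (by linarith) hδ hδ' (by nlinarith) ha.le ha'
  have hlower := le_sum_weilW hx hδ ha.le ha' hax.le hι hu hlo hhi hp
  have hupper := sum_sum_weilW_sub_le hx0 hδ ha.le hzero (by linarith) hι' hu hlo hhi
  have hnonneg : 0 ≤ ∑ i, ∑ j, weilW a δ (u i - u j) := by
    simpa using weilW_posSemidef hRH hδ ha (by linarith) Finset.univ (fun _ => 1) u
  have hchain : δ * Real.log x * (0.0121 * 61 * Real.log x) ≤
      δ * Real.log x * (Real.log x / 3 + 2 / 9) :=
    calc δ * Real.log x * (0.0121 * 61 * Real.log x)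
        = 0.0121 * δ * (61 * Real.log x ^ 2) := by ring
      _ ≤ 0.0121 * δ * (δ * x) := mul_le_mul_of_nonneg_left hδx (by positivity)
      _ = (0.11 * δ * √x) ^ 2 := by
          rw [mul_pow _ (√x), Real.sq_sqrt hx0.le]
          ring
      _ ≤ (∑ i, weilW a δ (u i)) ^ 2 := pow_le_pow_left₀ (by positivity) hlower 2
      _ ≤ weilW a δ 0 * ∑ i, ∑ j, weilW a δ (u i - u j) :=
          sq_sum_weilW_le hRH hδ ha (by linarith) u
      _ ≤ _ := mul_le_mul hzero hupper hnonneg (by positivity)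
  linarith [le_of_mul_le_mul_left hchain (by positivity)]

end WellSpaced

/-! ### Goldbach numbers above `2 ^ 24` -/

/-- A Goldbach number is a sum of two odd primes. -/
def IsGoldbach (n : ℕ) : Prop :=
  ∃ p q : ℕ, p.Prime ∧ q.Prime ∧ Odd p ∧ Odd q ∧ n = p + q

theorem mul_exp_neg_lt_and_lt_mul_exp_of_abs_log_sub_log_lt {y z δ : ℝ} (hy : 0 < y) (hz : 0 < z)
    (h : |Real.log y - Real.log z| < δ) : y * Real.exp (-δ) < z ∧ z < y * Real.exp δ := by
  rw [abs_lt] at h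
  rw [← Real.log_lt_log_iff (by positivity) hz, ← Real.log_lt_log_iff hz (by positivity),
    Real.log_mul hy.ne' (Real.exp_pos _).ne', Real.log_mul hy.ne' (Real.exp_pos _).ne',
    Real.log_exp, Real.log_exp]
  constructor <;> linarith

theorem exists_isGoldbach_of_not_avoidsOddPrimes {y z δ : ℝ} (hy : 0 < y) (hz : 0 < z)
    (hy' : ¬ AvoidsOddPrimes δ (Real.log y)) (hz' : ¬ AvoidsOddPrimes δ (Real.log z)) :
    ∃ n : ℕ, IsGoldbach n ∧ (y + z) * Real.exp (-δ) < n ∧ n < (y + z) * Real.exp δ := by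
  rw [AvoidsOddPrimes] at hy' hz'
  push Not at hy' hz'
  obtain ⟨p, hp, hp_odd, hyp⟩ := hy'
  obtain ⟨q, hq, hq_odd, hzq⟩ := hz'
  obtain ⟨hlo, hhi⟩ := mul_exp_neg_lt_and_lt_mul_exp_of_abs_log_sub_log_lt hy
    (Nat.cast_pos.mpr hp.pos) hyp
  obtain ⟨hlo', hhi'⟩ := mul_exp_neg_lt_and_lt_mul_exp_of_abs_log_sub_log_lt hz
    (Nat.cast_pos.mpr hq.pos) hzq
  refine ⟨p + q, ⟨p, q, hp, hq, hp_odd, hq_odd, rfl⟩, ?_, ?_⟩ <;> push_cast <;> linarith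

theorem le_log_sub_log {y z δ : ℝ} (hz : 0 < z) (h : (Real.exp δ - 1) * z ≤ y - z) :
    δ ≤ Real.log y - Real.log z := by
  have := Real.log_le_log (by positivity) (by linarith : Real.exp δ * z ≤ y)
  rw [Real.log_mul (Real.exp_pos δ).ne' hz.ne', Real.log_exp] at this
  linarith

theorem le_abs_log_sub_log {y z δ U : ℝ} (hy : 0 < y) (hz : 0 < z) (hyU : y ≤ U) (hzU : z ≤ U)
    (hδ : 0 ≤ δ) (h : (Real.exp δ - 1) * U ≤ |y - z|) : δ ≤ |Real.log y - Real.log z| := by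
  have hη : 0 ≤ Real.exp δ - 1 := by linarith [Real.add_one_le_exp δ]
  rcases le_abs.mp h with h | h
  · exact (le_log_sub_log hz (by nlinarith)).trans (le_abs_self _)
  · rw [abs_sub_comm]
    exact (le_log_sub_log hy (by nlinarith)).trans (le_abs_self _)

theorem le_abs_intCast_mul_sub {d : ℝ} (hd : 0 ≤ d) {k l : ℤ} (hkl : k ≠ l) (b c : ℝ) :
    d ≤ |(b + (k + c) * d) - (b + (l + c) * d)| := by
  have : (1 : ℝ) ≤ |(k : ℝ) - l| := by exact_mod_cast Int.one_le_abs (sub_ne_zero.mpr hkl)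
  calc d ≤ |(k : ℝ) - l| * d := le_mul_of_one_le_left hd this
    _ = |((k : ℝ) - l) * d| := by rw [abs_mul, abs_of_nonneg hd]
    _ = _ := by ring_nf

theorem exists_nat_mul_exp_sub_one_le {δ : ℝ} (hδ : 0 < δ) (hδ' : δ ≤ 1 / 100) :
    ∃ M : ℕ, M * (Real.exp δ - 1) ≤ 1 / 3 ∧ M * δ ≤ 1 / 3 ∧ 0.3 ≤ M * δ := by
  have hδη : δ ≤ Real.exp δ - 1 := by linarith [Real.add_one_le_exp δ]
  have hηδ : Real.exp δ - 1 ≤ δ * (1 + δ) := by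
    have := Real.abs_exp_sub_one_sub_id_le (x := δ) (by rw [abs_of_pos hδ]; linarith)
    linarith [(abs_le.mp this).2]
  set η := Real.exp δ - 1
  have hη : 0 < η := hδ.trans_le hδη
  set M := ⌊1 / (3 * η)⌋₊
  have hM : M * η ≤ 1 / 3 := by
    have : (M : ℝ) ≤ 1 / (3 * η) := Nat.floor_le (by positivity)
    rw [le_div_iff₀ (by positivity)] at this
    linarith
  have hM' : 1 / 3 ≤ (M + 1) * (δ * (1 + δ)) := by
    have : 1 / (3 * η) < M + 1 := Nat.lt_floor_add_one _
    rw [div_lt_iff₀ (by positivity)] at this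
    have := mul_le_mul_of_nonneg_left hηδ (by positivity : (0 : ℝ) ≤ M + 1)
    linarith
  have hMδ : M * δ ≤ 1 / 3 := (mul_le_mul_of_nonneg_left hδη M.cast_nonneg).trans hM
  refine ⟨M, hM, hMδ, ?_⟩
  have : M * δ * δ ≤ 1 / 3 * (1 / 100) := mul_le_mul hMδ hδ' hδ.le (by norm_num)
  nlinarith

theorem exists_avoidsOddPrimes_of_forall_not_isGoldbach {S d δ : ℝ} (hS : 0 < S) (hd : 0 ≤ d)
    {M : ℕ} (hMd : M * d ≤ S / 4)
    (hno : ∀ n : ℕ, S * Real.exp (-δ) < n → n < S * Real.exp δ → ¬ IsGoldbach n) :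
    ∃ y : Fin M → ℝ, (∀ i, S / 4 ≤ y i) ∧ (∀ i, y i ≤ 3 / 4 * S) ∧
      (Pairwise fun i j => d ≤ |y i - y j|) ∧ ∀ i, AvoidsOddPrimes δ (Real.log (y i)) := by
  -- The points `y k` and `y (-k - 1)` are reflections of each other, with sum `S`.
  let y (k : ℤ) : ℝ := S / 2 + (k + 1 / 2) * d
  have hrange (i : Fin M) {k : ℤ} (hk : k = i ∨ k = -i - 1) :
      S / 4 ≤ y k ∧ y k ≤ 3 / 4 * S := by
    have hi : (i + 1 : ℝ) ≤ M := by exact_mod_cast i.2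
    have := mul_le_mul_of_nonneg_right hi hd
    have : 0 ≤ (i : ℝ) * d := by positivity
    rcases hk with rfl | rfl <;> constructor <;> simp only [y] <;> push_cast <;> linarith
  have hchoice (i : Fin M) :
      ∃ k : ℤ, (k = i ∨ k = -i - 1) ∧ AvoidsOddPrimes δ (Real.log (y k)) := by
    by_contra! h
    obtain ⟨n, hn, hlo, hhi⟩ := exists_isGoldbach_of_not_avoidsOddPrimes
      (by linarith [hrange i (.inl rfl)]) (by linarith [hrange i (.inr rfl)])
      (h i (.inl rfl)) (h (-i - 1) (.inr rfl))
    have hsum : y i + y (-i - 1) = S := by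
      simp only [y]
      push_cast
      ring
    rw [hsum] at hlo hhi
    exact hno n hlo hhi hn
  choose k hk havoids using hchoice
  exact ⟨fun i => y (k i), fun i => (hrange i (hk i)).1, fun i => (hrange i (hk i)).2,
    fun i j hij => le_abs_intCast_mul_sub hd (by grind) _ _, havoids⟩

theorem exists_isGoldbach_lt_mul_exp (hRH : RiemannHypothesis) {x δ : ℝ} (hx : 2 ^ 24 ≤ x)
    (hδ : 0 < δ) (hδ' : δ ≤ 1 / 100) (hδx : 61 * Real.log x ^ 2 ≤ δ * x) :
    ∃ n : ℕ, IsGoldbach n ∧ x < n ∧ n < x * Real.exp (2 * δ) := by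
  by_contra! hno
  have hx0 : 0 < x := by linarith
  obtain ⟨M, hMη, hMδ, hMδ'⟩ := exists_nat_mul_exp_sub_one_le hδ hδ'
  have hη : 0 ≤ Real.exp δ - 1 := by linarith [Real.add_one_le_exp δ]
  obtain ⟨S, hS⟩ : ∃ S, S = x * Real.exp δ := ⟨_, rfl⟩
  have hS0 : 0 < S := hS ▸ by positivity
  have hlogS : Real.log S = Real.log x + δ := by
    rw [hS, Real.log_mul hx0.ne' (Real.exp_pos δ).ne', Real.log_exp]
  obtain ⟨y, hlo, hhi, hspaced, havoids⟩ := exists_avoidsOddPrimes_of_forall_not_isGoldbach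
    (δ := δ) (d := (Real.exp δ - 1) * (3 / 4 * S)) (M := M) hS0 (by positivity) (by nlinarith)
    fun n hn_lo hn_hi hn => by
      rw [hS, mul_assoc, ← Real.exp_add] at hn_lo hn_hi
      rw [add_neg_cancel, Real.exp_zero, mul_one] at hn_lo
      rw [← two_mul] at hn_hi
      exact (hno n hn hn_lo).not_gt hn_hi
  have hpos (i : Fin M) : 0 < y i := by linarith [hlo i]
  have hlog_lo (i : Fin M) : Real.log (x / 4) + δ ≤ Real.log (y i) := by
    have := Real.log_le_log (by positivity) (hlo i)
    rw [Real.log_div hS0.ne' (by norm_num), hlogS] at this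
    rw [Real.log_div hx0.ne' (by norm_num)]
    linarith
  have hlog_hi (i : Fin M) : Real.log (y i) + δ ≤ Real.log x := by
    have := Real.log_le_log (hpos i) (hhi i)
    rw [Real.log_mul (by norm_num) hS0.ne', hlogS] at this
    linarith [Real.log_le_sub_one_of_pos (by norm_num : (0 : ℝ) < 3 / 4)]
  obtain ⟨i, hi⟩ := exists_not_avoidsOddPrimes hRH hx hδ hδ' hδx
    (by rwa [Fintype.card_fin]) (by rwa [Fintype.card_fin])
    (fun i j hij => le_abs_log_sub_log (hpos i) (hpos j) (hhi i) (hhi j) hδ.le (hspaced hij))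
    hlog_lo hlog_hi
  exact hi (havoids i)

theorem exists_isGoldbach_of_two_pow_le (hRH : RiemannHypothesis) {x : ℝ} (hx : 2 ^ 24 ≤ x) :
    ∃ n : ℕ, x < n ∧ n ≤ x + 123 * Real.log x ^ 2 ∧ IsGoldbach n := by
  have hx0 : 0 < x := by linarith
  have hlog := sixteen_le_log hx
  obtain ⟨t, ht0, htx⟩ : ∃ t, 0 < t ∧ t * x = 123 * Real.log x ^ 2 :=
    ⟨123 * Real.log x ^ 2 / x, by positivity, div_mul_cancel₀ _ hx0.ne'⟩
  have ht : t ≤ 0.0021 := by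
    have : Real.log x ^ 2 ≤ (0.0041 * √x) ^ 2 :=
      pow_le_pow_left₀ (by linarith) (log_le_mul_sqrt hx) 2
    rw [mul_pow, Real.sq_sqrt hx0.le] at this
    exact le_of_mul_le_mul_right (by linarith) hx0
  have hlog_le : Real.log (1 + t) ≤ t := by
    linarith [Real.log_le_sub_one_of_pos (by linarith : 0 < 1 + t)]
  have hlog_ge : 122 / 123 * t ≤ Real.log (1 + t) := by
    refine le_trans ?_ (Real.one_sub_inv_le_log_of_pos (by linarith))
    rw [← sub_nonneg]
    field_simp
    nlinarith
  obtain ⟨n, hn, hlo, hhi⟩ := exists_isGoldbach_lt_mul_exp hRH hx (δ := Real.log (1 + t) / 2)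
    (by linarith) (by linarith) (by nlinarith)
  rw [mul_div_cancel₀ _ two_ne_zero, Real.exp_log (by linarith)] at hhi
  exact ⟨n, hlo, by linarith, hn⟩

/-! ### Goldbach numbers below `2 ^ 24` -/

/-- Trial division: `noOddDivisor n f` checks that none of the `f` odd numbers from `3` to
`2 * f + 1` divides `n`. -/
def noOddDivisor (n : ℕ) : ℕ → Bool
  | 0 => true
  | k + 1 => if n % (2 * k + 3) = 0 then false else noOddDivisor n k

/-- A primality test for odd numbers, to be evaluated by the kernel. The trial divisors run
up to `2 * 2 ^ (n.log2 / 2) + 1`, which exceeds the square root of `n`. -/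
def isOddPrime (n : ℕ) : Bool :=
  2 < n && n % 2 = 1 && noOddDivisor n (2 ^ (n.log2 / 2))

theorem not_dvd_of_noOddDivisor {n k f : ℕ} (h : noOddDivisor n f) (hk : k < f) :
    ¬ 2 * k + 3 ∣ n := by
  induction f with
  | zero => omega
  | succ f ih =>
    rw [noOddDivisor] at h
    split_ifs at h with hmod
    rcases Nat.lt_succ_iff_lt_or_eq.mp hk with hk | rfl
    · exact ih h hk
    · exact fun hdvd => hmod (Nat.mod_eq_zero_of_dvd hdvd)

theorem lt_sq_two_mul_two_pow_log2_div_two (n : ℕ) : n < (2 * 2 ^ (n.log2 / 2)) ^ 2 := by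
  refine Nat.lt_log2_self.trans_le ?_
  rw [← pow_succ', ← pow_mul]
  exact Nat.pow_le_pow_right two_pos (by omega)

theorem odd_of_isOddPrime {n : ℕ} (h : isOddPrime n) : Odd n := by
  simp only [isOddPrime, Bool.and_eq_true, decide_eq_true_eq] at h
  exact Nat.odd_iff.mpr h.1.2

theorem prime_of_isOddPrime {n : ℕ} (h : isOddPrime n) : n.Prime := by
  have hodd := odd_of_isOddPrime h
  simp only [isOddPrime, Bool.and_eq_true, decide_eq_true_eq] at h
  obtain ⟨⟨hn, -⟩, hdiv⟩ := h
  refine Nat.prime_def_le_sqrt.mpr ⟨hn.le, fun m hm hm_sqrt hdvd => ?_⟩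
  obtain ⟨k, rfl⟩ := hodd.of_dvd_nat hdvd
  have hk : 2 * k + 1 < 2 * 2 ^ (n.log2 / 2) :=
    lt_of_pow_lt_pow_left₀ 2 (Nat.zero_le _)
      ((Nat.le_sqrt'.mp hm_sqrt).trans_lt (lt_sq_two_mul_two_pow_log2_div_two n))
  obtain ⟨k, rfl⟩ := Nat.exists_eq_add_of_le' (by omega : 1 ≤ k)
  exact not_dvd_of_noOddDivisor hdiv (by omega : k < _) hdvd

/-- Odd primes up to about `2 ^ 20`: each `q` following `p` has `q ≤ p + 59 * (p + 3).log2 ^ 2`. -/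
def shortSteps : List ℕ :=
  [239, 3121, 10259, 20219, 31771, 43331, 56599, 69859, 84961, 100057, 115153, 130253, 145349,
   162391, 179441, 196477, 213523, 230567, 247613, 264659, 283771, 302873, 321983, 341087,
   360197, 379307, 398423, 417523, 436627, 455737, 474847, 493939, 513053, 532163, 553457,
   574741, 596027, 617311, 638587, 659881, 681179, 702469, 723761, 745051, 766333, 787621,
   808919, 830191, 851471, 872761, 894059, 915353, 936647, 957937, 979229, 1000507, 1021799,
   1043089, 1064383]

/-- Odd primes up to about `2 ^ 24` with gaps less than `2 ^ 20`. -/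
def longSteps : List ℕ :=
  [1048573, 2097143, 3145711, 4194277, 5242849, 6291421, 7339991, 8388547, 9437117, 10485667,
   11534213, 12582767, 13631323, 14679893, 15728429, 16776989]

theorem exists_mem_gt_of_isChain {G : ℕ → ℕ} (hG : Monotone G) {m b : ℕ} :
    ∀ {a : ℕ} {l : List ℕ}, List.IsChain (fun p q => q ≤ p + G p) (a :: l) → a ≤ m →
      b ∈ l → m < b → ∃ q ∈ l, m < q ∧ q ≤ m + G m
  | _, [], _, _, hb, _ => absurd hb List.not_mem_nil
  | a, c :: l, hchain, ham, hb, hmb => by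
    rw [List.isChain_cons_cons] at hchain
    rcases lt_or_ge m c with hmc | hcm
    · exact ⟨c, List.mem_cons_self, hmc, hchain.1.trans (Nat.add_le_add ham (hG ham))⟩
    · have hb : b ∈ l := (List.mem_cons.mp hb).resolve_left (hcm.trans_lt hmb).ne'
      obtain ⟨q, hq, hmq⟩ := exists_mem_gt_of_isChain hG hchain.2 hcm hb hmb
      exact ⟨q, List.mem_cons_of_mem _ hq, hmq⟩

theorem log2_le_log2 {m n : ℕ} (h : m ≤ n) : m.log2 ≤ n.log2 := by
  simpa only [Nat.log2_eq_log_two] using Nat.log_mono_right h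

theorem exists_odd_prime_add_three {m : ℕ} (hm : 2 ≤ m) (hm' : m < 2 ^ 20) :
    ∃ q : ℕ, q.Prime ∧ Odd q ∧ m < q + 3 ∧ q + 3 ≤ m + 59 * m.log2 ^ 2 := by
  rcases lt_or_ge m 6 with h | h
  · exact ⟨3, Nat.prime_three, by decide, by omega, by interval_cases m <;> decide⟩
  · obtain ⟨k, rfl⟩ := Nat.exists_eq_add_of_le' (show 3 ≤ m by omega)
    have hmono : Monotone fun p : ℕ => 59 * (p + 3).log2 ^ 2 := fun p q hpq =>
      Nat.mul_le_mul_left _ (Nat.pow_le_pow_left (log2_le_log2 (by omega)) 2)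
    obtain ⟨q, hq, hkq, hqk⟩ := exists_mem_gt_of_isChain hmono (m := k) (b := 1064383)
      (l := shortSteps) (a := 3) (by decide +kernel) (by omega) (by decide +kernel) (by omega)
    have hq : isOddPrime q :=
      List.all_eq_true.mp (by decide +kernel : shortSteps.all isOddPrime) q hq
    exact ⟨q, prime_of_isOddPrime hq, odd_of_isOddPrime hq, by omega, by omega⟩

theorem exists_odd_prime_near_below {m : ℕ} (hm : 2 ^ 20 ≤ m) (hm' : m < 2 ^ 24) :
    ∃ p : ℕ, p.Prime ∧ Odd p ∧ p ≤ m + 1 ∧ m + 3 < p + 2 ^ 20 := by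
  obtain ⟨p, hp, hlo, hhi⟩ := exists_mem_gt_of_isChain (G := fun _ => 2 ^ 20 - 2) monotone_const
    (m := m + 3 - 2 ^ 20) (b := 16776989) (l := longSteps) (a := 3) (by decide +kernel)
    (by omega) (by decide +kernel) (by omega)
  have hp : isOddPrime p := List.all_eq_true.mp (by decide +kernel : longSteps.all isOddPrime) p hp
  exact ⟨p, prime_of_isOddPrime hp, odd_of_isOddPrime hp, by omega, by omega⟩

theorem exists_isGoldbach_le_add_log2_sq {m : ℕ} (hm : 2 ≤ m) (hm' : m < 2 ^ 24) :
    ∃ n, IsGoldbach n ∧ m < n ∧ n ≤ m + 59 * m.log2 ^ 2 := by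
  rcases lt_or_ge m (2 ^ 20) with h | h
  · obtain ⟨q, hq, hq_odd, hlo, hhi⟩ := exists_odd_prime_add_three hm h
    exact ⟨q + 3, ⟨q, 3, hq, Nat.prime_three, hq_odd, by decide, rfl⟩, hlo, hhi⟩
  · obtain ⟨p, hp, hp_odd, hpm, hmp⟩ := exists_odd_prime_near_below h hm'
    obtain ⟨q, hq, hq_odd, hlo, hhi⟩ :=
      exists_odd_prime_add_three (m := m + 3 - p) (by omega) (by omega)
    have hlog : 59 * (m + 3 - p).log2 ^ 2 ≤ 59 * m.log2 ^ 2 :=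
      Nat.mul_le_mul_left _ (Nat.pow_le_pow_left (log2_le_log2 (by omega)) 2)
    exact ⟨p + q, ⟨p, q, hp, hq, hp_odd, hq_odd, rfl⟩, by omega, by omega⟩

theorem log2_floor_mul_log_two_le {x : ℝ} (hx : 1 ≤ x) :
    (⌊x⌋₊.log2 : ℝ) * Real.log 2 ≤ Real.log x := by
  have hpow : (2 : ℝ) ^ ⌊x⌋₊.log2 ≤ x := by
    refine le_trans ?_ (Nat.floor_le (zero_le_one.trans hx))
    exact_mod_cast Nat.log2_self_le (Nat.floor_pos.mpr hx).ne'
  rw [← Real.log_pow]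
  exact Real.log_le_log (by positivity) hpow

theorem exists_isGoldbach_of_lt_two_pow {x : ℝ} (hx : 2 ≤ x) (hx' : x < 2 ^ 24) :
    ∃ n : ℕ, x < n ∧ n ≤ x + 123 * Real.log x ^ 2 ∧ IsGoldbach n := by
  have hx0 : 0 ≤ x := by linarith
  obtain ⟨n, hn, hlo, hhi⟩ := exists_isGoldbach_le_add_log2_sq (m := ⌊x⌋₊)
    (Nat.le_floor (by exact_mod_cast hx)) ((Nat.floor_lt hx0).mpr (by exact_mod_cast hx'))
  refine ⟨n, (Nat.floor_lt hx0).mp hlo, ?_, hn⟩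
  have hlog : ((⌊x⌋₊.log2 : ℝ) * 0.693) ^ 2 ≤ Real.log x ^ 2 := by
    refine pow_le_pow_left₀ (by positivity) ?_ 2
    refine le_trans ?_ (log2_floor_mul_log_two_le (by linarith))
    exact mul_le_mul_of_nonneg_left (by linarith [Real.log_two_gt_d9]) (Nat.cast_nonneg _)
  calc (n : ℝ) ≤ ⌊x⌋₊ + 59 * (⌊x⌋₊.log2 : ℝ) ^ 2 := by exact_mod_cast hhi
    _ ≤ x + 123 * Real.log x ^ 2 := by nlinarith [Nat.floor_le hx0, sq_nonneg (⌊x⌋₊.log2 : ℝ)]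

end Goldbach

/-- Assuming the Riemann Hypothesis, for every real `x ≥ 2` there is a Goldbach number
(a sum of two odd primes) in the interval `(x, x + 123 * (log x)^2]`. -/
theorem goldbach_number_in_short_interval (hRH : RiemannHypothesis) :
    ∀ x : ℝ, 2 ≤ x → ∃ n : ℕ,
      x < (n : ℝ) ∧ (n : ℝ) ≤ x + 123 * Real.log x ^ 2 ∧
      ∃ p q : ℕ, p.Prime ∧ q.Prime ∧ Odd p ∧ Odd q ∧ n = p + q := by
  intro x hx
  rcases lt_or_ge x (2 ^ 24) with h | h
  · exact Goldbach.exists_isGoldbach_of_lt_two_pow hx h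
  · exact Goldbach.exists_isGoldbach_of_two_pow_le hRH h
end

section
/- The sum over all primes p of (log p)/(p^{1/2}·(p−1)) converges and is strictly less than 1.7215. -/
/-!
The majorant `1 / (√p (p - 1)) ≤ 1 / (p ^ (3 / 2) - 1) + 1 / (p ^ (5 / 2) - 1)` bounds the sum by
`-ζ'/ζ(3/2) - ζ'/ζ(5/2)`, because `-ζ'/ζ(s) = ∑ₙ Λ(n) n⁻ˢ = ∑ₚ log p / (p ^ s - 1)`. This alone
is about `1.79`, so the excess of the majorant over the primes below `170` is subtracted. In
`-ζ'/ζ(s) = (∑ log n · n⁻ˢ) / ∑ n⁻ˢ`, convexity turns the midpoint rule into an upper bound for the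
tail of the numerator and the trapezoid rule into a lower bound for the tail of the denominator.
Rational bounds for square roots and logarithms then leave a computation in `ℚ`.
-/

open Filter Finset MeasureTheory Set Topology
open scoped ArithmeticFunction.vonMangoldt

section Convex

variable {f : ℝ → ℝ} {a b x : ℝ}

theorem two_mul_midpoint_le_add_reflect (hf : ConvexOn ℝ (Icc a b) f) (hx : x ∈ Icc a b) :
    2 * f ((a + b) / 2) ≤ f x + f (a + b - x) := by
  have h := hf.2 hx (y := a + b - x) ⟨by linarith [hx.2], by linarith [hx.1]⟩
    one_half_pos.le one_half_pos.le (add_halves 1)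
  simp only [smul_eq_mul] at h
  rw [show 1 / 2 * x + 1 / 2 * (a + b - x) = (a + b) / 2 by ring] at h
  linarith

theorem add_reflect_le_add (hf : ConvexOn ℝ (Icc a b) f) (hx : x ∈ Icc a b) :
    f x + f (a + b - x) ≤ f a + f b := by
  have hab := hx.1.trans hx.2
  obtain ⟨w, v, hw, hv, hwv, rfl⟩ := segment_eq_Icc hab ▸ hx
  have h₁ := hf.2 (left_mem_Icc.2 hab) (right_mem_Icc.2 hab) hw hv hwv
  have h₂ := hf.2 (left_mem_Icc.2 hab) (right_mem_Icc.2 hab) hv hw (by rwa [add_comm])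
  obtain rfl := eq_sub_of_add_eq hwv
  simp only [smul_eq_mul] at h₁ h₂ ⊢
  rw [show a + b - ((1 - v) * a + v * b) = v * a + (1 - v) * b by ring]
  linarith

theorem intervalIntegrable_comp_reflect (hf : IntervalIntegrable f volume a b) :
    IntervalIntegrable (fun x ↦ f (a + b - x)) volume a b := by
  simpa using (hf.comp_sub_left (a + b)).symm

theorem integral_add_comp_reflect (hf : IntervalIntegrable f volume a b) :
    ∫ x in a..b, (f x + f (a + b - x)) = 2 * ∫ x in a..b, f x := by
  rw [intervalIntegral.integral_add hf (intervalIntegrable_comp_reflect hf),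
    intervalIntegral.integral_comp_sub_left]
  simp [two_mul]

-- The Hermite–Hadamard inequality: `x ↦ a + b - x` preserves the integral, so averaging over this
-- reflection reduces both halves to pointwise bounds.
theorem mul_midpoint_le_integral_of_convexOn (hab : a ≤ b) (hf : ConvexOn ℝ (Icc a b) f)
    (hint : IntervalIntegrable f volume a b) :
    (b - a) * f ((a + b) / 2) ≤ ∫ x in a..b, f x := by
  have h := intervalIntegral.integral_mono_on hab intervalIntegrable_const
    (hint.add (intervalIntegrable_comp_reflect hint))
    fun _ hx ↦ two_mul_midpoint_le_add_reflect hf hx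
  rw [integral_add_comp_reflect hint, intervalIntegral.integral_const, smul_eq_mul] at h
  linarith

theorem integral_le_mul_add_div_two_of_convexOn (hab : a ≤ b) (hf : ConvexOn ℝ (Icc a b) f)
    (hint : IntervalIntegrable f volume a b) :
    ∫ x in a..b, f x ≤ (b - a) * ((f a + f b) / 2) := by
  have h := intervalIntegral.integral_mono_on hab
    (hint.add (intervalIntegrable_comp_reflect hint)) intervalIntegrable_const
    fun _ hx ↦ add_reflect_le_add hf hx
  rw [integral_add_comp_reflect hint, intervalIntegral.integral_const, smul_eq_mul] at h
  linarith

theorem hasSum_integral_nat_add (hf : IntegrableOn f (Ioi a)) :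
    HasSum (fun n : ℕ ↦ ∫ x in n + a..n + 1 + a, f x) (∫ x in Ioi a, f x) := by
  have hmono : Monotone fun n : ℕ ↦ n + a := Nat.mono_cast.add_const a
  have hunion : ⋃ n : ℕ, Ioc (n + a) (n + 1 + a) = Ioi a := by
    simpa using iUnion_Ioc_map_succ_eq_Ioi (f := fun n : ℕ ↦ (n : ℝ) + a)
      (fun n ↦ hmono n.zero_le) (not_bddAbove_of_tendsto_atTop
        (tendsto_atTop_add_const_right _ a tendsto_natCast_atTop_atTop))
  have hle (n : ℕ) : n + a ≤ n + 1 + a := by linarith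
  simp only [intervalIntegral.integral_of_le (hle _), ← hunion]
  exact hasSum_integral_iUnion (fun _ ↦ measurableSet_Ioc)
    (by simpa using hmono.pairwise_disjoint_on_Ioc_succ) (hunion ▸ hf)

theorem intervalIntegrable_nat_add (hf : IntegrableOn f (Ioi a)) (n : ℕ) :
    IntervalIntegrable f volume (n + a) (n + 1 + a) := by
  rw [intervalIntegrable_iff_integrableOn_Ioc_of_le (by linarith)]
  exact hf.mono_set fun x hx ↦ lt_of_le_of_lt (by simp) hx.1

theorem integral_Ioi_add_le_tsum_of_convexOn (hf : ConvexOn ℝ (Ici a) f)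
    (hint : IntegrableOn f (Ioi a)) (hsum : Summable fun n : ℕ ↦ f (n + a)) :
    (∫ x in Ioi a, f x) + f a / 2 ≤ ∑' n : ℕ, f (n + a) := by
  have hsucc : HasSum (fun n : ℕ ↦ f (n + 1 + a)) (∑' n : ℕ, f (n + a) - f a) := by
    simpa using (hasSum_nat_add_iff' 1).2 hsum.hasSum
  have h := hasSum_le (fun n : ℕ ↦ integral_le_mul_add_div_two_of_convexOn (by linarith)
      (hf.subset (fun x hx ↦ le_trans (by simp) hx.1) (convex_Icc _ _))
      (intervalIntegrable_nat_add hint n))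
    (hasSum_integral_nat_add hint)
    (by simpa using (hsum.hasSum.add hsucc).div_const 2)
  linarith

theorem tsum_le_integral_Ioi_of_convexOn (hf : ConvexOn ℝ (Ici (a - 1 / 2)) f)
    (hint : IntegrableOn f (Ioi (a - 1 / 2))) (hsum : Summable fun n : ℕ ↦ f (n + a)) :
    ∑' n : ℕ, f (n + a) ≤ ∫ x in Ioi (a - 1 / 2), f x := by
  refine hasSum_le (fun n ↦ ?_) hsum.hasSum (hasSum_integral_nat_add hint)
  have h := mul_midpoint_le_integral_of_convexOn (by linarith)
    (hf.subset (fun x hx ↦ le_trans (by simp) hx.1) (convex_Icc _ _))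
    (intervalIntegrable_nat_add hint n)
  convert! h using 1
  ring_nf

end Convex

section Tails

variable {s a : ℝ}

theorem convexOn_rpow_neg (hs : 0 ≤ s) : ConvexOn ℝ (Ioi 0) fun x : ℝ ↦ x ^ (-s) := by
  have hlog : ConvexOn ℝ (Ioi 0) fun x ↦ -s * Real.log x := by
    simpa [Pi.smul_def] using strictConcaveOn_log_Ioi.concaveOn.neg.smul hs
  refine ⟨convex_Ioi 0, fun x hx y hy a b ha hb hab ↦ ?_⟩
  have hxy := convex_Ioi 0 hx hy ha hb hab
  simp only [Real.rpow_def_of_pos hx, Real.rpow_def_of_pos hy, Real.rpow_def_of_pos hxy,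
    mul_comm _ (-s)]
  exact (Real.exp_le_exp.2 (hlog.2 hx hy ha hb hab)).trans
    (convexOn_exp.2 (mem_univ _) (mem_univ _) ha hb hab)

theorem hasDerivAt_log_mul_rpow {x : ℝ} (hx : 0 < x) (r : ℝ) :
    HasDerivAt (fun x ↦ Real.log x * x ^ r) ((1 + r * Real.log x) * x ^ (r - 1)) x := by
  convert! (Real.hasDerivAt_log hx.ne').mul (Real.hasDerivAt_rpow_const (.inl hx.ne')) using 1
  rw [Real.rpow_sub_one hx.ne']
  field_simp

theorem convexOn_log_mul_rpow_neg (hs : 0 < s) :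
    ConvexOn ℝ (Ici (Real.exp (1 / s + 1 / (s + 1)))) fun x : ℝ ↦ Real.log x * x ^ (-s) := by
  have hpos {x : ℝ} (hx : Real.exp (1 / s + 1 / (s + 1)) ≤ x) : 0 < x :=
    (Real.exp_pos _).trans_le hx
  refine convexOn_of_hasDerivWithinAt2_nonneg (convex_Ici _)
    (f' := fun x ↦ (1 + -s * Real.log x) * x ^ (-s - 1))
    (f'' := fun x ↦ s * (s + 1) * (Real.log x - (1 / s + 1 / (s + 1))) * x ^ (-s - 1 - 1))
    (fun x hx ↦ (hasDerivAt_log_mul_rpow (hpos hx) _).continuousAt.continuousWithinAt)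
    (fun x hx ↦ (hasDerivAt_log_mul_rpow (hpos (interior_subset hx)) _).hasDerivWithinAt)
    (fun x hx ↦ HasDerivAt.hasDerivWithinAt ?_) fun x hx ↦ ?_
  · have hx := hpos (interior_subset hx)
    have h := (Real.hasDerivAt_rpow_const (p := -s - 1) (.inl hx.ne')).add
      ((hasDerivAt_log_mul_rpow hx (-s - 1)).const_mul (-s))
    convert! h using 1
    · ext y
      simp only [Pi.add_apply]
      ring
    · field_simp
      ring
  · have hx := interior_subset hx
    have hlog := (Real.le_log_iff_exp_le (hpos hx)).2 hx
    have := hpos hx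
    have := sub_nonneg.2 hlog
    positivity

theorem hasDerivAt_neg_log_mul_rpow_one_sub {x : ℝ} (hs : s ≠ 1) (hx : 0 < x) :
    HasDerivAt (fun x ↦ -(((s - 1) * Real.log x + 1) * x ^ (1 - s) / (s - 1) ^ 2))
      (Real.log x * x ^ (-s)) x := by
  have h := (((((Real.hasDerivAt_log hx.ne').const_mul (s - 1)).add_const 1).mul
    (Real.hasDerivAt_rpow_const (p := 1 - s) (.inl hx.ne'))).div_const ((s - 1) ^ 2)).neg
  convert! h using 1
  have := sub_ne_zero.2 hs
  rw [show 1 - s - 1 = -s by ring, show 1 - s = -s + 1 by ring, Real.rpow_add_one hx.ne']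
  field_simp
  ring

theorem tendsto_log_mul_rpow_one_sub (hs : 1 < s) :
    Tendsto (fun x : ℝ ↦ -(((s - 1) * Real.log x + 1) * x ^ (1 - s) / (s - 1) ^ 2))
      atTop (𝓝 0) := by
  have hs' := sub_pos.2 hs
  have hpow := tendsto_rpow_neg_atTop hs'
  have hlog : Tendsto (fun x ↦ Real.log x * x ^ (-(s - 1))) atTop (𝓝 0) := by
    refine (isLittleO_log_rpow_atTop hs').tendsto_div_nhds_zero.congr' ?_
    filter_upwards [eventually_ge_atTop 0] with x hx
    rw [Real.rpow_neg hx, div_eq_mul_inv]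
  convert! (((hlog.const_mul (s - 1)).add hpow).div_const ((s - 1) ^ 2)).neg using 2 with x
  · rw [neg_sub]
    ring
  · simp

theorem integrableOn_Ioi_log_mul_rpow_neg (hs : 1 < s) (ha : 1 ≤ a) :
    IntegrableOn (fun x ↦ Real.log x * x ^ (-s)) (Ioi a) :=
  integrableOn_Ioi_deriv_of_nonneg'
    (fun x hx ↦ hasDerivAt_neg_log_mul_rpow_one_sub hs.ne' (by linarith [mem_Ici.1 hx]))
    (fun x hx ↦ by
      have hx : 1 < x := ha.trans_lt hx
      have := Real.log_pos hx
      positivity)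
    (tendsto_log_mul_rpow_one_sub hs)

theorem integral_Ioi_log_mul_rpow_neg (hs : 1 < s) (ha : 1 ≤ a) :
    ∫ x in Ioi a, Real.log x * x ^ (-s) =
      ((s - 1) * Real.log a + 1) * a ^ (1 - s) / (s - 1) ^ 2 := by
  rw [integral_Ioi_of_hasDerivAt_of_tendsto'
    (fun x hx ↦ hasDerivAt_neg_log_mul_rpow_one_sub hs.ne' (by linarith [mem_Ici.1 hx]))
    (integrableOn_Ioi_log_mul_rpow_neg hs ha) (tendsto_log_mul_rpow_one_sub hs)]
  ring

end Tails

section DirichletSums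

variable {s : ℝ} {N : ℕ}

theorem LSeries_term_ofReal (f : ℕ → ℝ) (hs : s ≠ 0) (n : ℕ) :
    LSeries.term (fun n ↦ (f n : ℂ)) s n = (f n * (n : ℝ) ^ (-s) : ℝ) := by
  rcases eq_or_ne n 0 with rfl | hn
  · simp [Real.zero_rpow (neg_ne_zero.2 hs)]
  · rw [LSeries.term_of_ne_zero hn, Real.rpow_neg n.cast_nonneg, ← div_eq_mul_inv,
      Complex.ofReal_div, Complex.ofReal_cpow n.cast_nonneg, Complex.ofReal_natCast]

theorem LSeriesSummable_ofReal_iff (f : ℕ → ℝ) (hs : s ≠ 0) :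
    LSeriesSummable (fun n ↦ (f n : ℂ)) s ↔ Summable fun n : ℕ ↦ f n * (n : ℝ) ^ (-s) := by
  rw [LSeriesSummable, funext (LSeries_term_ofReal f hs), Complex.summable_ofReal]

theorem LSeries_ofReal (f : ℕ → ℝ) (hs : s ≠ 0) :
    LSeries (fun n ↦ (f n : ℂ)) s = (∑' n : ℕ, f n * (n : ℝ) ^ (-s) : ℝ) := by
  rw [LSeries, funext (LSeries_term_ofReal f hs), Complex.ofReal_tsum]

theorem summable_vonMangoldt_mul_rpow_neg (hs : 1 < s) :
    Summable fun n : ℕ ↦ Λ n * (n : ℝ) ^ (-s) :=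
  (LSeriesSummable_ofReal_iff _ (by positivity)).1
    (ArithmeticFunction.LSeriesSummable_vonMangoldt (by simpa using hs))

theorem convolution_vonMangoldt_one_eq_ofReal_log :
    LSeries.convolution (fun n ↦ (Λ n : ℂ)) (fun _ ↦ ((1 : ℝ) : ℂ)) =
      fun n : ℕ ↦ (Real.log n : ℂ) := by
  simpa [Complex.natCast_log] using! ArithmeticFunction.convolution_vonMangoldt_const_one

theorem summable_log_mul_rpow_neg (hs : 1 < s) :
    Summable fun n : ℕ ↦ Real.log n * (n : ℝ) ^ (-s) := by
  have hs' : 1 < (s : ℂ).re := by simpa using hs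
  rw [← LSeriesSummable_ofReal_iff _ (by positivity), ← convolution_vonMangoldt_one_eq_ofReal_log]
  exact (ArithmeticFunction.LSeriesSummable_vonMangoldt hs').convolution
    (by simpa using! LSeriesSummable_one_iff.2 hs')

theorem tsum_vonMangoldt_mul_tsum_rpow_neg (hs : 1 < s) :
    (∑' n : ℕ, Λ n * (n : ℝ) ^ (-s)) * ∑' n : ℕ, (n : ℝ) ^ (-s) =
      ∑' n : ℕ, Real.log n * (n : ℝ) ^ (-s) := by
  have hs₀ : s ≠ 0 := by positivity
  have hs' : 1 < (s : ℂ).re := by simpa using hs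
  have h := LSeries_convolution' (ArithmeticFunction.LSeriesSummable_vonMangoldt hs')
    (g := fun _ ↦ ((1 : ℝ) : ℂ)) (by simpa using! LSeriesSummable_one_iff.2 hs')
  rw [convolution_vonMangoldt_one_eq_ofReal_log, LSeries_ofReal _ hs₀, LSeries_ofReal _ hs₀,
    LSeries_ofReal _ hs₀, ← Complex.ofReal_mul, Complex.ofReal_inj] at h
  simpa using h.symm

theorem hasSum_vonMangoldt_pow_succ_mul_rpow_neg (hs : 0 < s) (p : Nat.Primes) :
    HasSum (fun k : ℕ ↦ Λ (p ^ (k + 1)) * ((p ^ (k + 1) : ℕ) : ℝ) ^ (-s))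
      (Real.log (p : ℕ) / (((p : ℕ) : ℝ) ^ s - 1)) := by
  have hp : 1 < ((p : ℕ) : ℝ) := mod_cast p.2.one_lt
  have hps : 1 < ((p : ℕ) : ℝ) ^ s := Real.one_lt_rpow hp hs
  convert! (hasSum_geometric_of_lt_one (by positivity) (inv_lt_one_of_one_lt₀ hps)).mul_left
    (Real.log (p : ℕ) * (((p : ℕ) : ℝ) ^ s)⁻¹) using 1
  · ext k
    rw [ArithmeticFunction.vonMangoldt_apply_pow k.succ_ne_zero,
      ArithmeticFunction.vonMangoldt_apply_prime p.2, mul_assoc, ← pow_succ', Nat.cast_pow,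
      Real.rpow_neg (by positivity), inv_pow, Real.rpow_pow_comm (by positivity)]
  · have := sub_ne_zero.2 hps.ne'
    field_simp

theorem hasSum_log_div_rpow_sub_one (hs : 1 < s) :
    HasSum (fun p : Nat.Primes ↦ Real.log (p : ℕ) / (((p : ℕ) : ℝ) ^ s - 1))
      (∑' n : ℕ, Λ n * (n : ℝ) ^ (-s)) := by
  have hsupp : (Function.support fun n : ℕ ↦ Λ n * (n : ℝ) ^ (-s)) ⊆ {n | IsPrimePow n} :=
    fun n hn ↦ ArithmeticFunction.vonMangoldt_ne_zero_iff.1 (left_ne_zero_of_mul hn)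
  have h := (hasSum_subtype_iff_of_support_subset hsupp).2
    (summable_vonMangoldt_mul_rpow_neg hs).hasSum
  exact (Nat.Primes.prodNatEquiv.hasSum_iff.2 h).prod_fiberwise
    (hasSum_vonMangoldt_pow_succ_mul_rpow_neg (by positivity))

theorem tsum_log_div_rpow_sub_one_eq (hs : 1 < s) :
    ∑' p : Nat.Primes, Real.log (p : ℕ) / (((p : ℕ) : ℝ) ^ s - 1) =
      (∑' n : ℕ, Real.log n * (n : ℝ) ^ (-s)) / ∑' n : ℕ, (n : ℝ) ^ (-s) := by
  have hsum : Summable fun n : ℕ ↦ (n : ℝ) ^ (-s) := Real.summable_nat_rpow.2 (neg_lt_neg hs)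
  have hpos : 0 < ∑' n : ℕ, (n : ℝ) ^ (-s) := hsum.tsum_pos (fun n ↦ by positivity) 1 (by simp)
  rw [(hasSum_log_div_rpow_sub_one hs).tsum_eq, eq_div_iff hpos.ne',
    tsum_vonMangoldt_mul_tsum_rpow_neg hs]

theorem sum_range_add_le_tsum_rpow_neg (hs : 1 < s) (hN : 0 < N) :
    ∑ n ∈ range N, (n : ℝ) ^ (-s) + ((N : ℝ) ^ (1 - s) / (s - 1) + (N : ℝ) ^ (-s) / 2) ≤
      ∑' n : ℕ, (n : ℝ) ^ (-s) := by
  have hN : 0 < (N : ℝ) := mod_cast hN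
  have hsum : Summable fun n : ℕ ↦ (n : ℝ) ^ (-s) := Real.summable_nat_rpow.2 (neg_lt_neg hs)
  have htail := integral_Ioi_add_le_tsum_of_convexOn
    ((convexOn_rpow_neg (by positivity)).subset (Ici_subset_Ioi.2 hN) (convex_Ici _))
    (integrableOn_Ioi_rpow_of_lt (neg_lt_neg hs) hN)
    (by simpa using (summable_nat_add_iff N).2 hsum)
  rw [integral_Ioi_rpow_of_lt (neg_lt_neg hs) hN, neg_div, ← div_neg, neg_add_eq_sub, neg_sub]
    at htail
  rw [← hsum.sum_add_tsum_nat_add N]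
  push_cast
  gcongr

theorem tsum_log_mul_rpow_neg_le (hs : 1 < s)
    (hN : Real.exp (1 / s + 1 / (s + 1)) ≤ N - 1 / 2) :
    ∑' n : ℕ, Real.log n * (n : ℝ) ^ (-s) ≤
      ∑ n ∈ range N, Real.log n * (n : ℝ) ^ (-s) +
        ((s - 1) * Real.log (N - 1 / 2) + 1) * (N - 1 / 2 : ℝ) ^ (1 - s) / (s - 1) ^ 2 := by
  have hN₁ : 1 ≤ (N : ℝ) - 1 / 2 := (Real.one_le_exp (by positivity)).trans hN
  have hsum := summable_log_mul_rpow_neg hs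
  have htail := tsum_le_integral_Ioi_of_convexOn
    ((convexOn_log_mul_rpow_neg (by positivity)).subset (Ici_subset_Ici.2 hN) (convex_Ici _))
    (integrableOn_Ioi_log_mul_rpow_neg hs hN₁)
    (by simpa using (summable_nat_add_iff N).2 hsum)
  rw [integral_Ioi_log_mul_rpow_neg hs hN₁] at htail
  rw [← hsum.sum_add_tsum_nat_add N]
  push_cast
  gcongr

end DirichletSums

section RationalBounds

variable {x : ℚ} {j N : ℕ}

/-- A rational lower bound for `√x`, accurate to about `10 ^ (-10)`. -/
def sqrtLower (x : ℚ) : ℚ := Nat.sqrt ⌊x * 10 ^ 20⌋₊ / 10 ^ 10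

/-- A rational upper bound for `√x`, accurate to about `10 ^ (-10)`. -/
def sqrtUpper (x : ℚ) : ℚ := (Nat.sqrt ⌊x * 10 ^ 20⌋₊ + 1) / 10 ^ 10

/-- The `z` with `x = 2 ^ k * ((1 + z) / (1 - z))`, where `2 ^ k` is the largest power of `2` not
exceeding `x ≥ 1`; it lies in `[0, 1 / 3)`, so that the power series of `artanh z` converges
quickly. -/
def logArg (x : ℚ) : ℚ := (x - 2 ^ Nat.log2 ⌊x⌋₊) / (x + 2 ^ Nat.log2 ⌊x⌋₊)

/-- A partial sum of the power series of `artanh z = log ((1 + z) / (1 - z)) / 2`. -/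
def artanhSum (z : ℚ) : ℚ := ∑ i ∈ range 8, z ^ (2 * i + 1) / (2 * i + 1)

/-- A rational lower bound for `log x`, from the expansion in `logArg x` and a nine-digit value of
`log 2`. -/
def logLower (x : ℚ) : ℚ :=
  Nat.log2 ⌊x⌋₊ * (6931471803 / 10 ^ 10) + 2 * artanhSum (logArg x)

/-- A rational upper bound for `log x`; the last summand bounds the remainder of the power
series. -/
def logUpper (x : ℚ) : ℚ :=
  Nat.log2 ⌊x⌋₊ * (6931471808 / 10 ^ 10) +
    2 * (artanhSum (logArg x) + logArg x ^ 17 / (1 - logArg x ^ 2))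

/-- A rational lower bound for `x ^ (-(j + 1 / 2))`. -/
def rpowLower (j : ℕ) (x : ℚ) : ℚ := 1 / (x ^ j * sqrtUpper x)

/-- A rational upper bound for `x ^ (-(j + 1 / 2))`. -/
def rpowUpper (j : ℕ) (x : ℚ) : ℚ := 1 / (x ^ j * sqrtLower x)

/-- A rational lower bound for `ζ(j + 1 / 2)`, from the first `N` terms and the trapezoid rule. For
`j ≠ 0` the term at `n = 0` is `1 / 0 = 0`. -/
def zetaLower (j N : ℕ) : ℚ :=
  ∑ n ∈ range N, rpowLower j n + rpowLower j N * (N / (j - 1 / 2) + 1 / 2)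

/-- A rational upper bound for `-ζ'(j + 1 / 2) = ∑ log n * n ^ (-(j + 1 / 2))`, from the first `N`
terms and the midpoint rule. For `j ≠ 0` the term at `n = 0` is `0` because `1 / 0 = 0`. -/
def negDerivZetaUpper (j N : ℕ) : ℚ :=
  ∑ n ∈ range N, logUpper n * rpowUpper j n +
    ((j - 1 / 2) * logUpper (N - 1 / 2) + 1) * ((N - 1 / 2) * rpowUpper j (N - 1 / 2)) /
      (j - 1 / 2) ^ 2

/-- A rational lower bound for the excess
`log x * (1 / (x ^ (3 / 2) - 1) + 1 / (x ^ (5 / 2) - 1) - 1 / (√x * (x - 1)))`. -/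
def gapLower (x : ℚ) : ℚ :=
  logLower x * (1 / (x ^ 1 * sqrtUpper x - 1) + 1 / (x ^ 2 * sqrtUpper x - 1) -
    1 / (sqrtLower x * (x - 1)))

theorem natSqrt_floor_le_sqrt {y : ℝ} (hy : 0 ≤ y) : Nat.sqrt ⌊y⌋₊ ≤ √y :=
  Real.nat_sqrt_le_real_sqrt.trans (Real.sqrt_le_sqrt (Nat.floor_le hy))

theorem sqrt_le_natSqrt_floor_add_one (y : ℝ) : √y ≤ Nat.sqrt ⌊y⌋₊ + 1 := by
  rw [Real.sqrt_le_left (by positivity)]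
  exact (Nat.lt_floor_add_one y).le.trans (mod_cast Nat.lt_succ_sqrt' ⌊y⌋₊)

theorem sqrt_mul_ten_pow_twenty {y : ℝ} (hy : 0 ≤ y) : √(y * 10 ^ 20) = √y * 10 ^ 10 := by
  rw [Real.sqrt_mul hy, show (10 : ℝ) ^ 20 = (10 ^ 10) ^ 2 by norm_num,
    Real.sqrt_sq (by positivity)]

theorem natFloor_cast_mul_ten_pow_twenty (x : ℚ) :
    ⌊(x : ℝ) * 10 ^ 20⌋₊ = ⌊x * 10 ^ 20⌋₊ := by
  rw [← Int.floor_toNat, ← Int.floor_toNat, ← Rat.floor_cast (α := ℝ)]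
  push_cast
  rfl

theorem sqrtLower_le (hx : 0 ≤ x) : (sqrtLower x : ℝ) ≤ √x := by
  have hx' : (0 : ℝ) ≤ x := mod_cast hx
  have h := natSqrt_floor_le_sqrt (y := x * 10 ^ 20) (by positivity)
  rw [sqrt_mul_ten_pow_twenty hx', natFloor_cast_mul_ten_pow_twenty] at h
  simpa [sqrtLower] using div_le_of_le_mul₀ (by positivity) (by positivity) h

theorem le_sqrtUpper (hx : 0 ≤ x) : √x ≤ sqrtUpper x := by
  have h := sqrt_le_natSqrt_floor_add_one (x * 10 ^ 20)
  rw [sqrt_mul_ten_pow_twenty (mod_cast hx), natFloor_cast_mul_ten_pow_twenty] at h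
  simpa [sqrtUpper] using (le_div_iff₀ (by positivity)).2 h

theorem sqrtLower_pos (hx : 1 ≤ x) : 0 < sqrtLower x := by
  have : 0 < Nat.sqrt ⌊x * 10 ^ 20⌋₊ := Nat.sqrt_pos.2 (Nat.floor_pos.2 (by linarith))
  rw [sqrtLower]
  positivity

theorem sqrtUpper_pos (x : ℚ) : 0 < sqrtUpper x := by
  rw [sqrtUpper]
  positivity

theorem logArg_mem_Ico (hx : 1 ≤ x) : logArg x ∈ Set.Ico 0 1 := by
  have hpow : (2 : ℚ) ^ Nat.log2 ⌊x⌋₊ ≤ x :=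
    le_trans (mod_cast Nat.log2_self_le (Nat.floor_pos.2 hx).ne') (Nat.floor_le (by linarith))
  have hpos : (0 : ℚ) < 2 ^ Nat.log2 ⌊x⌋₊ := by positivity
  exact ⟨div_nonneg (by linarith) (by linarith), (div_lt_one (by linarith)).2 (by linarith)⟩

theorem log_eq_log2_mul_add (hx : 0 < x) :
    Real.log x = Nat.log2 ⌊x⌋₊ * Real.log 2 +
      2 * (1 / 2 * Real.log ((1 + (logArg x : ℝ)) / (1 - (logArg x : ℝ)))) := by
  have hx' : (0 : ℝ) < x := mod_cast hx
  have hfactor : (1 + (logArg x : ℝ)) / (1 - (logArg x : ℝ)) = x / 2 ^ Nat.log2 ⌊x⌋₊ := by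
    have : (x : ℝ) + 2 ^ Nat.log2 ⌊x⌋₊ ≠ 0 := by positivity
    rw [logArg]
    push_cast
    rw [one_add_div this, one_sub_div this, div_div_div_cancel_right₀ this,
      show (x : ℝ) + 2 ^ Nat.log2 ⌊x⌋₊ + (x - 2 ^ Nat.log2 ⌊x⌋₊) = 2 * x by ring,
      show (x : ℝ) + 2 ^ Nat.log2 ⌊x⌋₊ - (x - 2 ^ Nat.log2 ⌊x⌋₊) = 2 * 2 ^ Nat.log2 ⌊x⌋₊ by ring,
      mul_div_mul_left _ _ two_ne_zero]
  rw [hfactor, Real.log_div hx'.ne' (by positivity), Real.log_pow]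
  ring

theorem cast_artanhSum (z : ℚ) :
    (artanhSum z : ℝ) = ∑ i ∈ range 8, (z : ℝ) ^ (2 * i + 1) / (2 * i + 1) := by
  simp [artanhSum]

theorem logLower_le (hx : 1 ≤ x) : (logLower x : ℝ) ≤ Real.log x := by
  obtain ⟨h₀, h₁⟩ := logArg_mem_Ico hx
  rw [log_eq_log2_mul_add (by linarith), logLower]
  push_cast
  rw [cast_artanhSum]
  gcongr
  · linarith [Real.log_two_gt_d9]
  · exact Real.sum_range_le_log_div (mod_cast h₀) (mod_cast h₁) 8

theorem le_logUpper (hx : 1 ≤ x) : Real.log x ≤ logUpper x := by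
  obtain ⟨h₀, h₁⟩ := logArg_mem_Ico hx
  rw [log_eq_log2_mul_add (by linarith), logUpper]
  push_cast
  rw [cast_artanhSum]
  gcongr
  · linarith [Real.log_two_lt_d9]
  · exact Real.log_div_le_sum_range_add (mod_cast h₀) (mod_cast h₁) 8

theorem logLower_nonneg (hx : 1 ≤ x) : 0 ≤ logLower x := by
  have := (logArg_mem_Ico hx).1
  rw [logLower, artanhSum]
  positivity

theorem rpow_natCast_add_half (j : ℕ) {y : ℝ} (hy : 0 < y) :
    y ^ ((j : ℝ) + 1 / 2) = y ^ j * √y := by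
  rw [Real.rpow_add hy, Real.rpow_natCast, Real.sqrt_eq_rpow]

theorem rpow_neg_natCast_add_half (j : ℕ) {y : ℝ} (hy : 0 < y) :
    y ^ (-((j : ℝ) + 1 / 2)) = 1 / (y ^ j * √y) := by
  rw [Real.rpow_neg hy.le, rpow_natCast_add_half j hy, one_div]

theorem rpowLower_le (j : ℕ) (hx : 0 < x) :
    (rpowLower j x : ℝ) ≤ (x : ℝ) ^ (-((j : ℝ) + 1 / 2)) := by
  have hx' : (0 : ℝ) < x := mod_cast hx
  rw [rpow_neg_natCast_add_half j hx', rpowLower]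
  push_cast
  gcongr
  exact le_sqrtUpper hx.le

theorem le_rpowUpper (j : ℕ) (hx : 1 ≤ x) : (x : ℝ) ^ (-((j : ℝ) + 1 / 2)) ≤ rpowUpper j x := by
  have hx' : (0 : ℝ) < x := mod_cast one_pos.trans_le hx
  have : (0 : ℝ) < sqrtLower x := mod_cast sqrtLower_pos hx
  rw [rpow_neg_natCast_add_half j hx', rpowUpper]
  push_cast
  gcongr
  exact sqrtLower_le (by linarith)

theorem rpowLower_nonneg (j : ℕ) (hx : 0 ≤ x) : 0 ≤ rpowLower j x := by
  have := sqrtUpper_pos x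
  rw [rpowLower]
  positivity

theorem zetaLower_pos (hj : 1 ≤ j) (hN : 0 < N) : 0 < zetaLower j N := by
  have hj' : 0 < (j : ℚ) - 1 / 2 := by
    have : (1 : ℚ) ≤ j := mod_cast hj
    linarith
  have := sqrtUpper_pos N
  have htail : 0 < rpowLower j N := by
    rw [rpowLower]
    positivity
  exact add_pos_of_nonneg_of_pos (sum_nonneg fun n _ ↦ rpowLower_nonneg j n.cast_nonneg)
    (by positivity)

theorem zetaLower_le_tsum (hj : 1 ≤ j) (hN : 0 < N) :
    (zetaLower j N : ℝ) ≤ ∑' n : ℕ, (n : ℝ) ^ (-((j : ℝ) + 1 / 2)) := by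
  have hj' : (1 : ℝ) ≤ j := mod_cast hj
  have hN' : (0 : ℝ) < N := mod_cast hN
  have hterm (n : ℕ) : (rpowLower j n : ℝ) ≤ (n : ℝ) ^ (-((j : ℝ) + 1 / 2)) := by
    rcases n.eq_zero_or_pos with rfl | hn
    · simp [rpowLower, zero_pow (Nat.one_le_iff_ne_zero.1 hj), Real.rpow_nonneg]
    · exact_mod_cast rpowLower_le j (x := n) (mod_cast hn)
  have htail : (rpowLower j N : ℝ) * (N / (j - 1 / 2) + 1 / 2) ≤
      (N : ℝ) ^ (1 - ((j : ℝ) + 1 / 2)) / ((j : ℝ) + 1 / 2 - 1) +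
        (N : ℝ) ^ (-((j : ℝ) + 1 / 2)) / 2 := by
    have : 0 < (j : ℝ) - 1 / 2 := by linarith
    refine (mul_le_mul_of_nonneg_right (hterm N) (by positivity)).trans_eq ?_
    rw [show 1 - ((j : ℝ) + 1 / 2) = -((j : ℝ) + 1 / 2) + 1 by ring, Real.rpow_add_one hN'.ne']
    ring
  refine le_trans ?_ (sum_range_add_le_tsum_rpow_neg (by linarith) hN)
  rw [zetaLower]
  push_cast
  exact add_le_add (sum_le_sum fun n _ ↦ hterm n) htail

theorem exp_one_div_add_one_div_le {s : ℝ} (hs : 1 ≤ s) :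
    Real.exp (1 / s + 1 / (s + 1)) ≤ 15 / 2 := by
  have hexp : 1 / s + 1 / (s + 1) ≤ 2 := by
    have h₁ : 1 / s ≤ 1 := (div_le_one (by positivity)).2 hs
    have h₂ : 1 / (s + 1) ≤ 1 := (div_le_one (by positivity)).2 (by linarith)
    linarith
  calc Real.exp (1 / s + 1 / (s + 1)) ≤ Real.exp 2 := Real.exp_le_exp.2 hexp
    _ = Real.exp 1 ^ 2 := by rw [← Real.exp_nat_mul]; norm_num
    _ ≤ 2.7182818286 ^ 2 := by gcongr; exact Real.exp_one_lt_d9.le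
    _ ≤ 15 / 2 := by norm_num

theorem tsum_log_mul_rpow_neg_le_negDerivZetaUpper (hj : 1 ≤ j) (hN : 8 ≤ N) :
    ∑' n : ℕ, Real.log n * (n : ℝ) ^ (-((j : ℝ) + 1 / 2)) ≤ negDerivZetaUpper j N := by
  have hj' : (1 : ℝ) ≤ j := mod_cast hj
  have hj₀ : 0 < (j : ℝ) - 1 / 2 := by linarith
  have hN' : (8 : ℝ) ≤ N := mod_cast hN
  have hterm (n : ℕ) : Real.log n * (n : ℝ) ^ (-((j : ℝ) + 1 / 2)) ≤
      logUpper n * rpowUpper j n := by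
    rcases n.eq_zero_or_pos with rfl | hn
    · simp [rpowUpper, zero_pow (Nat.one_le_iff_ne_zero.1 hj)]
    · have hn' : (1 : ℚ) ≤ n := mod_cast hn
      have hlog := le_logUpper hn'
      have hpow := le_rpowUpper j hn'
      have := (Real.log_natCast_nonneg n).trans (mod_cast hlog)
      push_cast at hlog hpow
      gcongr
  have ha : (1 : ℚ) ≤ N - 1 / 2 := by
    have : (8 : ℚ) ≤ N := mod_cast hN
    linarith
  have ha₁ : 1 ≤ (N : ℝ) - 1 / 2 := by linarith
  have hlog := le_logUpper ha
  have hpow := le_rpowUpper j ha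
  push_cast at hlog hpow
  have hlog₀ := (Real.log_nonneg ha₁).trans hlog
  refine (tsum_log_mul_rpow_neg_le (N := N) (by linarith)
    ((exp_one_div_add_one_div_le (by linarith)).trans (by linarith))).trans ?_
  rw [negDerivZetaUpper, show (j : ℝ) + 1 / 2 - 1 = j - 1 / 2 by ring,
    show 1 - ((j : ℝ) + 1 / 2) = 1 + -((j : ℝ) + 1 / 2) by ring,
    Real.rpow_one_add' (by linarith) (by linarith)]
  push_cast
  refine add_le_add (sum_le_sum fun n _ ↦ hterm n) ?_
  gcongr

end RationalBounds

section PrimeSum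

variable {j N : ℕ}

theorem summable_log_div_pow_mul_sqrt_sub_one (hj : 1 ≤ j) :
    Summable fun p : Nat.Primes ↦ Real.log (p : ℕ) / (((p : ℕ) : ℝ) ^ j * √(p : ℕ) - 1) := by
  have hj' : (1 : ℝ) ≤ j := mod_cast hj
  refine (hasSum_log_div_rpow_sub_one (s := j + 1 / 2) (by linarith)).summable.congr fun p ↦ ?_
  rw [rpow_natCast_add_half j (mod_cast p.2.pos)]

theorem tsum_log_div_pow_mul_sqrt_sub_one_le (hj : 1 ≤ j) (hN : 8 ≤ N) :
    ∑' p : Nat.Primes, Real.log (p : ℕ) / (((p : ℕ) : ℝ) ^ j * √(p : ℕ) - 1) ≤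
      (negDerivZetaUpper j N / zetaLower j N : ℚ) := by
  have hj' : (1 : ℝ) ≤ j := mod_cast hj
  have hterm (p : Nat.Primes) := rpow_natCast_add_half j (y := (p : ℕ)) (mod_cast p.2.pos)
  simp only [← hterm]
  rw [tsum_log_div_rpow_sub_one_eq (by linarith), Rat.cast_div]
  have hpos : (0 : ℝ) < zetaLower j N := mod_cast zetaLower_pos hj (by omega)
  have hlog := tsum_log_mul_rpow_neg_le_negDerivZetaUpper hj hN
  have hlog₀ : 0 ≤ ∑' n : ℕ, Real.log n * (n : ℝ) ^ (-((j : ℝ) + 1 / 2)) :=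
    tsum_nonneg fun n ↦ mul_nonneg (Real.log_natCast_nonneg n) (by positivity)
  exact div_le_div₀ (hlog₀.trans hlog) hlog hpos (zetaLower_le_tsum hj (by omega))

theorem one_div_sqrt_mul_sub_one_le {x : ℝ} (hx : 1 < x) :
    1 / (√x * (x - 1)) ≤ 1 / (x ^ 1 * √x - 1) + 1 / (x ^ 2 * √x - 1) := by
  obtain ⟨y, hy, rfl⟩ : ∃ y, 1 < y ∧ y ^ 2 = x :=
    ⟨√x, Real.lt_sqrt_of_sq_lt (by simpa using hx), Real.sq_sqrt (by linarith)⟩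
  rw [Real.sqrt_sq (by linarith)]
  have h₃ : 0 < (y ^ 2) ^ 1 * y - 1 := by nlinarith
  have h₅ : 0 < (y ^ 2) ^ 2 * y - 1 := by nlinarith
  have h₂ : 0 < y * (y ^ 2 - 1) := by nlinarith
  have hgap : 1 / ((y ^ 2) ^ 1 * y - 1) + 1 / ((y ^ 2) ^ 2 * y - 1) - 1 / (y * (y ^ 2 - 1)) =
      (y - 1) ^ 2 * (y ^ 3 + y ^ 2 - 1) /
        (((y ^ 2) ^ 1 * y - 1) * ((y ^ 2) ^ 2 * y - 1) * (y * (y ^ 2 - 1))) := by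
    rw [div_add_div _ _ h₃.ne' h₅.ne', div_sub_div _ _ (by positivity) h₂.ne']
    congr 1
    ring
  have : 0 ≤ y ^ 3 + y ^ 2 - 1 := by nlinarith
  rw [← sub_nonneg, hgap]
  positivity

theorem log_div_sqrt_mul_sub_one_le {x : ℝ} (hx : 1 < x) :
    Real.log x / (√x * (x - 1)) ≤
      Real.log x / (x ^ 1 * √x - 1) + Real.log x / (x ^ 2 * √x - 1) := by
  have h := mul_le_mul_of_nonneg_left (one_div_sqrt_mul_sub_one_le hx) (Real.log_pos hx).le
  simpa only [mul_add, mul_one_div] using h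

theorem gapLower_le {x : ℚ} (hx : 1 < x) :
    (gapLower x : ℝ) ≤ Real.log x / ((x : ℝ) ^ 1 * √x - 1) + Real.log x / ((x : ℝ) ^ 2 * √x - 1) -
      Real.log x / (√x * (x - 1)) := by
  have hx₁ : (1 : ℝ) < x := mod_cast hx
  have hsqrt : 1 < √(x : ℝ) := Real.lt_sqrt_of_sq_lt (by simpa using hx₁)
  have hlower : (0 : ℝ) < sqrtLower x := mod_cast sqrtLower_pos hx.le
  have hlog : (0 : ℝ) ≤ logLower x := mod_cast logLower_nonneg hx.le
  have h₁ : 0 < (x : ℝ) ^ 1 * √x - 1 := by nlinarith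
  have h₂ : 0 < (x : ℝ) ^ 2 * √x - 1 := by nlinarith
  have : 0 < (x : ℝ) - 1 := by linarith
  have hsqrt_le := le_sqrtUpper (x := x) (by linarith)
  have hle_sqrt := sqrtLower_le (x := x) (by linarith)
  calc (gapLower x : ℝ)
      = logLower x * (1 / ((x : ℝ) ^ 1 * sqrtUpper x - 1) + 1 / ((x : ℝ) ^ 2 * sqrtUpper x - 1) -
          1 / (sqrtLower x * (x - 1))) := by simp [gapLower]
    _ ≤ logLower x * (1 / ((x : ℝ) ^ 1 * √x - 1) + 1 / ((x : ℝ) ^ 2 * √x - 1) -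
          1 / (√x * (x - 1))) := by gcongr
    _ ≤ Real.log x * (1 / ((x : ℝ) ^ 1 * √x - 1) + 1 / ((x : ℝ) ^ 2 * √x - 1) -
          1 / (√x * (x - 1))) :=
        mul_le_mul_of_nonneg_right (logLower_le hx.le)
          (sub_nonneg.2 (one_div_sqrt_mul_sub_one_le hx₁))
    _ = _ := by ring

theorem negDerivZetaUpper_div_add_sub_sum_gapLower_lt :
    negDerivZetaUpper 1 51 / zetaLower 1 51 + negDerivZetaUpper 2 51 / zetaLower 2 51 -
      ∑ p ∈ range 170 with p.Prime, gapLower p < 17215 / 10 ^ 4 := by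
  decide +kernel

theorem tsum_le_tsum_sub_sum {ι α : Type*} [AddCommGroup α] [PartialOrder α] [IsOrderedAddMonoid α]
    [TopologicalSpace α] [IsTopologicalAddGroup α] [OrderClosedTopology α] {f g : ι → α}
    (hf : Summable f) (hg : Summable g) (hfg : ∀ i, f i ≤ g i) (t : Finset ι) :
    ∑' i, f i ≤ ∑' i, g i - ∑ i ∈ t, (g i - f i) := by
  rw [le_sub_comm, ← hg.tsum_sub hf]
  exact (hg.sub hf).sum_le_tsum t fun i _ ↦ sub_nonneg.2 (hfg i)

end PrimeSum

/-- The sum over all primes `p` of `(log p)/(√p (p−1))` converges and is `< 1.7215`. -/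
theorem sum_log_div_sqrt_mul_sub_one_lt :
    Summable (fun p : Nat.Primes =>
      Real.log (p : ℕ) / (Real.sqrt (p : ℕ) * (((p : ℕ) : ℝ) - 1))) ∧
    ∑' p : Nat.Primes, Real.log (p : ℕ) / (Real.sqrt (p : ℕ) * (((p : ℕ) : ℝ) - 1)) <
      1.7215 := by
  have hp (p : Nat.Primes) : 1 < ((p : ℕ) : ℝ) := mod_cast p.2.one_lt
  have hle (p : Nat.Primes) := log_div_sqrt_mul_sub_one_le (hp p)
  have h₁ := summable_log_div_pow_mul_sqrt_sub_one le_rfl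
  have h₂ := summable_log_div_pow_mul_sqrt_sub_one one_le_two
  have hsum := (h₁.add h₂).of_nonneg_of_le (fun p ↦ div_nonneg (Real.log_nonneg (hp p).le)
    (mul_nonneg (Real.sqrt_nonneg _) (sub_nonneg.2 (hp p).le))) hle
  have hgap : ∑ p ∈ range 170 with p.Prime, (gapLower p : ℝ) ≤ _ :=
    (sum_subtype_eq_sum_filter fun n : ℕ ↦ (gapLower n : ℝ)).symm.trans_le
      (sum_le_sum fun p _ ↦ by
        simpa only [Rat.cast_natCast] using! gapLower_le (x := (p : ℕ)) (mod_cast p.2.one_lt))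
  refine ⟨hsum, ?_⟩
  calc _ ≤ _ := tsum_le_tsum_sub_sum hsum (h₁.add h₂) hle ((range 170).subtype Nat.Prime)
    _ ≤ ((negDerivZetaUpper 1 51 / zetaLower 1 51 + negDerivZetaUpper 2 51 / zetaLower 2 51 -
          ∑ p ∈ range 170 with p.Prime, gapLower p : ℚ) : ℝ) := by
        rw [h₁.tsum_add h₂, Rat.cast_sub, Rat.cast_add, Rat.cast_sum]
        exact sub_le_sub (add_le_add (tsum_log_div_pow_mul_sqrt_sub_one_le le_rfl (by norm_num))
          (tsum_log_div_pow_mul_sqrt_sub_one_le one_le_two (by norm_num))) hgap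
    _ < 1.7215 :=
        (Rat.cast_lt.2 negDerivZetaUpper_div_add_sub_sum_gapLower_lt).trans_eq (by norm_num)
end
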